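/- arXiv:2404.04613 — 3 statements merged into one kernel-verified Lean document; each statement's English description precedes it below -/
import Mathlib

section
/- Let P be a convex n-gon in ℝ² and let k be a natural number with n < k < 4n - 2. Then there exists a guard set G ⊆ P with exactly k + 1 guards that k-covers P. -/
/-!
It suffices to place `4 * n - 2` guards in `P` such that every point of `P` is hidden from at most
one of them. Any `k + 1` of these guards inherit this property, because deleting guards deletes
blockers, and hence every point of `P` is visible from at least `k` of the `k + 1` guards.

The guards are placed near `2 * n` *bases*: the `n` vertices and the midpoints of the `n` edges.
Choose a linear functional `x` that is injective on the bases, and for each base a functional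
attaining its minimum over `P` there; the *height* of a point over the base is the amount by which
it exceeds this minimum. Each base carries a lower and an upper guard, both on the segment from the
base to a target in `P` of positive height over every base: a vertex has them at parameters
`δ < ε`, an edge midpoint at `0` and `η`, where `η ≪ δ ≪ ε ≪ 1`. The target can be taken to have
the same `x` as the base, so that the two guards are vertically aligned, unless the base is the
leftmost or the rightmost vertex. At those two vertices only the lower guard is kept, which leaves
`4 * n - 2` guards.

Call the set of points of `P` hidden from a guard `g` by a guard `b` the shadow of `b` from `g`.
Over its own base, `b` is far lower than any guard of another base (`Frame.Scales.h_ratio`), so its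
shadow is short and stays in a narrow strip around the base (`Frame.Scales.strip`). Strips of
different bases are disjoint, so two shadows that meet have blockers over one base.

* If the blockers coincide, then they and the two sources are collinear, which puts a guard in the
  shadow of another one; the strips exclude this (`Frame.Scales.same_blocker`).
* If they are the lower and the upper guard of one base, heights settle the matter
  (`Frame.Scales.same_base`). The lower guard of an edge lies on the boundary of `P`, hence casts no
  shadow from other bases. At a vertex, the shadow of the lower guard stays within distance `O(δ)`
  of the vertex, whereas the shadow of the upper guard starts at a height of order `ε` and,
  from a source of another base, has bounded slope, so it never enters that neighbourhood
  (`Frame.Scales.fan_estimate`).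
-/

open Set

noncomputable section

/-- The Euclidean plane ℝ². -/
abbrev Plane : Type := EuclideanSpace ℝ (Fin 2)

/-- `P` is a convex `n`-gon with vertex set `V`: `V` is a finite set of exactly `n ≥ 3`
points, `P` is its convex hull, and each point of `V` is an extreme point of `P`. -/
def IsConvexPolygon (n : ℕ) (V : Finset Plane) (P : Set Plane) : Prop :=
  3 ≤ n ∧ V.card = n ∧ P = convexHull ℝ (V : Set Plane) ∧
    ∀ v ∈ V, v ∈ Set.extremePoints ℝ P

/-- Point `p` is hidden from guard `g` (w.r.t. guard set `G`): some other guard `b ∈ G`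
lies strictly between `g` and `p`. -/
def Hidden (G : Finset Plane) (g p : Plane) : Prop :=
  ∃ b ∈ G, b ≠ g ∧ b ∈ openSegment ℝ g p

/-- `G` `k`-covers `P`: every point of `P` is visible from at least `k` guards of `G`. -/
def KCovers (G : Finset Plane) (P : Set Plane) (k : ℕ) : Prop :=
  ∀ p ∈ P, k ≤ {g ∈ (G : Set Plane) | ¬ Hidden G g p}.ncard

/-- `W` is a wedge: a closed planar convex cone with apex `a` spanned by two
linearly independent directions `u`, `v`. -/
def IsWedge (W : Set Plane) : Prop :=
  ∃ a u v : Plane, LinearIndependent ℝ ![u, v] ∧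
    W = {x | ∃ s t : ℝ, 0 ≤ s ∧ 0 ≤ t ∧ x = a + s • u + t • v}

/-! ### Bases, heights and scales -/

/-- The bases of a polygon `P` with their supporting data. Elements of `I` index vertices and
elements of `J` index edges.
* `o k` is the base: the vertex itself, or the midpoint of the edge.
* `φ k` attains its minimum over `P` at `o k`. For a vertex no other base attains the minimum; for
  an edge no other midpoint does, but the two endpoints of the edge do.
* `x` takes different values at different bases. Lines on which it is constant are thought of as
  vertical.
* `y k` is the target towards which the guards of `k` are moved into `P`. It lies on the vertical
  line through `o k`, except for the two vertices `L` and `R`. -/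
structure Frame (I J : Type) (P : Set Plane) where
  x : Plane →ₗ[ℝ] ℝ
  o : I ⊕ J → Plane
  y : I ⊕ J → Plane
  φ : I ⊕ J → Plane →ₗ[ℝ] ℝ
  L : I
  R : I
  convex : Convex ℝ P
  o_mem : ∀ k, o k ∈ P
  y_mem : ∀ k, y k ∈ P
  φ_le : ∀ k, ∀ p ∈ P, φ k (o k) ≤ φ k p
  φ_y : ∀ k k', φ k (o k) < φ k (y k')
  φ_inl : ∀ i k, k ≠ .inl i → φ (.inl i) (o (.inl i)) < φ (.inl i) (o k)
  φ_inr : ∀ j j', j' ≠ j → φ (.inr j) (o (.inr j)) < φ (.inr j) (o (.inr j'))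
  x_inj : ∀ k k', k ≠ k' → x (o k) ≠ x (o k')
  x_y : ∀ k, k ≠ .inl L → k ≠ .inl R → x (y k) = x (o k)

namespace Frame

variable {I J : Type} {P : Set Plane} (f : Frame I J P)

/-- The height of `p` over the base `k`; it is nonnegative on `P`. -/
def h (k : I ⊕ J) (p : Plane) : ℝ := f.φ k p - f.φ k (f.o k)

lemma h_combo (k : I ⊕ J) {a b : ℝ} (hab : a + b = 1) (p q : Plane) :
    f.h k (a • p + b • q) = a * f.h k p + b * f.h k q := by
  simp only [h, map_add, map_smul, smul_eq_mul]
  linear_combination (f.φ k (f.o k)) * hab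

lemma h_self (k : I ⊕ J) : f.h k (f.o k) = 0 := sub_self _

lemma x_combo (a b : ℝ) (p q : Plane) :
    f.x (a • p + b • q) = a * f.x p + b * f.x q := by simp

/-- The constants of the construction. `M` bounds all `x`-values and heights of bases and targets
from above, `c` bounds the gaps between `x`-values and the positive heights from below. The
parameters of the guards satisfy `η ≪ δ ≪ ε`, and `κ`, which is small compared to `c / M`, bounds
the ratio of the height of a guard over its own base to that of a guard of another base. -/
structure Scales where
  c : ℝ
  M : ℝ
  κ : ℝ
  ε : ℝ
  δ : ℝ
  η : ℝ
  c_pos : 0 < c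
  c_le : c ≤ 1
  M_ge : 1 ≤ M
  x_o : ∀ k, |f.x (f.o k)| ≤ M
  x_y : ∀ k, |f.x (f.y k)| ≤ M
  h_o_le : ∀ k k', f.h k (f.o k') ≤ M
  h_y_le : ∀ k k', f.h k (f.y k') ≤ M
  gap : ∀ k k', k ≠ k' → c ≤ |f.x (f.o k) - f.x (f.o k')|
  le_h_y : ∀ k k', c ≤ f.h k (f.y k')
  le_h_inl : ∀ i k, k ≠ .inl i → c ≤ f.h (.inl i) (f.o k)
  le_h_inr : ∀ j j', j' ≠ j → c ≤ f.h (.inr j) (f.o (.inr j'))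
  κ_pos : 0 < κ
  κ_le : 32 * M * κ ≤ c
  ε_pos : 0 < ε
  ε_le : ε * M ≤ κ * c
  δ_pos : 0 < δ
  δ_lt : δ * (c ^ 2 + 8 * M ^ 2) < ε * c ^ 2
  η_pos : 0 < η
  η_le : η * M ≤ κ * (δ * c)

lemma exists_pos_le_of_finite {ι : Type*} [Finite ι] (p : ι → Prop) (F : ι → ℝ)
    (hF : ∀ i, p i → 0 < F i) : ∃ c > 0, ∀ i, p i → c ≤ F i := by
  obtain ⟨M, hM⟩ := Finite.exists_le (fun i => (F i)⁻¹)
  refine ⟨(max M 1)⁻¹, by positivity, fun i hi => ?_⟩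
  rw [inv_le_comm₀ (by positivity) (hF i hi)]
  exact (hM i).trans (le_max_left _ _)

/-- There are finitely many bases, so the bounds `M` and `c` exist; the remaining constants are then
given by explicit formulas. -/
lemma nonempty_scales [Finite I] [Finite J] : Nonempty f.Scales := by
  obtain ⟨M1, h1⟩ := Finite.exists_le (fun k => |f.x (f.o k)|)
  obtain ⟨M2, h2⟩ := Finite.exists_le (fun k => |f.x (f.y k)|)
  obtain ⟨M3, h3⟩ := Finite.exists_le (fun q : (I ⊕ J) × (I ⊕ J) => f.h q.1 (f.o q.2))
  obtain ⟨M4, h4⟩ := Finite.exists_le (fun q : (I ⊕ J) × (I ⊕ J) => f.h q.1 (f.y q.2))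
  obtain ⟨c1, p1, l1⟩ := exists_pos_le_of_finite
    (fun q : (I ⊕ J) × (I ⊕ J) => q.1 ≠ q.2) (fun q => |f.x (f.o q.1) - f.x (f.o q.2)|)
    (fun q hq => abs_pos.2 (sub_ne_zero.2 (f.x_inj _ _ hq)))
  obtain ⟨c2, p2, l2⟩ := exists_pos_le_of_finite
    (fun _ : (I ⊕ J) × (I ⊕ J) => True) (fun q => f.h q.1 (f.y q.2))
    (fun q _ => sub_pos.2 (f.φ_y _ _))
  obtain ⟨c3, p3, l3⟩ := exists_pos_le_of_finite
    (fun q : I × (I ⊕ J) => q.2 ≠ .inl q.1) (fun q => f.h (.inl q.1) (f.o q.2))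
    (fun q hq => sub_pos.2 (f.φ_inl _ _ hq))
  obtain ⟨c4, p4, l4⟩ := exists_pos_le_of_finite
    (fun q : J × J => q.2 ≠ q.1) (fun q => f.h (.inr q.1) (f.o (.inr q.2)))
    (fun q hq => sub_pos.2 (f.φ_inr _ _ hq))
  obtain ⟨M, hM⟩ := Finite.exists_le (fun i : Fin 5 => ![1, M1, M2, M3, M4] i)
  obtain ⟨c, hc, hcl⟩ := exists_pos_le_of_finite (fun _ : Fin 5 => True)
    (fun i => ![1, c1, c2, c3, c4] i) (by intro i _; fin_cases i <;> simp [p1, p2, p3, p4])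
  have m0 : 1 ≤ M := hM 0
  have m1 : M1 ≤ M := hM 1
  have m2 : M2 ≤ M := hM 2
  have m3 : M3 ≤ M := hM 3
  have m4 : M4 ≤ M := hM 4
  have n0 : c ≤ 1 := hcl 0 trivial
  have n1 : c ≤ c1 := hcl 1 trivial
  have n2 : c ≤ c2 := hcl 2 trivial
  have n3 : c ≤ c3 := hcl 3 trivial
  have n4 : c ≤ c4 := hcl 4 trivial
  have hM0 : 0 < M := by linarith
  let κ := c / (32 * M)
  have hκ : 0 < κ := by positivity
  let ε := κ * c / M
  have hε : 0 < ε := by positivity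
  let δ := ε * c ^ 2 / (2 * (c ^ 2 + 8 * M ^ 2))
  have hδ : 0 < δ := by positivity
  exact ⟨{
    c := c, M := M, κ := κ, ε := ε, δ := δ, η := κ * (δ * c) / M
    c_pos := hc, c_le := n0, M_ge := m0
    x_o := fun k => (h1 k).trans m1
    x_y := fun k => (h2 k).trans m2
    h_o_le := fun k k' => (h3 (k, k')).trans m3
    h_y_le := fun k k' => (h4 (k, k')).trans m4
    gap := fun k k' hk => n1.trans (l1 (k, k') hk)
    le_h_y := fun k k' => n2.trans (l2 (k, k') trivial)
    le_h_inl := fun i k hk => n3.trans (l3 (i, k) hk)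
    le_h_inr := fun i k hk => n4.trans (l4 (i, k) hk)
    κ_pos := hκ
    κ_le := by simp only [κ]; field_simp; rfl
    ε_pos := hε
    ε_le := by simp only [ε]; field_simp; rfl
    δ_pos := hδ
    δ_lt := by
      have : δ * (c ^ 2 + 8 * M ^ 2) = ε * c ^ 2 / 2 := by simp only [δ]; field_simp
      rw [this]
      have : 0 < ε * c ^ 2 := by positivity
      linarith
    η_pos := by positivity
    η_le := by field_simp; rfl }⟩

/-! ### Guards and their shadows -/

namespace Scales

lemma mul_abs_eq {a b u v : ℝ} (ha : 0 < a) (hb : 0 < b) (h : b * u = a * v ∨ b * u = -(a * v)) :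
    b * |u| = a * |v| := by
  have := abs_eq_abs.2 h
  rwa [abs_mul, abs_mul, abs_of_pos ha, abs_of_pos hb] at this

/-- The quantitative core of the case of two different blockers at one vertex. A point at horizontal
distance `X` from the vertex and of height `H` over it is hidden by the lower guard, of height
`δ * Y`, from a source of height `G` at horizontal distance `Xg`, and by the upper guard, of height
`ε * Y`, from a source of height `G'` at horizontal distance `Xg'`. The first shadow forces
`X = O(δ)`, and over so short a distance the second one, being of bounded slope, cannot drop from
`ε * Y` to `δ * Y`, which is an upper bound for `H`. -/
lemma fan_estimate {c M κ ε δ Y G G' H a b a' b' X Xg Xg' : ℝ} (hc : 0 < c) (hM : 0 < M)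
    (hδ : 0 < δ) (hδε : δ < ε) (hlt : δ * (c ^ 2 + 8 * M ^ 2) < ε * c ^ 2)
    (hε : ε * M ≤ κ * c) (hκ : κ ≤ 1 / 32) (hY : 0 < Y) (hYM : Y ≤ M) (hG : c ≤ G)
    (hG' : G' ≤ M) (hH : 0 ≤ H) (hHY : H ≤ δ * Y) (ha : 0 < a) (hb : 0 < b) (hab : a + b = 1)
    (ha' : 0 < a') (hab' : a' + b' = 1) (eh : a * G + b * H = δ * Y)
    (eh' : a' * G' + b' * H = ε * Y) (hX : 0 ≤ X) (hXg : Xg ≤ 2 * M) (hXg' : c / 2 ≤ Xg')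
    (hx : b * X = a * Xg) (hx' : a' * Xg' = b' * X) : False := by
  -- The first source is far above the lower guard, so its weight `a` is `O(δ)`, and so is `X`.
  have hac : a * c ≤ δ * Y := by
    have h1 := mul_le_mul_of_nonneg_left hG ha.le
    have h2 := mul_nonneg hb.le hH
    linarith
  have hahalf : a ≤ 1 / 2 := by
    have h1 : δ * Y ≤ ε * M := mul_le_mul hδε.le hYM hY.le (by linarith)
    have h2 : κ * c ≤ 1 / 32 * c := mul_le_mul_of_nonneg_right hκ hc.le
    have h3 : a * c ≤ 1 / 2 * c := by linarith
    exact le_of_mul_le_mul_right h3 hc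
  have hXa : X ≤ 4 * M * a := by
    have h1 := mul_le_mul_of_nonneg_left hXg ha.le
    have h2 : 1 / 2 * X ≤ b * X := mul_le_mul_of_nonneg_right (by linarith) hX
    linarith
  -- A small `X` also makes the weight `a'` of the second source small, of order `a`.
  have ha'1 : a' * (c / 2) ≤ 4 * M * a := by
    have h1 := mul_le_mul_of_nonneg_left hXg' ha'.le
    have h2 : b' * X ≤ 1 * X := mul_le_mul_of_nonneg_right (by linarith) hX
    linarith
  -- But `a'` must account for the difference in height between the upper guard and the point.
  have hfin : (ε - δ) * Y ≤ a' * M := by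
    have h1 := mul_le_mul_of_nonneg_left hG' ha'.le
    have h2 : b' * H ≤ 1 * H := mul_le_mul_of_nonneg_right (by linarith) hH
    linarith
  have h1 : (ε - δ) * Y * c ^ 2 ≤ 8 * M ^ 2 * (δ * Y) := by
    calc (ε - δ) * Y * c ^ 2 ≤ a' * M * c ^ 2 := by gcongr
      _ = 2 * M * c * (a' * (c / 2)) := by ring
      _ ≤ 2 * M * c * (4 * M * a) := by gcongr
      _ = 8 * M ^ 2 * (a * c) := by ring
      _ ≤ _ := by gcongr
  have h2 := mul_lt_mul_of_pos_right hlt hY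
  linarith

variable {f} (s : f.Scales)

/-- The parameter at which a guard is placed on the segment from its base to the target of that base.
The flag is `false` for the lower guard of a base and `true` for the upper one. The lower guard of
an edge is the midpoint itself. -/
def scale : (I ⊕ J) × Bool → ℝ
  | (.inl _, false) => s.δ
  | (.inl _, true) => s.ε
  | (.inr _, false) => 0
  | (.inr _, true) => s.η

/-- The position of the guard with index `t = (base, flag)`. -/
def guard (t : (I ⊕ J) × Bool) : Plane :=
  (1 - s.scale t) • f.o t.1 + s.scale t • f.y t.1

variable (f) in
/-- The indices of the guards in use: the upper guards of the vertices `L` and `R`, which have no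
target vertically above them, are left out. -/
def _root_.Frame.Valid (t : (I ⊕ J) × Bool) : Prop :=
  t.2 = true → t.1 ≠ .inl f.L ∧ t.1 ≠ .inl f.R

lemma M_pos : 0 < s.M := by linarith [s.M_ge]

lemma κ_le' : s.κ ≤ 1 / 32 := by
  nlinarith [s.κ_le, s.κ_pos, s.M_ge, s.c_le]

lemma ε_le' : 16 * s.M * s.ε ≤ s.c := by
  nlinarith [s.ε_le, s.κ_le', s.c_pos]

lemma ε_le_one : s.ε ≤ 1 := by
  nlinarith [s.ε_le', s.M_ge, s.c_le, s.ε_pos]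

lemma δ_lt_ε : s.δ < s.ε := by
  have := s.c_pos
  have h1 : s.δ * s.c ^ 2 < s.ε * s.c ^ 2 := by
    nlinarith [s.δ_lt, mul_pos s.δ_pos (pow_pos s.M_pos 2)]
  exact lt_of_mul_lt_mul_right h1 (by positivity)

lemma η_le_δ : s.η ≤ s.δ := by
  have h1 : s.η ≤ s.η * s.M := by nlinarith [s.η_pos, s.M_ge]
  have h2 : s.κ * (s.δ * s.c) ≤ 1 * (s.δ * 1) := by
    have := s.κ_le'
    have := s.c_le
    have := s.δ_pos
    have := s.c_pos
    gcongr
    linarith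
  linarith [s.η_le]

lemma scale_nonneg (t) : 0 ≤ s.scale t := by
  rcases t with ⟨i | j, _ | _⟩
  exacts [s.δ_pos.le, s.ε_pos.le, le_rfl, s.η_pos.le]

lemma scale_le (t) : s.scale t ≤ s.ε := by
  rcases t with ⟨i | j, _ | _⟩
  exacts [s.δ_lt_ε.le, le_rfl, s.ε_pos.le, s.η_le_δ.trans s.δ_lt_ε.le]

lemma scale_le_one (t) : s.scale t ≤ 1 := (s.scale_le t).trans s.ε_le_one

lemma guard_mem (t) : s.guard t ∈ P :=
  f.convex (f.o_mem _) (f.y_mem _) (by linarith [s.scale_le_one t]) (s.scale_nonneg t) (by ring)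

lemma h_guard (k t) :
    f.h k (s.guard t) = (1 - s.scale t) * f.h k (f.o t.1) + s.scale t * f.h k (f.y t.1) :=
  f.h_combo k (by ring) _ _

lemma h_guard_self (t) : f.h t.1 (s.guard t) = s.scale t * f.h t.1 (f.y t.1) := by
  rw [h_guard, h_self]; ring

lemma h_nonneg (k) {p} (hp : p ∈ P) : 0 ≤ f.h k p := sub_nonneg.2 (f.φ_le k p hp)

lemma x_guard (t) :
    f.x (s.guard t) = (1 - s.scale t) * f.x (f.o t.1) + s.scale t * f.x (f.y t.1) :=
  f.x_combo _ _ _ _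

lemma x_guard_abs (t) : |f.x (s.guard t)| ≤ s.M := by
  have h1 := abs_le.1 (s.x_o t.1)
  have h2 := abs_le.1 (s.x_y t.1)
  have h3 := s.scale_nonneg t
  have h4 := s.scale_le_one t
  rw [x_guard, abs_le]
  constructor <;> nlinarith

lemma x_guard_sub (t) : |f.x (s.guard t) - f.x (f.o t.1)| ≤ s.c / 8 := by
  have h1 := abs_le.1 (s.x_o t.1)
  have h2 := abs_le.1 (s.x_y t.1)
  have h3 := s.scale_nonneg t
  have h4 := s.scale_le t
  have h5 := s.ε_le'
  have h6 : s.M * s.scale t ≤ s.M * s.ε := by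
    have := s.M_pos
    gcongr
  rw [x_guard, abs_le]
  constructor <;> nlinarith

/-- If both guards of a base are in use, then both lie on the vertical line through the base. -/
lemma x_guard_of_true {k} (hv : f.Valid (k, true)) (β) : f.x (s.guard (k, β)) = f.x (f.o k) := by
  obtain ⟨h1, h2⟩ := hv rfl
  rw [x_guard]
  simp only
  rw [f.x_y k h1 h2]; ring

lemma x_guard_of_ne {t t' : (I ⊕ J) × Bool} (ht : f.Valid t) (ht' : f.Valid t') (hne : t ≠ t')
    (hk : t.1 = t'.1) :
    f.x (s.guard t) = f.x (f.o t.1) ∧ f.x (s.guard t') = f.x (f.o t.1) := by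
  obtain ⟨k, β⟩ := t
  obtain ⟨k', β'⟩ := t'
  obtain rfl : k = k' := hk
  have hv : f.Valid (k, true) := by
    cases β
    · cases β'
      · exact absurd rfl hne
      · exact ht'
    · exact ht
  exact ⟨s.x_guard_of_true hv _, s.x_guard_of_true hv _⟩

lemma h_guard_le (k t) : f.h k (s.guard t) ≤ s.M := by
  rw [h_guard]
  nlinarith [s.h_o_le k t.1, s.h_y_le k t.1, s.scale_nonneg t, s.scale_le_one t]

lemma le_h_guard_of {k t} (ho : s.c ≤ f.h k (f.o t.1)) : s.c ≤ f.h k (s.guard t) := by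
  rw [h_guard]
  nlinarith [s.le_h_y k t.1, s.scale_nonneg t, s.scale_le_one t]

lemma le_h_guard_inl {i t} (hne : t.1 ≠ .inl i) : s.c ≤ f.h (.inl i) (s.guard t) :=
  s.le_h_guard_of (s.le_h_inl _ _ hne)

/-- Midpoints of other edges have height at least `c` over an edge, but its endpoints have height
zero. The guards of the endpoints have been moved inwards by at least `δ`, whence the bound. -/
lemma le_h_guard_inr {j} {t : (I ⊕ J) × Bool} (hne : t.1 ≠ .inr j) :
    s.δ * s.c ≤ f.h (.inr j) (s.guard t) := by
  have hδ1 : s.δ ≤ 1 := s.δ_lt_ε.le.trans s.ε_le_one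
  rcases t with ⟨i | j', β⟩
  · rw [h_guard]
    have h1 : s.δ ≤ s.scale (.inl i, β) := by
      cases β
      exacts [le_rfl, s.δ_lt_ε.le]
    have h2 := h_nonneg (f := f) (.inr j) (f.o_mem (.inl i))
    have h3 := s.scale_le_one (.inl i, β)
    have h4 : s.δ * s.c ≤ s.scale (.inl i, β) * f.h (.inr j) (f.y (.inl i)) :=
      mul_le_mul h1 (s.le_h_y _ _) s.c_pos.le (s.scale_nonneg _)
    have h5 : 0 ≤ (1 - s.scale (.inl i, β)) * f.h (.inr j) (f.o (.inl i)) :=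
      mul_nonneg (by linarith) h2
    simpa using add_le_add h5 h4
  · have hj : j' ≠ j := fun e => hne (by rw [e])
    have := s.le_h_guard_of (k := .inr j) (t := (.inr j', β)) (s.le_h_inr _ _ hj)
    nlinarith [s.c_pos]

/-- Over its own base `t'.1`, a guard is lower by the factor `κ` than every guard of another base. This
is what the choice `η ≪ δ ≪ ε ≪ 1` is for. -/
lemma h_ratio {t t' : (I ⊕ J) × Bool} (hne : t.1 ≠ t'.1) :
    f.h t'.1 (s.guard t') ≤ s.κ * f.h t'.1 (s.guard t) ∧ 0 < f.h t'.1 (s.guard t) := by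
  rw [h_guard_self]
  have hκ := s.κ_pos
  rcases t' with ⟨i | j, β⟩
  · have h1 := s.le_h_guard_inl hne
    refine ⟨?_, s.c_pos.trans_le h1⟩
    calc s.scale (.inl i, β) * f.h (.inl i) (f.y (.inl i)) ≤ s.ε * s.M :=
          mul_le_mul (s.scale_le _) (s.h_y_le _ _) (h_nonneg _ (f.y_mem _)) s.ε_pos.le
      _ ≤ s.κ * s.c := s.ε_le
      _ ≤ _ := by gcongr
  · have h1 := s.le_h_guard_inr hne
    refine ⟨?_, (mul_pos s.δ_pos s.c_pos).trans_le h1⟩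
    have h2 : s.scale (.inr j, β) ≤ s.η := by
      cases β
      exacts [s.η_pos.le, le_rfl]
    calc s.scale (.inr j, β) * f.h (.inr j) (f.y (.inr j)) ≤ s.η * s.M :=
          mul_le_mul h2 (s.h_y_le _ _) (h_nonneg _ (f.y_mem _)) s.η_pos.le
      _ ≤ s.κ * (s.δ * s.c) := s.η_le
      _ ≤ _ := by gcongr

/-- The shadow of a guard stays in a vertical strip around its base, no wider than half the least
gap between bases. -/
lemma strip {t t' : (I ⊕ J) × Bool} (ht : f.Valid t) (ht' : f.Valid t') (hne : t ≠ t')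
    {p : Plane} (hp : p ∈ P) (hb : s.guard t' ∈ openSegment ℝ (s.guard t) p) :
    |f.x p - f.x (f.o t'.1)| ≤ s.c / 4 := by
  obtain ⟨a, b, ha, hb, hab, e⟩ := hb
  have ex := congrArg f.x e
  rw [x_combo] at ex
  -- Two guards of one base are vertically aligned, so the shadow is vertical. Otherwise, as `p` has
  -- nonnegative height, the weight `a` of the source is at most `κ`, so `p` is close to the blocker.
  by_cases hk : t.1 = t'.1
  · obtain ⟨h1, h2⟩ := s.x_guard_of_ne ht ht' hne hk
    rw [h1, h2, hk] at ex
    have : b * (f.x p - f.x (f.o t'.1)) = 0 := by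
      linear_combination ex - f.x (f.o t'.1) * hab
    rcases mul_eq_zero.1 this with h | h
    · linarith
    · rw [h, abs_zero]; linarith [s.c_pos]
  · obtain ⟨h1, h2⟩ := s.h_ratio hk
    have eh := congrArg (f.h t'.1) e
    rw [h_combo f _ hab] at eh
    have haκ : a ≤ s.κ := by
      refine le_of_mul_le_mul_right ?_ h2
      have := mul_nonneg hb.le (h_nonneg (f := f) t'.1 hp)
      linarith
    have hb2 : 1 / 2 ≤ b := by linarith [s.κ_le']
    have h3 := abs_le.1 (s.x_guard_abs t)
    have h4 := abs_le.1 (s.x_guard_abs t')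
    have h5 : b * |f.x p - f.x (s.guard t')| = a * |f.x (s.guard t') - f.x (s.guard t)| := by
      refine mul_abs_eq ha hb (.inl ?_)
      linear_combination ex - f.x (s.guard t') * hab
    have h6 : |f.x (s.guard t') - f.x (s.guard t)| ≤ 2 * s.M := by
      rw [abs_le]; constructor <;> linarith
    have h7 : a * |f.x (s.guard t') - f.x (s.guard t)| ≤ s.κ * (2 * s.M) :=
      mul_le_mul haκ h6 (abs_nonneg _) s.κ_pos.le
    have h8 : |f.x p - f.x (s.guard t')| ≤ s.c / 8 := by
      have := s.κ_le
      nlinarith [abs_nonneg (f.x p - f.x (s.guard t'))]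
    have h9 := s.x_guard_sub t'
    have := abs_sub_le (f.x p) (f.x (s.guard t')) (f.x (f.o t'.1))
    linarith

/-- The strips of different bases are disjoint. -/
lemma base_eq {k k' : I ⊕ J} {r : ℝ} (h1 : |r - f.x (f.o k)| ≤ s.c / 4)
    (h2 : |r - f.x (f.o k')| ≤ s.c / 4) : k = k' := by
  by_contra hne
  have h3 := s.gap k k' hne
  rw [abs_sub_comm] at h1
  have := abs_sub_le (f.x (f.o k)) r (f.x (f.o k'))
  linarith [s.c_pos]

lemma guard_injOn {t t' : (I ⊕ J) × Bool} (e : s.guard t = s.guard t') : t = t' := by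
  have hc := s.c_pos
  have hk : t.1 = t'.1 := by
    refine s.base_eq (r := f.x (s.guard t)) ((s.x_guard_sub t).trans (by linarith)) ?_
    rw [e]
    exact (s.x_guard_sub t').trans (by linarith)
  have hh := congrArg (f.h t.1) e
  rw [h_guard_self, hk, h_guard_self] at hh
  have hy : 0 < f.h t'.1 (f.y t'.1) := hc.trans_le (s.le_h_y _ _)
  have hs := mul_right_cancel₀ hy.ne' hh
  have h1 := s.δ_lt_ε
  have h2 := s.η_pos
  obtain ⟨k, β⟩ := t
  obtain ⟨k', β'⟩ := t'
  obtain rfl : k = k' := hk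
  rcases k with i | j <;> cases β <;> cases β' <;> simp only [scale] at hs <;>
    first | rfl | (exfalso; linarith)

/-- No three guards are collinear: if `u'` were in the shadow of `u` from `t`, then `u` and `u'` would
have the same base, the line through them would be vertical, and `t` would be a third guard of that
base. -/
lemma not_mem_openSegment {t u u' : (I ⊕ J) × Bool} (ht : f.Valid t) (hu : f.Valid u)
    (hu' : f.Valid u') (h1 : t ≠ u) (h2 : t ≠ u') (h3 : u ≠ u') :
    s.guard u ∉ openSegment ℝ (s.guard t) (s.guard u') := by
  intro hmem
  have hst := s.strip ht hu h1 (s.guard_mem u') hmem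
  have hc := s.c_pos
  have hk : u.1 = u'.1 := s.base_eq hst ((s.x_guard_sub u').trans (by linarith))
  obtain ⟨e1, e2⟩ := s.x_guard_of_ne hu hu' h3 hk
  obtain ⟨a, b, ha, hb, hab, e⟩ := hmem
  have ex := congrArg f.x e
  rw [x_combo, e1, e2] at ex
  have hxt : f.x (s.guard t) = f.x (f.o u.1) := by
    have : a * (f.x (s.guard t) - f.x (f.o u.1)) = 0 := by
      linear_combination ex - f.x (f.o u.1) * hab
    rcases mul_eq_zero.1 this with h | h <;> linarith
  have hk' : t.1 = u.1 := by
    refine s.base_eq (r := f.x (s.guard t)) ((s.x_guard_sub t).trans (by linarith)) ?_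
    rw [hxt, sub_self, abs_zero]; linarith
  obtain ⟨k, β⟩ := t
  obtain ⟨k1, β1⟩ := u
  obtain ⟨k2, β2⟩ := u'
  simp only at hk hk'
  subst hk' hk
  cases β <;> cases β1 <;> cases β2 <;> simp at h1 h2 h3

/-- The shadows of one guard `u` from two different sources do not meet: both sources would lie on the
ray from `p` beyond `u`, so the nearer of them would lie between `u` and the other, making three
guards collinear. -/
lemma same_blocker {t t' u : (I ⊕ J) × Bool} (ht : f.Valid t) (ht' : f.Valid t')
    (hu : f.Valid u) (h : t ≠ u) (h' : t' ≠ u) {p : Plane}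
    (hb : s.guard u ∈ openSegment ℝ (s.guard t) p)
    (hb' : s.guard u ∈ openSegment ℝ (s.guard t') p) : t = t' := by
  by_contra hne
  -- The farther source has the smaller weight; by symmetry this is `t'`, with weight `a'`.
  obtain ⟨a, b, ha, hb, hab, e⟩ := hb
  obtain ⟨a', b', ha', hb', hab', e'⟩ := hb'
  wlog hlt : a' < a generalizing t t' a b a' b'
  · rcases eq_or_lt_of_le (not_lt.1 hlt) with heq | hlt'
    · subst heq
      obtain rfl : b = b' := by linarith
      have h1 : a • s.guard t = a • s.guard t' := add_right_cancel (e.trans e'.symm)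
      exact hne (s.guard_injOn (smul_right_injective _ ha.ne' h1))
    · exact this ht' ht h' h (Ne.symm hne) a' b' ha' hb' hab' e' a b ha hb hab e hlt'
  refine s.not_mem_openSegment hu ht ht' h.symm h'.symm hne
    ⟨(a - a') / (a * b'), b * a' / (a * b'), ?_, by positivity, ?_, ?_⟩
  · exact div_pos (sub_pos.2 hlt) (by positivity)
  · field_simp
    obtain rfl : b = 1 - a := by linarith
    obtain rfl : b' = 1 - a' := by linarith
    ring
  · have hne0 : a * b' ≠ 0 := by positivity
    have key : (a - a') • s.guard u + (b * a') • s.guard t' = (a * b') • s.guard t := by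
      have : a - a' = b' - b := by linarith
      rw [this, sub_smul]
      nth_rewrite 1 [← e]
      rw [← e']
      module
    have := congrArg (fun z => (a * b')⁻¹ • z) key
    simp only [smul_add, smul_smul] at this
    rw [inv_mul_cancel₀ hne0, one_smul] at this
    rw [← this]
    congr 2 <;> ring

/-- The shadows of the lower and of the upper guard of one base from different sources do not
meet. -/
lemma same_base {t t' : (I ⊕ J) × Bool} {k : I ⊕ J} (ht : f.Valid t) (ht' : f.Valid t')
    (hk : f.Valid (k, true)) (h : t ≠ (k, false)) (h' : t' ≠ (k, true)) {p : Plane} (hp : p ∈ P)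
    (hb : s.guard (k, false) ∈ openSegment ℝ (s.guard t) p)
    (hb' : s.guard (k, true) ∈ openSegment ℝ (s.guard t') p) : t = t' := by
  by_contra hne
  have hc := s.c_pos
  have hδε := s.δ_lt_ε
  obtain ⟨a, b, ha, hb, hab, e⟩ := hb
  obtain ⟨a', b', ha', hb', hab', e'⟩ := hb'
  have eh := congrArg (f.h k) e
  have eh' := congrArg (f.h k) e'
  have ex := congrArg f.x e
  have ex' := congrArg f.x e'
  have hself := s.h_guard_self (k, false)
  have hself' := s.h_guard_self (k, true)
  simp only at hself hself'
  have hY : 0 < f.h k (f.y k) := hc.trans_le (s.le_h_y _ _)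
  have hYM := s.h_y_le k k
  rw [h_combo f _ hab, hself] at eh
  rw [h_combo f _ hab', hself'] at eh'
  rw [x_combo, s.x_guard_of_true hk] at ex
  rw [x_combo, s.x_guard_of_true hk] at ex'
  have hp0 := h_nonneg (f := f) k hp
  -- The lower guard is strictly lower than the upper one.
  have hsc : s.scale (k, false) < s.scale (k, true) := by
    rcases k with i | j
    exacts [hδε, s.η_pos]
  have hYsc := mul_lt_mul_of_pos_right hsc hY
  -- Every source, seen over the base `k`, is at least as high as the lower guard, so a point in the
  -- shadow of the lower guard is at most as high as the latter. The shadow is vertical if the source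
  -- is the upper guard of `k`.
  have hpt : f.h k p ≤ s.scale (k, false) * f.h k (f.y k) ∧
      (t.1 = k → f.x p = f.x (f.o k)) := by
    by_cases htk : t.1 = k
    · obtain ⟨k0, β⟩ := t
      simp only at htk
      subst htk
      cases β
      · exact absurd rfl h
      rw [hself'] at eh
      rw [s.x_guard_of_true hk] at ex
      refine ⟨by nlinarith, fun _ => ?_⟩
      have : b * (f.x p - f.x (f.o k0)) = 0 := by
        linear_combination ex - f.x (f.o k0) * hab
      rcases mul_eq_zero.1 this with h | h <;> linarith
    · refine ⟨?_, fun h => absurd h htk⟩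
      have hr := s.h_ratio (t := t) (t' := (k, false)) htk
      simp only [hself] at hr
      have hκ := s.κ_le'
      have hG : s.scale (k, false) * f.h k (f.y k) ≤ f.h k (s.guard t) := by nlinarith
      by_contra hcon
      have h1 := mul_lt_mul_of_pos_left (not_le.1 hcon) hb
      have h2 := mul_le_mul_of_nonneg_left hG ha.le
      have h3 : a * (s.scale (k, false) * f.h k (f.y k)) +
          b * (s.scale (k, false) * f.h k (f.y k)) = s.scale (k, false) * f.h k (f.y k) := by
        rw [← add_mul, hab, one_mul]
      linarith
  obtain ⟨hpt, hptx⟩ := hpt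
  -- The source `t'` is not the lower guard, for then `p` would be higher than the upper guard.
  by_cases htk' : t'.1 = k
  · obtain ⟨k0, β⟩ := t'
    simp only at htk'
    subst htk'
    cases β
    · rw [hself] at eh'
      nlinarith
    · exact h' rfl
  have hgap : s.c / 2 ≤ |f.x (s.guard t') - f.x (f.o k)| := by
    have h1 := s.gap _ _ htk'
    have h2 := s.x_guard_sub t'
    rw [abs_sub_comm] at h2
    have := abs_sub_le (f.x (f.o t'.1)) (f.x (s.guard t')) (f.x (f.o k))
    linarith
  have hx' : a' * |f.x (s.guard t') - f.x (f.o k)| = b' * |f.x p - f.x (f.o k)| := by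
    refine mul_abs_eq hb' ha' (.inr ?_)
    linear_combination ex' - f.x (f.o k) * hab'
  -- A source of another base casts a slanted shadow, which misses the vertical line through `k`.
  by_cases htk : t.1 = k
  · rw [hptx htk, sub_self, abs_zero, mul_zero] at hx'
    have : 0 < a' * |f.x (s.guard t') - f.x (f.o k)| := mul_pos ha' (by linarith)
    linarith
  rcases k with i | j
  swap
  · -- The lower guard of an edge has height zero, so its shadow would have negative height.
    have hr := (s.h_ratio (t := t) (t' := (.inr j, false)) htk).2
    simp only [scale, zero_mul] at eh hr
    nlinarith
  simp only [scale] at eh eh' hpt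
  have hX : |f.x (s.guard t) - f.x (f.o (.inl i))| ≤ 2 * s.M := by
    have h1 := abs_le.1 (s.x_guard_abs t)
    have h2 := abs_le.1 (s.x_o (.inl i))
    rw [abs_le]; constructor <;> linarith
  have hx : b * |f.x p - f.x (f.o (.inl i))| = a * |f.x (s.guard t) - f.x (f.o (.inl i))| := by
    refine mul_abs_eq ha hb (.inr ?_)
    linear_combination ex - f.x (f.o (.inl i)) * hab
  exact fan_estimate hc s.M_pos s.δ_pos hδε s.δ_lt s.ε_le s.κ_le' hY hYM
    (s.le_h_guard_inl htk) (s.h_guard_le (.inl i) t') hp0 hpt ha hb hab ha' hab' eh eh'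
    (abs_nonneg _) hX hgap hx hx'

/-- Every point of `P` is hidden from at most one of the guards, no matter which guards block. -/
theorem hidden_unique {t t' u u' : (I ⊕ J) × Bool} (ht : f.Valid t) (ht' : f.Valid t')
    (hu : f.Valid u) (hu' : f.Valid u') (h : t ≠ u) (h' : t' ≠ u') {p : Plane} (hp : p ∈ P)
    (hb : s.guard u ∈ openSegment ℝ (s.guard t) p)
    (hb' : s.guard u' ∈ openSegment ℝ (s.guard t') p) : t = t' := by
  have hk : u.1 = u'.1 := s.base_eq (s.strip ht hu h hp hb) (s.strip ht' hu' h' hp hb')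
  obtain ⟨k, β⟩ := u
  obtain ⟨k', β'⟩ := u'
  obtain rfl : k = k' := hk
  cases β <;> cases β'
  · exact s.same_blocker ht ht' hu h h' hb hb'
  · exact s.same_base ht ht' hu' h h' hp hb hb'
  · exact (s.same_base ht' ht hu h' h hp hb' hb).symm
  · exact s.same_blocker ht ht' hu h h' hb hb'

end Scales

end Frame

/-! ### Geometry of convex polygons -/

/-- Among the functionals `z ↦ z 0 + s * z 1`, only finitely many identify two of the points. -/
lemma exists_injective_functional {K : Type*} [Finite K] (o : K → Plane)
    (ho : Function.Injective o) :
    ∃ x : Plane →ₗ[ℝ] ℝ, ∀ k k', k ≠ k' → x (o k) ≠ x (o k') := by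
  let p0 : Plane →ₗ[ℝ] ℝ := (EuclideanSpace.proj (0 : Fin 2) : Plane →L[ℝ] ℝ)
  let p1 : Plane →ₗ[ℝ] ℝ := (EuclideanSpace.proj (1 : Fin 2) : Plane →L[ℝ] ℝ)
  have hfin : (Set.range fun q : K × K =>
      -(o q.1 0 - o q.2 0) / (o q.1 1 - o q.2 1)).Finite := Set.finite_range _
  obtain ⟨s, hs⟩ := hfin.exists_notMem
  refine ⟨p0 + s • p1, fun k k' hk e => ?_⟩
  have hlin : o k 0 + s * o k 1 = o k' 0 + s * o k' 1 := e
  by_cases h1 : o k 1 - o k' 1 = 0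
  · refine hk (ho ?_)
    have h1' := sub_eq_zero.1 h1
    ext i
    fin_cases i
    · simp only [h1'] at hlin
      simpa using hlin
    · exact h1'
  · refine hs ⟨(k, k'), ?_⟩
    simp only
    rw [div_eq_iff h1]
    linear_combination -hlin

/-- The determinant of `u` and `z`, as a linear functional of `z`; it is positive when `z` points to
the left of the direction `u`. -/
def det (u : Plane) : Plane →ₗ[ℝ] ℝ where
  toFun z := u 0 * z 1 - u 1 * z 0
  map_add' a b := by simp; ring
  map_smul' r a := by simp; ring

lemma det_apply (u z : Plane) : det u z = u 0 * z 1 - u 1 * z 0 := rfl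

section Polygon

variable {V : Finset Plane} {P : Set Plane}

/-- A vertex is strictly separated from the other vertices, by Hahn-Banach. -/
lemma exists_support (hPV : P = convexHull ℝ (V : Set Plane)) {v : Plane}
    (hv : v ∈ P.extremePoints ℝ) : ∃ ℓ : Plane →ₗ[ℝ] ℝ, ∀ w ∈ V, w ≠ v → ℓ v < ℓ w := by
  have hconv : Convex ℝ P := hPV ▸ convex_convexHull ℝ _
  have h1 := (hconv.mem_extremePoints_iff_mem_sdiff_convexHull_sdiff.1 hv).2
  have h2 : v ∉ convexHull ℝ ((V : Set Plane) \ {v}) := fun h =>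
    h1 (convexHull_mono (Set.sdiff_subset_sdiff_left (hPV ▸ subset_convexHull ℝ _)) h)
  have hc : IsClosed (convexHull ℝ ((V : Set Plane) \ {v})) :=
    (V.finite_toSet.subset Set.sdiff_subset).isClosed_convexHull ℝ
  obtain ⟨ℓ, u, hu1, hu2⟩ := geometric_hahn_banach_point_closed (convex_convexHull ℝ _) hc h2
  exact ⟨ℓ, fun w hw hwv => hu1.trans (hu2 w (subset_convexHull ℝ _ ⟨hw, hwv⟩))⟩

/-- Every vertex `v` has a successor `w` in counterclockwise order: all the other vertices lie strictly
to the left of the line from `v` to `w`. Seen from `v` the vertices lie in the half-plane `0 < ℓ`,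
and `w` is the one with the least slope there. -/
lemma exists_next (hPV : P = convexHull ℝ (V : Set Plane)) (hV : ∀ v ∈ V, v ∈ P.extremePoints ℝ)
    (hcard : 3 ≤ V.card) {v : Plane} (hv : v ∈ V) :
    ∃ w ∈ V, w ≠ v ∧ ∀ z ∈ V, z ≠ v → z ≠ w → 0 < det (w - v) (z - v) := by
  have hsub : ∀ z ∈ V, z ∈ P := fun z hz => (hV z hz).1
  obtain ⟨ℓ, hℓ⟩ := exists_support hPV (hV v hv)
  let b0 : Plane := EuclideanSpace.single 0 1
  let b1 : Plane := EuclideanSpace.single 1 1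
  have hdec : ∀ z : Plane, ℓ z = ℓ b0 * z 0 + ℓ b1 * z 1 := by
    intro z
    have : z = z 0 • b0 + z 1 • b1 := by
      ext i; fin_cases i <;> simp [b0, b1]
    conv_lhs => rw [this]
    simp; ring
  have hpos : ∀ z ∈ V.erase v, 0 < ℓ (z - v) := fun z hz => by
    rw [map_sub]
    exact sub_pos.2 (hℓ z (Finset.mem_of_mem_erase hz) (Finset.ne_of_mem_erase hz))
  have hne : (V.erase v).Nonempty := by
    rw [← Finset.card_pos, Finset.card_erase_of_mem hv]; omega
  let h : Plane → ℝ := fun z => ℓ b0 * z 1 - ℓ b1 * z 0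
  have hident : ∀ a b : Plane, ℓ a * h b - h a * ℓ b = ((ℓ b0) ^ 2 + (ℓ b1) ^ 2) * det a b := by
    intro a b
    rw [hdec a, hdec b, det_apply]; simp only [h]; ring
  obtain ⟨w, hw, hmin⟩ := (V.erase v).exists_min_image (fun z => h (z - v) / ℓ (z - v)) hne
  refine ⟨w, Finset.mem_of_mem_erase hw, Finset.ne_of_mem_erase hw, fun z hz hzv hzw => ?_⟩
  have hz' : z ∈ V.erase v := Finset.mem_erase.2 ⟨hzv, hz⟩
  have hwv := Finset.ne_of_mem_erase hw
  have hwV := Finset.mem_of_mem_erase hw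
  have pw := hpos w hw
  have pz := hpos z hz'
  have hb : 0 < (ℓ b0) ^ 2 + (ℓ b1) ^ 2 := by
    by_contra hcon
    have h0 : ℓ b0 = 0 := by nlinarith [sq_nonneg (ℓ b0), sq_nonneg (ℓ b1)]
    have h1 : ℓ b1 = 0 := by nlinarith [sq_nonneg (ℓ b0), sq_nonneg (ℓ b1)]
    rw [hdec, h0, h1] at pw
    linarith
  have hge : 0 ≤ det (w - v) (z - v) := by
    have h1 := hmin z hz'
    rw [div_le_div_iff₀ pw pz] at h1
    have h2 := hident (w - v) (z - v)
    by_contra hcon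
    nlinarith [mul_pos_of_neg_of_neg (neg_neg_of_pos hb) (not_le.1 hcon)]
  refine lt_of_le_of_ne hge fun hzero => ?_
  -- If the determinant vanished, then `w` and `z` would lie on one ray from `v`, and the nearer of
  -- them would not be an extreme point.
  have hcol : ℓ (w - v) • (z - v) = ℓ (z - v) • (w - v) := by
    rw [det_apply] at hzero
    rw [hdec (w - v), hdec (z - v)]
    ext i
    fin_cases i
    · simp only [PiLp.smul_apply, smul_eq_mul, Fin.zero_eta]
      linear_combination (ℓ b1) * hzero
    · simp only [PiLp.smul_apply, smul_eq_mul, Fin.mk_one]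
      linear_combination (-ℓ b0) * hzero
  have hseg : ∀ p q : Plane, 0 < ℓ (p - v) → ℓ (p - v) < ℓ (q - v) →
      ℓ (q - v) • (p - v) = ℓ (p - v) • (q - v) → p ∈ openSegment ℝ v q := by
    intro p q hp hpq e
    have hq := hp.trans hpq
    refine ⟨1 - ℓ (p - v) / ℓ (q - v), ℓ (p - v) / ℓ (q - v), ?_, div_pos hp hq, by ring, ?_⟩
    · rw [sub_pos, div_lt_one hq]; exact hpq
    · have : p - v = (ℓ (p - v) / ℓ (q - v)) • (q - v) := by
        rw [div_eq_inv_mul, mul_smul, ← e, smul_smul, inv_mul_cancel₀ hq.ne', one_smul]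
      calc _ = v + (ℓ (p - v) / ℓ (q - v)) • (q - v) := by module
        _ = p := by rw [← this]; abel
  rcases lt_trichotomy (ℓ (z - v)) (ℓ (w - v)) with hlt | heq | hlt
  · have := (mem_extremePoints.1 (hV z hz)).2 v (hsub v hv) w (hsub w hwV) (hseg z w pz hlt hcol)
    exact hzv this.1.symm
  · rw [heq] at hcol
    exact hzw (sub_left_injective (smul_right_injective _ pw.ne' hcol))
  · have := (mem_extremePoints.1 (hV w hwV)).2 v (hsub v hv) z (hsub z hz)
      (hseg w z pw hlt hcol.symm)
    exact hwv this.1.symm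

lemma le_of_forall_vertex (hPV : P = convexHull ℝ (V : Set Plane)) (φ : Plane →ₗ[ℝ] ℝ) {r : ℝ}
    (h : ∀ v ∈ V, r ≤ φ v) : ∀ p ∈ P, r ≤ φ p := by
  subst hPV
  exact fun p hp => convexHull_min (fun v hv => h v hv) (convex_halfSpace_ge φ.isLinear r) hp

/-- The barycentre of the vertices. A functional that is not constant on the vertices exceeds its
minimum there (`lt_bary`). -/
def bary (V : Finset Plane) : Plane := ∑ v ∈ V, ((V.card : ℝ)⁻¹) • v

lemma bary_mem (hPV : P = convexHull ℝ (V : Set Plane)) (hV : V.Nonempty) : bary V ∈ P := by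
  subst hPV
  have : (V.card : ℝ) ≠ 0 := by exact_mod_cast hV.card_pos.ne'
  refine (convex_convexHull ℝ _).sum_mem (fun _ _ => by positivity) ?_
    (fun i hi => subset_convexHull ℝ _ hi)
  rw [Finset.sum_const, nsmul_eq_mul, mul_inv_cancel₀ this]

lemma lt_bary (φ : Plane →ₗ[ℝ] ℝ) {r : ℝ} (h : ∀ v ∈ V, r ≤ φ v) (h' : ∃ v ∈ V, r < φ v) :
    r < φ (bary V) := by
  obtain ⟨v, hv, hlt⟩ := h'
  have hc : (0 : ℝ) < V.card := by exact_mod_cast Finset.card_pos.2 ⟨v, hv⟩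
  calc r = ∑ _v ∈ V, (V.card : ℝ)⁻¹ * r := by
        rw [Finset.sum_const, nsmul_eq_mul]; field_simp
    _ < ∑ v ∈ V, (V.card : ℝ)⁻¹ * φ v :=
        Finset.sum_lt_sum (fun v hv => by have := h v hv; gcongr)
          ⟨v, hv, by gcongr⟩
    _ = φ (bary V) := by simp [bary, map_sum]

/-- If `x l < ξ < x r`, then the level line `x = ξ` meets one of the segments from `c` to `l` and from
`c` to `r`, at a point different from `l` and `r`. -/
lemma exists_on_segment (x : Plane →ₗ[ℝ] ℝ) {c l r : Plane} {ξ : ℝ} (h1 : x l < ξ)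
    (h2 : ξ < x r) : ∃ z, (z = l ∨ z = r) ∧ ∃ t : ℝ, 0 ≤ t ∧ t < 1 ∧
      x ((1 - t) • c + t • z) = ξ := by
  rcases le_total ξ (x c) with h | h
  · have hp : 0 < x c - x l := by linarith
    refine ⟨l, .inl rfl, (x c - ξ) / (x c - x l), by apply div_nonneg <;> linarith, ?_, ?_⟩
    · rw [div_lt_one hp]; linarith
    · simp only [map_add, map_smul, smul_eq_mul]; field_simp; ring
  · have hp : 0 < x r - x c := by linarith
    refine ⟨r, .inr rfl, (ξ - x c) / (x r - x c), by apply div_nonneg <;> linarith, ?_, ?_⟩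
    · rw [div_lt_one hp]; linarith
    · simp only [map_add, map_smul, smul_eq_mul]; field_simp; ring

/-- The frame of a polygon. An edge is indexed by its first vertex in counterclockwise order, and its
functional is the determinant with the edge vector. The target of a base is the barycentre for the
leftmost and the rightmost vertex; for any other base it is the point on its vertical line in
the union of the segments from the barycentre to those two vertices. -/
lemma exists_frame (hPV : P = convexHull ℝ (V : Set Plane))
    (hV : ∀ v ∈ V, v ∈ P.extremePoints ℝ) (hcard : 3 ≤ V.card) :
    ∃ f : Frame V V P, f.L ≠ f.R := by
  have hconv : Convex ℝ P := hPV ▸ convex_convexHull ℝ _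
  have hsub : ∀ z ∈ V, z ∈ P := fun z hz => (hV z hz).1
  have hthird : ∀ a b : Plane, ∃ z ∈ V, z ≠ a ∧ z ≠ b := by
    intro a b
    obtain ⟨z, hz, hz'⟩ := Finset.exists_mem_notMem_of_card_lt_card
      (show ({a, b} : Finset Plane).card < V.card from
        (Finset.card_le_two).trans_lt (by omega))
    simp only [Finset.mem_insert, Finset.mem_singleton, not_or] at hz'
    exact ⟨z, hz, hz'⟩
  choose ℓ hℓ using fun v : V => exists_support hPV (hV v v.2)
  choose nx hnxV hnx_ne hnx using fun v : V => exists_next hPV hV hcard v.2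
  let m : V → Plane := fun v => (1 / 2 : ℝ) • (v : Plane) + (1 / 2 : ℝ) • nx v
  let φ : V ⊕ V → Plane →ₗ[ℝ] ℝ := Sum.elim ℓ (fun v => det (nx v - v))
  let o : V ⊕ V → Plane := Sum.elim (fun v => v) m
  have hm : ∀ v, ∀ F : Plane →ₗ[ℝ] ℝ, F (m v) = (F v + F (nx v)) / 2 := by
    intro v F; simp only [m, map_add, map_smul, smul_eq_mul]; ring
  have hoP : ∀ k, o k ∈ P := by
    rintro (v | v)
    · exact hsub v v.2
    · exact hconv (hsub v v.2) (hsub _ (hnxV v)) (by norm_num) (by norm_num) (by norm_num)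
  have hnx0 : ∀ v : V, det (nx v - v) (nx v) = det (nx v - v) v := by
    intro v; rw [← sub_eq_zero, ← map_sub, det_apply]; ring
  have hnx' : ∀ v : V, ∀ z ∈ V, z ≠ v → z ≠ nx v → det (nx v - v) v < det (nx v - v) z := by
    intro v z hz h1 h2
    have := hnx v z hz h1 h2
    rwa [map_sub, sub_pos] at this
  have hom : ∀ v : V, det (nx v - v) (m v) = det (nx v - v) v := by
    intro v; rw [hm, hnx0]; ring
  have hnxle : ∀ v : V, ∀ z ∈ V, det (nx v - v) v ≤ det (nx v - v) z := by
    intro v z hz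
    by_cases h1 : z = v
    · rw [h1]
    by_cases h2 : z = nx v
    · rw [h2, hnx0]
    exact (hnx' v z hz h1 h2).le
  have hφV : ∀ k, ∀ z ∈ V, φ k (o k) ≤ φ k z := by
    rintro (v | v) z hz
    · by_cases h : z = v
      · simp [φ, o, h]
      · exact (hℓ v z hz h).le
    · change det (nx v - v) (m v) ≤ _
      rw [hom]; exact hnxle v z hz
  have hφV' : ∀ k, ∃ z ∈ V, φ k (o k) < φ k z := by
    rintro (v | v)
    · exact ⟨nx v, hnxV v, hℓ v _ (hnxV v) (hnx_ne v)⟩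
    · obtain ⟨z, hz, h1, h2⟩ := hthird v (nx v)
      refine ⟨z, hz, ?_⟩
      change det (nx v - v) (m v) < _
      rw [hom]; exact hnx' v z hz h1 h2
  have hφP : ∀ k, ∀ p ∈ P, φ k (o k) ≤ φ k p := fun k => le_of_forall_vertex hPV _ (hφV k)
  have hinl : ∀ i k, k ≠ Sum.inl i → φ (.inl i) (o (.inl i)) < φ (.inl i) (o k) := by
    rintro i (v | v) hk
    · refine hℓ i v v.2 fun e => hk ?_
      rw [Subtype.ext e]
    · change ℓ i i < ℓ i (m v)
      rw [hm]
      by_cases hvi : v = i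
      · subst hvi
        linarith [hℓ v _ (hnxV v) (hnx_ne v)]
      · have h1 := hℓ i v v.2 (fun e => hvi (Subtype.ext e))
        have h2 := hφV (.inl i) _ (hnxV v)
        change ℓ i i ≤ ℓ i (nx v) at h2
        linarith
  have hinr : ∀ j j', j' ≠ j → φ (.inr j) (o (.inr j)) < φ (.inr j) (o (.inr j')) := by
    intro j j' hjj
    change det (nx j - j) (m j) < det (nx j - j) (m j')
    rw [hom, hm]
    have h1 := hnxle j j' j'.2
    have h2 := hnxle j _ (hnxV j')
    by_contra hcon
    have e1 : (j' : Plane) = nx j := by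
      by_contra h
      have := hnx' j j' j'.2 (fun e => hjj (Subtype.ext e)) h
      linarith
    have e2 : nx j' = j := by
      by_contra h
      have := hnx' j _ (hnxV j') h (fun e => hnx_ne j' (e.trans e1.symm))
      linarith
    -- Otherwise `j` and `j'` are successors of each other, and any third vertex lies strictly to the
    -- left of the line through them in both orientations.
    obtain ⟨z, hz, hz1, hz2⟩ := hthird j (nx j)
    have p1 := hnx j z hz hz1 hz2
    have p2 := hnx j' z hz (e1 ▸ hz2) (e2 ▸ hz1)
    rw [e2, e1] at p2
    simp only [det_apply, PiLp.sub_apply] at p1 p2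
    linarith
  have hoinj : Function.Injective o := by
    rintro (a | a) (b | b) e
    · exact congrArg _ (Subtype.ext e)
    · have := hinl a (.inr b) (by simp)
      rw [← e] at this
      exact absurd this (lt_irrefl _)
    · have := hinl b (.inr a) (by simp)
      rw [e] at this
      exact absurd this (lt_irrefl _)
    · by_contra h
      have := hinr b a (fun e => h (by rw [e]))
      rw [e] at this
      exact absurd this (lt_irrefl _)
  obtain ⟨x, hx⟩ := exists_injective_functional o hoinj
  have hne : (Finset.univ : Finset V).Nonempty := by
    obtain ⟨z, hz, -⟩ := hthird 0 0
    exact ⟨⟨z, hz⟩, Finset.mem_univ _⟩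
  obtain ⟨L, -, hL⟩ := Finset.univ.exists_min_image (fun v : V => x v) hne
  obtain ⟨R, -, hR⟩ := Finset.univ.exists_max_image (fun v : V => x v) hne
  have hlo : ∀ k, k ≠ Sum.inl L → x L < x (o k) := by
    intro k hk
    refine lt_of_le_of_ne ?_ (hx _ _ hk.symm)
    rcases k with v | v
    · exact hL v (Finset.mem_univ _)
    · change _ ≤ x (m v)
      rw [hm]
      have h1 := hL v (Finset.mem_univ _)
      have h2 := hL ⟨nx v, hnxV v⟩ (Finset.mem_univ _)
      simp only at h2
      linarith
  have hhi : ∀ k, k ≠ Sum.inl R → x (o k) < x R := by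
    intro k hk
    refine lt_of_le_of_ne ?_ (hx _ _ hk)
    rcases k with v | v
    · exact hR v (Finset.mem_univ _)
    · change x (m v) ≤ _
      rw [hm]
      have h1 := hR v (Finset.mem_univ _)
      have h2 := hR ⟨nx v, hnxV v⟩ (Finset.mem_univ _)
      simp only at h2
      linarith
  have hVne : V.Nonempty := Finset.card_pos.1 (by omega)
  have hbar : ∀ k, φ k (o k) < φ k (bary V) := fun k => lt_bary _ (hφV k) (hφV' k)
  have hy : ∀ k, ∃ y ∈ P, (∀ k', φ k' (o k') < φ k' y) ∧
      (k ≠ .inl L → k ≠ .inl R → x y = x (o k)) := by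
    intro k
    by_cases hk : k ≠ .inl L ∧ k ≠ .inl R
    · obtain ⟨z, hz, t, ht0, ht1, ht⟩ :=
        exists_on_segment x (c := bary V) (hlo k hk.1) (hhi k hk.2)
      have hzV : z ∈ V := by
        rcases hz with rfl | rfl
        exacts [L.2, R.2]
      refine ⟨_, hconv (bary_mem hPV hVne) (hsub z hzV) (by linarith) ht0 (by ring),
        fun k' => ?_, fun _ _ => ht⟩
      simp only [map_add, map_smul, smul_eq_mul]
      nlinarith [hbar k', hφV k' z hzV]
    · refine ⟨_, bary_mem hPV hVne, hbar, fun h1 h2 => absurd ⟨h1, h2⟩ hk⟩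
  choose y hyP hyφ hyx using hy
  refine ⟨⟨x, o, y, φ, L, R, hconv, hoP, hyP, hφP, fun k k' => hyφ k' k, hinl, hinr, hx, hyx⟩,
    fun e => ?_⟩
  change L = R at e
  obtain ⟨z, hz, hz1, -⟩ := hthird L L
  have hz' : Sum.inl (⟨z, hz⟩ : V) ≠ (Sum.inl L : V ⊕ V) := fun e' =>
    hz1 (congrArg Subtype.val (Sum.inl_injective e'))
  have h1 := hlo _ hz'
  have h2 := hhi _ (e ▸ hz')
  rw [← e] at h2
  exact lt_asymm h1 h2

end Polygon

/-! ### The covering -/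

/-- Any `k + 1` of the `4 * V.card - 2` guards cover `P`, since every point is hidden from at most one
of them. -/
lemma exists_kCovers {V : Finset Plane} {P : Set Plane} (f : Frame V V P) (hLR : f.L ≠ f.R)
    {k : ℕ} (hk : k + 1 ≤ 4 * V.card - 2) :
    ∃ G : Finset Plane, ↑G ⊆ P ∧ G.card = k + 1 ∧ KCovers G P k := by
  classical
  obtain ⟨s⟩ := f.nonempty_scales
  let bad : Finset ((V ⊕ V) × Bool) := {(.inl f.L, true), (.inl f.R, true)}
  have hbad : bad.card = 2 := Finset.card_pair (by simpa using hLR)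
  have hvalid : ∀ t ∈ badᶜ, f.Valid t := by
    rintro ⟨a, b⟩ ht rfl
    simp only [bad, Finset.mem_compl, Finset.mem_insert, Finset.mem_singleton, Prod.mk.injEq,
      and_true, not_or] at ht
    exact ht
  have hT : (badᶜ.image s.guard).card = 4 * V.card - 2 := by
    rw [Finset.card_image_of_injective _ fun _ _ => s.guard_injOn, Finset.card_compl, hbad]
    simp only [Fintype.card_prod, Fintype.card_sum, Fintype.card_coe, Fintype.card_bool]
    omega
  obtain ⟨G, hGT, hG⟩ := Finset.exists_subset_card_eq (hT ▸ hk)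
  have hGt : ∀ g ∈ G, ∃ t, f.Valid t ∧ s.guard t = g := by
    intro g hg
    obtain ⟨t, ht, e⟩ := Finset.mem_image.1 (hGT hg)
    exact ⟨t, hvalid t ht, e⟩
  refine ⟨G, fun g hg => ?_, hG, fun p hp => ?_⟩
  · obtain ⟨t, -, rfl⟩ := hGt g hg
    exact s.guard_mem t
  · have h1 : {g ∈ G | Hidden G g p}.card ≤ 1 := by
      refine Finset.card_le_one.2 fun g hg g' hg' => ?_
      obtain ⟨hgG, b, hbG, hbg, hb⟩ := Finset.mem_filter.1 hg
      obtain ⟨hgG', b', hbG', hbg', hb'⟩ := Finset.mem_filter.1 hg'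
      obtain ⟨t, ht, rfl⟩ := hGt g hgG
      obtain ⟨t', ht', rfl⟩ := hGt g' hgG'
      obtain ⟨u, hu, rfl⟩ := hGt b hbG
      obtain ⟨u', hu', rfl⟩ := hGt b' hbG'
      exact congrArg _ (s.hidden_unique ht ht' hu hu' (fun e => hbg (e ▸ rfl))
        (fun e => hbg' (e ▸ rfl)) hp hb hb')
    have h2 : {g ∈ (G : Set Plane) | ¬ Hidden G g p} = ↑{g ∈ G | ¬ Hidden G g p} := by
      ext g; simp
    rw [h2, Set.ncard_coe_finset]
    have h3 := G.card_filter_add_card_filter_not (fun g => Hidden G g p)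
    omega

/-- If n < k < 4n - 2 then there is a guard set of exactly k + 1 guards
that k-covers the convex n-gon P. -/
theorem statement2 (n k : ℕ) (V : Finset Plane) (P : Set Plane)
    (hP : IsConvexPolygon n V P) (hk1 : n < k) (hk2 : k < 4 * n - 2) :
    ∃ G : Finset Plane, ↑G ⊆ P ∧ G.card = k + 1 ∧ KCovers G P k := by
  obtain ⟨hn, hcard, hPV, hV⟩ := hP
  obtain ⟨f, hLR⟩ := exists_frame hPV hV (hcard.symm ▸ hn)
  exact exists_kCovers f hLR (by omega)
end
end

section
/- Let P be a convex n-gon in ℝ² and let k be a natural number with k ≥ 4n - 2. Then no guard set G ⊆ P with exactly k + 1 guards k-covers P. -/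
/-!
If `k + 1` guards `k`-cover `P`, then no point of `P` is hidden from two different guards: the
shadows of different guards are disjoint inside `P`. It is shown that this forces
`|G| ≤ 4 |V| - 2` (`card_guards_le`). Write `h` for the number of vertices of the convex
hull of `G`.

*Hull vertices.* Consider a vertex `w` of `P` on the outer side of two disjoint hull edges `a b` and
`c d` (in counterclockwise order). The lines `a b` and `c d` meet in the triangle `w b c`, hence
in `P`, at a point hidden from two guards (`visible_edges_meet`). So any two hull edges visible from
`w` share an endpoint, and `w` sees at most two (`card_visible_le_two`). Every hull edge is seen by
some vertex of `P`, since its endpoints lie in the hull of `V`; if moreover `P` does not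
extend beyond the edge, it is seen by two (`two_outer_vertices`). Counting pairs yields
`h + m ≤ 2 |V|` for every set of `m` hull edges of the latter kind.

*Remaining guards.* A triangle of guards contains at most one further guard
(`triangle_two_guards`): if it contained `d` and `e`, then either the lines joining two vertices
to `d` and `e` would meet beyond `d` and `e` inside the triangle, or `d` and `e` would be on a ray
from a vertex. The latter is possible only if the farther of the two is on the opposite side of the
triangle and `P` does not extend beyond that side. Such exceptional guards are in the interior of
hull edges that bound `P`, at most one on each (`openSegment_guard_unique`), so there
are at most `m` of them, where `m` now counts the hull edges that bound `P` and carry such a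
guard. A fan triangulation of the hull has `h - 2` triangles, each with at most one of the other
guards. Altogether `|G| ≤ h + m + (h - 2) ≤ 2 (h + m) - 2 ≤ 4 |V| - 2`.
-/

open Set

noncomputable section

/-! ### Orientation and shadows -/

/-- Twice the signed area of the triangle `a b c`; positive iff `a, b, c` is counterclockwise. -/
def orient (a b c : Plane) : ℝ := (b 0 - a 0) * (c 1 - a 1) - (b 1 - a 1) * (c 0 - a 0)

/-- `b` is an exposed point of `G`, i.e. a vertex of the convex hull of `G`: the linear functional
with coefficients `f₀, f₁` has its strict minimum over `G` at `b`. -/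
def Exposed (G : Finset Plane) (b : Plane) : Prop :=
  b ∈ G ∧ ∃ f₀ f₁ : ℝ, ∀ g ∈ G, g ≠ b → f₀ * b 0 + f₁ * b 1 < f₀ * g 0 + f₁ * g 1

/-- `b c` is an edge of the convex hull of `G`, with `G` on its left, and with
both endpoints extremal on the line through it. -/
def HullEdge (G : Finset Plane) (b c : Plane) : Prop :=
  b ∈ G ∧ c ∈ G ∧ b ≠ c ∧ ∀ g ∈ G, 0 ≤ orient b c g ∧ (orient b c g = 0 → g ∈ segment ℝ b c)

/-- No point of `P` is hidden from two different guards. -/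
def NoDoubleShadow (G : Finset Plane) (P : Set Plane) : Prop :=
  ∀ p ∈ P, ∀ g ∈ G, ∀ g' ∈ G, Hidden G g p → Hidden G g' p → g = g'

lemma plane_ext {x y : Plane} (h0 : x 0 = y 0) (h1 : x 1 = y 1) : x = y := by
  ext i
  fin_cases i
  · exact h0
  · exact h1

lemma hidden_of_param {G : Finset Plane} {g b p : Plane} (t : ℝ) (hb : b ∈ G) (hbg : b ≠ g)
    (ht : 1 < t) (h : p = g + t • (b - g)) : Hidden G g p := by
  refine ⟨b, hb, hbg, 1 - 1 / t, 1 / t, ?_, by positivity, by ring, ?_⟩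
  · have : 1 / t < 1 := by rw [div_lt_one (by linarith)]; exact ht
    linarith
  · subst h
    have : t ≠ 0 := by positivity
    apply plane_ext <;> simp <;> field_simp <;> ring

lemma noDoubleShadow_of_kCovers {G : Finset Plane} {P : Set Plane} {k : ℕ}
    (hG : G.card = k + 1) (hc : KCovers G P k) : NoDoubleShadow G P := by
  classical
  intro p hp g hg g' hg' h h'
  by_contra hne
  have h1 := hc p hp
  have h2 : {x ∈ (G : Set Plane) | ¬ Hidden G x p} ⊆
      (((G.erase g).erase g' : Finset Plane) : Set Plane) := by
    intro x hx
    have hx1 : x ∈ G := hx.1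
    have hx2 : ¬ Hidden G x p := hx.2
    simp only [Finset.mem_coe, Finset.mem_erase]
    exact ⟨fun e => hx2 (e ▸ h'), fun e => hx2 (e ▸ h), hx1⟩
  have h3 := Set.ncard_le_ncard h2 (Finset.finite_toSet _)
  rw [Set.ncard_coe_finset,
    Finset.card_erase_of_mem (Finset.mem_erase.2 ⟨fun e => hne e.symm, hg'⟩),
    Finset.card_erase_of_mem hg] at h3
  have h4 : 0 < G.card - 1 := by
    rw [← Finset.card_erase_of_mem hg]
    exact Finset.card_pos.2 ⟨g', Finset.mem_erase.2 ⟨fun e => hne e.symm, hg'⟩⟩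
  omega

lemma orient_comb (a b x y z : Plane) (r s t : ℝ) (h : r + s + t = 1) :
    orient a b (r • x + s • y + t • z) = r * orient a b x + s * orient a b y + t * orient a b z := by
  obtain rfl : r = 1 - s - t := by linarith
  simp [orient]
  ring

lemma comb_mem {P : Set Plane} (hP : Convex ℝ P) {x y z : Plane} (hx : x ∈ P) (hy : y ∈ P)
    (hz : z ∈ P) {r s t : ℝ} (hr : 0 ≤ r) (hs : 0 ≤ s) (ht : 0 ≤ t) (h : r + s + t = 1) :
    r • x + s • y + t • z ∈ P := by
  have := hP.sum_mem (t := Finset.univ) (w := ![r, s, t]) (z := ![x, y, z])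
    (by intro i _; fin_cases i <;> simpa) (by simp [Fin.sum_univ_three, h])
    (by intro i _; fin_cases i <;> simpa)
  simpa [Fin.sum_univ_three] using this

lemma collinear_param {a b x : Plane} (hab : a ≠ b) (h : orient a b x = 0) :
    ∃ s : ℝ, x = a + s • (b - a) := by
  simp only [orient] at h
  by_cases h0 : b 0 = a 0
  · have h1 : b 1 - a 1 ≠ 0 := fun e => hab (plane_ext h0.symm (by linarith))
    refine ⟨(x 1 - a 1) / (b 1 - a 1), plane_ext ?_ ?_⟩
    · rw [h0] at h
      have : x 0 - a 0 = 0 := by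
        have : (b 1 - a 1) * (x 0 - a 0) = 0 := by linarith
        exact (mul_eq_zero.1 this).resolve_left h1
      simp [h0]; linarith
    · simp; field_simp; ring
  · have h1 : b 0 - a 0 ≠ 0 := fun e => h0 (by linarith)
    refine ⟨(x 0 - a 0) / (b 0 - a 0), plane_ext ?_ ?_⟩
    · simp; field_simp; ring
    · simp; field_simp; linarith

lemma barycentric {a b c : Plane} (h : 0 < orient a b c) (x : Plane) :
    x = (orient b c x / orient a b c) • a + (orient c a x / orient a b c) • b
      + (orient a b x / orient a b c) • c ∧
    orient b c x / orient a b c + orient c a x / orient a b c + orient a b x / orient a b c = 1 := by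
  have h' := h.ne'
  constructor
  · apply plane_ext <;> simp <;> field_simp <;> simp only [orient] <;> ring
  · field_simp
    simp only [orient]; ring

lemma orient_rot (a b c : Plane) : orient b c a = orient a b c := by
  simp only [orient]; ring

lemma orient_swap (a b c : Plane) : orient b a c = - orient a b c := by
  simp only [orient]; ring

lemma orient_param (a b c d : Plane) (s : ℝ) :
    orient c d (a + s • (b - a)) = (1 - s) * orient c d a + s * orient c d b := by
  simp [orient]; ring

/-! ### Hull vertices and hull edges -/

lemma Exposed.eq_of_mem_segment {G : Finset Plane} {x b c : Plane} (hx : Exposed G x)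
    (hb : b ∈ G) (hc : c ∈ G) (h : x ∈ segment ℝ b c) : x = b ∨ x = c := by
  obtain ⟨-, f₀, f₁, hf⟩ := hx
  by_contra! hne
  obtain ⟨s, t, hs, ht, hst, rfl⟩ := h
  have h1 := hf b hb hne.1.symm
  have h2 := hf c hc hne.2.symm
  simp only [PiLp.add_apply, PiLp.smul_apply, smul_eq_mul] at h1 h2
  obtain rfl : s = 1 - t := by linarith
  rcases le_total (f₀ * b 0 + f₁ * b 1) (f₀ * c 0 + f₁ * c 1) with h | h
  · nlinarith [mul_nonneg ht (sub_nonneg.2 h)]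
  · nlinarith [mul_nonneg hs (sub_nonneg.2 h)]

/-- Around a hull vertex the other guards are linearly ordered by angle: the slope with respect to
an exposing functional, which is positive on all of them, is an order-preserving key. -/
lemma Exposed.key {G : Finset Plane} {b : Plane} (hb : Exposed G b) :
    ∃ κ : Plane → ℝ, ∀ x ∈ G, ∀ y ∈ G, x ≠ b → y ≠ b →
      ((0 < orient b x y ↔ κ x < κ y) ∧ (0 ≤ orient b x y ↔ κ x ≤ κ y)) := by
  obtain ⟨-, f₀, f₁, hf⟩ := hb
  refine ⟨fun x => (f₀ * (x 1 - b 1) - f₁ * (x 0 - b 0)) / (f₀ * (x 0 - b 0) + f₁ * (x 1 - b 1)),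
    fun x hx y hy hxb hyb => ?_⟩
  have hpx : 0 < f₀ * (x 0 - b 0) + f₁ * (x 1 - b 1) := by linarith [hf x hx hxb]
  have hpy : 0 < f₀ * (y 0 - b 0) + f₁ * (y 1 - b 1) := by linarith [hf y hy hyb]
  have hff : 0 < f₀ ^ 2 + f₁ ^ 2 := by
    by_contra hcon
    have h0 : f₀ = 0 := by nlinarith [sq_nonneg f₀, sq_nonneg f₁]
    have h1 : f₁ = 0 := by nlinarith [sq_nonneg f₀, sq_nonneg f₁]
    simp [h0, h1] at hpx
  have key : (f₀ * (x 0 - b 0) + f₁ * (x 1 - b 1)) * (f₀ * (y 1 - b 1) - f₁ * (y 0 - b 0))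
      - (f₀ * (x 1 - b 1) - f₁ * (x 0 - b 0)) * (f₀ * (y 0 - b 0) + f₁ * (y 1 - b 1))
      = (f₀ ^ 2 + f₁ ^ 2) * orient b x y := by
    simp only [orient]; ring
  simp only
  rw [div_lt_div_iff₀ hpx hpy, div_le_div_iff₀ hpx hpy]
  constructor
  · rw [← mul_pos_iff_of_pos_left hff, ← key]
    constructor <;> intro h <;> linarith
  · rw [← mul_nonneg_iff_of_pos_left hff, ← key]
    constructor <;> intro h <;> linarith

/-- Finitely many values that are positive to first order are positive for a small parameter. -/
lemma exists_perturbation (G : Finset Plane) (A B : Plane → ℝ)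
    (h : ∀ g ∈ G, 0 < A g ∨ (A g = 0 ∧ 0 < B g)) : ∃ ε : ℝ, 0 < ε ∧ ∀ g ∈ G, 0 < A g + ε * B g := by
  have : ∀ᶠ ε in nhdsWithin (0 : ℝ) (Set.Ioi 0), ∀ g ∈ G, 0 < A g + ε * B g := by
    rw [Filter.eventually_all_finset]
    intro g hg
    rcases h g hg with h1 | ⟨h1, h2⟩
    · have hc : Filter.Tendsto (fun ε : ℝ => A g + ε * B g) (nhdsWithin 0 (Set.Ioi 0))
          (nhds (A g + 0 * B g)) :=
        (Continuous.tendsto (by fun_prop) 0).mono_left nhdsWithin_le_nhds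
      exact hc.eventually_const_lt (by simpa using h1)
    · filter_upwards [self_mem_nhdsWithin] with ε hε
      rw [h1, zero_add]
      exact mul_pos hε h2
  obtain ⟨ε, h1, h2⟩ := (this.and self_mem_nhdsWithin).exists
  exact ⟨ε, h2, h1⟩

lemma exists_exposed {G : Finset Plane} (hG : G.Nonempty) : ∃ b, Exposed G b := by
  -- a guard farthest from the origin is exposed by its own position vector
  obtain ⟨b, hb, hmax⟩ := G.exists_max_image (fun x => x 0 ^ 2 + x 1 ^ 2) hG
  refine ⟨b, hb, - b 0, - b 1, fun g hg hne => ?_⟩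
  have h1 := hmax g hg
  simp only at h1
  have h2 : 0 < (g 0 - b 0) ^ 2 + (g 1 - b 1) ^ 2 := by
    by_contra hcon
    refine hne (plane_ext ?_ ?_) <;> nlinarith [sq_nonneg (g 0 - b 0), sq_nonneg (g 1 - b 1)]
  nlinarith

/-- Every hull vertex has a successor in counterclockwise order. -/
lemma Exposed.exists_next {G : Finset Plane} {b : Plane} (hb : Exposed G b) (hG : 2 ≤ G.card) :
    ∃ c, Exposed G c ∧ HullEdge G b c := by
  classical
  obtain ⟨κ, hκ⟩ := hb.key
  obtain ⟨hbG, f₀, f₁, hf⟩ := hb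
  have hne : (G.erase b).Nonempty := by
    rw [← Finset.card_pos, Finset.card_erase_of_mem hbG]; omega
  obtain ⟨m, hm, hmin⟩ := (G.erase b).exists_min_image κ hne
  -- among the guards of least angle, take the farthest one
  obtain ⟨c, hc, hmax⟩ := ((G.erase b).filter (fun x => κ x = κ m)).exists_max_image
    (fun x => f₀ * x 0 + f₁ * x 1) ⟨m, by simp [hm]⟩
  simp only [Finset.mem_filter, Finset.mem_erase] at hc hmax hmin hm
  obtain ⟨⟨hcb, hcG⟩, hcm⟩ := hc
  have hfc := hf c hcG hcb
  have hge : ∀ g ∈ G, 0 ≤ orient b c g := by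
    intro g hg
    by_cases hgb : g = b
    · subst hgb; apply le_of_eq; simp only [orient]; ring
    · rw [(hκ c hcG g hg hcb hgb).2, hcm]
      exact hmin g ⟨hgb, hg⟩
  have hline : ∀ g ∈ G, g ≠ b → orient b c g = 0 →
      ∃ r : ℝ, 0 ≤ r ∧ r ≤ 1 ∧ g = b + r • (c - b) := by
    intro g hg hgb h0
    have h1 := (hκ c hcG g hg hcb hgb).1
    have hk : κ g = κ m := by
      have h2 : ¬ κ c < κ g := by rw [← h1, h0]; exact lt_irrefl _
      exact le_antisymm (by rw [← hcm]; exact not_lt.1 h2) (hmin g ⟨hgb, hg⟩)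
    have h3 := hmax g ⟨⟨hgb, hg⟩, hk⟩
    have h4 := hf g hg hgb
    obtain ⟨r, rfl⟩ := collinear_param hcb.symm h0
    simp only [PiLp.add_apply, PiLp.smul_apply, PiLp.sub_apply, smul_eq_mul] at h3 h4
    refine ⟨r, ?_, ?_, rfl⟩
    · by_contra hr
      nlinarith
    · by_contra hr
      nlinarith
  refine ⟨c, ⟨hcG, ?_⟩, hbG, hcG, hcb.symm, fun g hg => ⟨hge g hg, fun h0 => ?_⟩⟩
  · -- tilting the supporting functional of the edge slightly exposes its endpoint
    obtain ⟨ε, hε, h⟩ := exists_perturbation (G.erase c) (fun g => orient b c g)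
      (fun g => (f₀ * c 0 + f₁ * c 1) - (f₀ * g 0 + f₁ * g 1)) (by
        intro g hg
        rw [Finset.mem_erase] at hg
        rcases (hge g hg.2).lt_or_eq with h | h
        · exact Or.inl h
        · refine Or.inr ⟨h.symm, ?_⟩
          by_cases hgb : g = b
          · subst hgb; linarith
          · obtain ⟨r, hr0, hr1, rfl⟩ := hline g hg.2 hgb h.symm
            have hr : r ≠ 1 := by
              rintro rfl
              exact hg.1 (by simp)
            have : r < 1 := lt_of_le_of_ne hr1 hr
            simp only [PiLp.add_apply, PiLp.smul_apply, PiLp.sub_apply, smul_eq_mul]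
            nlinarith)
    refine ⟨-(c 1 - b 1) - ε * f₀, (c 0 - b 0) - ε * f₁, fun g hg hgc => ?_⟩
    have h1 := h g (Finset.mem_erase.2 ⟨hgc, hg⟩)
    simp only [orient] at h1
    nlinarith
  · by_cases hgb : g = b
    · subst hgb; exact left_mem_segment ℝ _ _
    · obtain ⟨r, hr0, hr1, rfl⟩ := hline g hg hgb h0
      refine ⟨1 - r, r, by linarith, hr0, by ring, ?_⟩
      apply plane_ext <;> simp <;> ring

/-- Hull vertices other than the endpoints are strictly to the left of a hull edge. -/
lemma HullEdge.orient_pos {G : Finset Plane} {b c x : Plane} (h : HullEdge G b c)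
    (hx : Exposed G x) (hxb : x ≠ b) (hxc : x ≠ c) : 0 < orient b c x := by
  obtain ⟨hb, hc, -, h⟩ := h
  refine lt_of_le_of_ne (h x hx.1).1 fun e => ?_
  rcases hx.eq_of_mem_segment hb hc ((h x hx.1).2 e.symm) with h | h
  · exact hxb h
  · exact hxc h

/-- The hull edge leaving `b` is determined by having all guards weakly on its left. -/
lemma HullEdge.next_unique {G : Finset Plane} {b c c' : Plane} (h : HullEdge G b c)
    (hc' : Exposed G c') (hbc' : b ≠ c') (h' : ∀ g ∈ G, 0 ≤ orient b c' g) : c' = c := by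
  by_contra hne
  have h1 := h.orient_pos hc' hbc'.symm hne
  have h2 := h' c h.2.1
  have : orient b c' c = - orient b c c' := by simp only [orient]; ring
  linarith

lemma HullEdge.prev_unique {G : Finset Plane} {b b' c : Plane} (h : HullEdge G b c)
    (h' : HullEdge G b' c) (hb' : Exposed G b') : b' = b := by
  by_contra hne
  have h1 := h.orient_pos hb' hne h'.2.2.1
  have h2 := (h'.2.2.2 b h.1).1
  have : orient b' c b = - orient b c b' := by simp only [orient]; ring
  linarith

/-! ### Hull edges visible from a point of the polygon -/

/-- If `w` lies on the outer side of two disjoint hull edges `a b` and `c d`, then the lines through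
them meet inside the triangle `w b c`, at a point which lies in two shadows. -/
lemma visible_edges_meet {G : Finset Plane} {P : Set Plane} (hP : Convex ℝ P)
    (hGP : ∀ g ∈ G, g ∈ P) (hN : NoDoubleShadow G P) {a b c d w : Plane} (hw : w ∈ P)
    (ha : Exposed G a) (hb : Exposed G b) (hc : Exposed G c) (hd : Exposed G d)
    (hab : HullEdge G a b) (hcd : HullEdge G c d) (hac : a ≠ c) (had : a ≠ d) (hbc : b ≠ c)
    (hbd : b ≠ d) (h1 : orient a b w ≤ 0) (h2 : orient c d w ≤ 0) : False := by
  have A := hab.orient_pos hc hac.symm hbc.symm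
  have A' := hab.orient_pos hd had.symm hbd.symm
  have C := hcd.orient_pos ha hac had
  have C' := hcd.orient_pos hb hbc hbd
  have hsum : orient a b c + orient c d a = orient a b d + orient c d b := by
    simp only [orient]; ring
  set S := orient a b c * orient c d b + (- orient c d w) * orient a b c
    + (- orient a b w) * orient c d b with hS
  have hSpos : 0 < S := by
    have := mul_pos A C'
    have := mul_nonneg (neg_nonneg.2 h2) A.le
    have := mul_nonneg (neg_nonneg.2 h1) C'.le
    linarith
  -- the weights are those for which `x` lies on both lines
  set x := (orient a b c * orient c d b / S) • w + ((- orient c d w) * orient a b c / S) • b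
    + ((- orient a b w) * orient c d b / S) • c with hx
  have hone : orient a b c * orient c d b / S + (- orient c d w) * orient a b c / S
    + (- orient a b w) * orient c d b / S = 1 := by
    rw [← add_div, ← add_div, ← hS, div_self hSpos.ne']
  have hxP : x ∈ P := comb_mem hP hw (hGP b hb.1) (hGP c hc.1)
    (div_nonneg (mul_pos A C').le hSpos.le)
    (div_nonneg (mul_nonneg (neg_nonneg.2 h2) A.le) hSpos.le)
    (div_nonneg (mul_nonneg (neg_nonneg.2 h1) C'.le) hSpos.le) hone
  have hxab : orient a b x = 0 := by
    rw [hx, orient_comb _ _ _ _ _ _ _ _ hone]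
    have : orient a b b = 0 := by simp only [orient]; ring
    rw [this]; field_simp; ring
  have hxcd : orient c d x = 0 := by
    rw [hx, orient_comb _ _ _ _ _ _ _ _ hone]
    have : orient c d c = 0 := by simp only [orient]; ring
    rw [this]; field_simp; ring
  clear_value x
  obtain ⟨s, hs⟩ := collinear_param hab.2.2.1 hxab
  obtain ⟨t, ht⟩ := collinear_param hcd.2.2.1 hxcd
  have es : (1 - s) * orient c d a + s * orient c d b = 0 := by
    rw [← orient_param, ← hs, hxcd]
  have et : (1 - t) * orient a b c + t * orient a b d = 0 := by
    rw [← orient_param, ← ht, hxab]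
  have rev : ∀ (p q : Plane) (r : ℝ), p + r • (q - p) = q + (1 - r) • (p - q) := by
    intro p q r; apply plane_ext <;> simp <;> ring
  rcases lt_trichotomy (orient c d b) (orient c d a) with h | h | h
  · have s1 : 1 < s := by
      by_contra hcon
      nlinarith [mul_nonneg (sub_nonneg.2 (not_lt.1 hcon)) (sub_nonneg.2 h.le)]
    have t0 : 1 < 1 - t := by
      by_contra hcon
      have : 0 ≤ t := by linarith
      nlinarith [mul_nonneg this (show 0 ≤ orient a b d - orient a b c by linarith)]
    exact had (hN x hxP a ha.1 d hd.1 (hidden_of_param s hb.1 hab.2.2.1.symm s1 hs)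
      (hidden_of_param (1 - t) hc.1 hcd.2.2.1 t0 (by rw [ht, rev])))
  · rw [h] at es; nlinarith
  · have s1 : 1 < 1 - s := by
      by_contra hcon
      have : 0 ≤ s := by linarith
      nlinarith [mul_nonneg this (sub_nonneg.2 h.le)]
    have t0 : 1 < t := by
      by_contra hcon
      nlinarith [mul_nonneg (sub_nonneg.2 (not_lt.1 hcon))
        (show 0 ≤ orient a b c - orient a b d by linarith)]
    exact hbc (hN x hxP b hb.1 c hc.1
      (hidden_of_param (1 - s) ha.1 hab.2.2.1 s1 (by rw [hs, rev]))
      (hidden_of_param t hd.1 hcd.2.2.1.symm t0 ht))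

/-! ### Two guards in a triangle of guards -/

/-- The lines through `b, d` and through `c, e` meet beyond `d` and `e`, at the point whose
barycentric coordinates are proportional to `d₁ e₁, d₁ e₂, d₃ e₁`; it lies in the triangle, and in
two shadows. -/
lemma triangle_cross {G : Finset Plane} {P : Set Plane} (hP : Convex ℝ P)
    (hGP : ∀ g ∈ G, g ∈ P) (hN : NoDoubleShadow G P) {a b c d e : Plane}
    (ha : a ∈ G) (hb : b ∈ G) (hc : c ∈ G) (hd : d ∈ G) (he : e ∈ G)
    (hbc : b ≠ c) (hdb : d ≠ b) (hec : e ≠ c)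
    {d₁ d₂ d₃ e₁ e₂ e₃ : ℝ} (hd1 : 0 ≤ d₁) (_ : 0 ≤ d₂) (hd3 : 0 ≤ d₃) (hds : d₁ + d₂ + d₃ = 1)
    (he1 : 0 ≤ e₁) (he2 : 0 ≤ e₂) (he3 : 0 ≤ e₃) (hes : e₁ + e₂ + e₃ = 1)
    (hdd : d = d₁ • a + d₂ • b + d₃ • c) (hee : e = e₁ • a + e₂ • b + e₃ • c)
    (h2 : d₁ * e₂ < d₂ * e₁) (h3 : d₃ * e₁ < d₁ * e₃) : False := by
  have e1 : 0 < e₁ := by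
    rcases he1.lt_or_eq with h | h
    · exact h
    · rw [← h] at h2; nlinarith [mul_nonneg hd1 he2]
  have d1 : 0 < d₁ := by
    rcases hd1.lt_or_eq with h | h
    · exact h
    · rw [← h] at h3; nlinarith [mul_nonneg hd3 he1]
  set S := d₁ * e₁ + d₁ * e₂ + d₃ * e₁ with hS
  have hSpos : 0 < S := by
    have := mul_pos d1 e1
    have := mul_nonneg hd1 he2
    have := mul_nonneg hd3 he1
    linarith
  have hxP : (d₁ * e₁ / S) • a + (d₁ * e₂ / S) • b + (d₃ * e₁ / S) • c ∈ P :=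
    comb_mem hP (hGP a ha) (hGP b hb) (hGP c hc) (by positivity) (by positivity) (by positivity)
      (by rw [← add_div, ← add_div, ← hS, div_self hSpos.ne'])
  refine hbc (hN _ hxP b hb c hc (hidden_of_param (e₁ / S) hd hdb ?_ ?_)
    (hidden_of_param (d₁ / S) he hec ?_ ?_))
  · rw [one_lt_div hSpos, hS]
    obtain rfl : d₃ = 1 - d₁ - d₂ := by linarith
    nlinarith
  · have hSne := hSpos.ne'
    obtain rfl : d₃ = 1 - d₁ - d₂ := by linarith
    rw [hdd]
    apply plane_ext <;> simp <;> field_simp <;> rw [hS] <;> ring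
  · rw [one_lt_div hSpos, hS]
    obtain rfl : e₃ = 1 - e₁ - e₂ := by linarith
    nlinarith
  · have hSne := hSpos.ne'
    obtain rfl : e₃ = 1 - e₁ - e₂ := by linarith
    rw [hee]
    apply plane_ext <;> simp <;> field_simp <;> rw [hS] <;> ring

/-- Two points of a triangle on a common ray from the vertex `a`. -/
lemma triangle_ray {a b c d e : Plane}
    {d₁ d₂ d₃ e₁ e₂ e₃ : ℝ} (hd2 : 0 ≤ d₂) (hd3 : 0 ≤ d₃) (hds : d₁ + d₂ + d₃ = 1)
    (he2 : 0 ≤ e₂) (he3 : 0 ≤ e₃) (hes : e₁ + e₂ + e₃ = 1)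
    (hdd : d = d₁ • a + d₂ • b + d₃ • c) (hee : e = e₁ • a + e₂ • b + e₃ • c)
    (hda : d ≠ a) (hea : e ≠ a) (hde : d ≠ e) (h : d₂ * e₃ = d₃ * e₂) :
    (∃ t : ℝ, 1 < t ∧ e = a + t • (d - a)) ∨ (∃ t : ℝ, 1 < t ∧ d = a + t • (e - a)) := by
  have hd : 0 < d₂ + d₃ := by
    rcases (add_nonneg hd2 hd3).lt_or_eq with h | h
    · exact h
    · refine (hda ?_).elim
      obtain rfl : d₂ = 0 := by linarith
      obtain rfl : d₃ = 0 := by linarith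
      obtain rfl : d₁ = 1 := by linarith
      simpa using hdd
  have he : 0 < e₂ + e₃ := by
    rcases (add_nonneg he2 he3).lt_or_eq with h | h
    · exact h
    · refine (hea ?_).elim
      obtain rfl : e₂ = 0 := by linarith
      obtain rfl : e₃ = 0 := by linarith
      obtain rfl : e₁ = 1 := by linarith
      simpa using hee
  obtain rfl : d₁ = 1 - d₂ - d₃ := by linarith
  obtain rfl : e₁ = 1 - e₂ - e₃ := by linarith
  have k2 : e₂ * (d₂ + d₃) = d₂ * (e₂ + e₃) := by linarith
  have k3 : e₃ * (d₂ + d₃) = d₃ * (e₂ + e₃) := by linarith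
  have E2 : e₂ = (e₂ + e₃) / (d₂ + d₃) * d₂ := by field_simp; linarith
  have E3 : e₃ = (e₂ + e₃) / (d₂ + d₃) * d₃ := by field_simp; linarith
  have D2 : d₂ = (d₂ + d₃) / (e₂ + e₃) * e₂ := by field_simp; linarith
  have D3 : d₃ = (d₂ + d₃) / (e₂ + e₃) * e₃ := by field_simp; linarith
  rcases lt_trichotomy (d₂ + d₃) (e₂ + e₃) with hlt | heq | hlt
  · left
    refine ⟨(e₂ + e₃) / (d₂ + d₃), by rwa [one_lt_div hd], ?_⟩
    generalize (e₂ + e₃) / (d₂ + d₃) = t at E2 E3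
    subst hdd hee
    rw [E2, E3]
    apply plane_ext <;> simp <;> ring
  · refine (hde ?_).elim
    rw [heq, div_self he.ne', one_mul] at D2 D3
    rw [hdd, hee, D2, D3]
  · right
    refine ⟨(d₂ + d₃) / (e₂ + e₃), by rwa [one_lt_div he], ?_⟩
    generalize (d₂ + d₃) / (e₂ + e₃) = t at D2 D3
    subst hdd hee
    rw [D2, D3]
    apply plane_ext <;> simp <;> ring

/-- If a guard `d` lies strictly between the guards `a` and `e`, where `e` lies in the triangle
`a b c`, then `P` ends at `e` on the ray from `a`. Hence `e` lies on the side `b c` and `P` does not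
extend beyond that side. -/
lemma side_of_ray {G : Finset Plane} {P : Set Plane} (hP : Convex ℝ P)
    (hGP : ∀ g ∈ G, g ∈ P) (hN : NoDoubleShadow G P) {a b c d e : Plane}
    (ha : a ∈ G) (hb : b ∈ G) (hc : c ∈ G) (hd : d ∈ G) (he : e ∈ G)
    (habc : 0 < orient a b c) (hda : d ≠ a) (hea : e ≠ a) (heb : e ≠ b) (hec : e ≠ c)
    {e₁ e₂ e₃ : ℝ} (he1 : 0 ≤ e₁) (he2 : 0 ≤ e₂) (he3 : 0 ≤ e₃) (hes : e₁ + e₂ + e₃ = 1)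
    (hee : e = e₁ • a + e₂ • b + e₃ • c) {t : ℝ} (ht : 1 < t) (hray : e = a + t • (d - a)) :
    e ∈ openSegment ℝ b c ∧ ∀ w ∈ P, 0 ≤ orient b c w := by
  have hde : d ≠ e := by
    rintro rfl
    have h : (t - 1) • (d - a) = 0 := by
      rw [sub_smul, one_smul, sub_eq_zero, eq_sub_iff_add_eq, add_comm, ← hray]
    rcases smul_eq_zero.1 h with h | h
    · linarith
    · exact hda (sub_eq_zero.1 h)
  have hend : ∀ r : ℝ, 0 < r → e + r • (e - a) ∉ P := by
    intro r hr hmem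
    refine hda.symm (hN _ hmem a ha d hd (hidden_of_param (1 + r) he hea (by linarith) ?_)
      (hidden_of_param (1 + r * t / (t - 1)) he hde.symm ?_ ?_))
    · apply plane_ext <;> simp <;> ring
    · have : 0 < r * t / (t - 1) := div_pos (mul_pos hr (by linarith)) (by linarith)
      linarith
    · have : t - 1 ≠ 0 := by linarith
      rw [hray]
      apply plane_ext <;> simp <;> field_simp <;> ring
  have h10 : e₁ = 0 := by
    by_contra hne
    have hpos : 0 < e₁ := lt_of_le_of_ne he1 (Ne.symm hne)
    have h23 : 0 < e₂ + e₃ := by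
      by_contra hcon
      have h2 : e₂ = 0 := by linarith
      have h3 : e₃ = 0 := by linarith
      have h1 : e₁ = 1 := by linarith
      rw [h1, h2, h3] at hee
      exact hea (by simpa using hee)
    refine hend (e₁ / (e₂ + e₃)) (div_pos hpos h23) ?_
    have := comb_mem hP (hGP a ha) (hGP b hb) (hGP c hc) (r := 0) (s := e₂ / (e₂ + e₃))
      (t := e₃ / (e₂ + e₃)) le_rfl (by positivity) (by positivity) (by field_simp; ring)
    convert this using 1
    have : e₂ + e₃ ≠ 0 := h23.ne'
    obtain rfl : e₁ = 1 - e₂ - e₃ := by linarith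
    rw [hee]
    apply plane_ext <;> simp <;> field_simp <;> ring
  subst h10
  have p2 : 0 < e₂ := by
    refine lt_of_le_of_ne he2 fun h => hec ?_
    subst h
    obtain rfl : e₃ = 1 := by linarith
    simpa using hee
  have p3 : 0 < e₃ := by
    refine lt_of_le_of_ne he3 fun h => heb ?_
    subst h
    obtain rfl : e₂ = 1 := by linarith
    simpa using hee
  refine ⟨⟨e₂, e₃, p2, p3, by linarith, by rw [hee]; simp⟩, fun w hw => ?_⟩
  by_contra! hneg
  obtain ⟨hwe, hws⟩ := barycentric habc w
  set w₁ := orient b c w / orient a b c with hw1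
  set w₂ := orient c a w / orient a b c
  set w₃ := orient a b w / orient a b c
  have w1 : w₁ < 0 := div_neg_of_neg_of_pos hneg habc
  clear_value w₁ w₂ w₃
  -- a small multiple of `w` added to points of the side `b c` reaches past `e` on the ray from `a`
  have small : ∀ β K : ℝ, 0 < β → ∀ l : ℝ, 0 < l → l ≤ β / (|K| + 1) → 0 ≤ β - l * K := by
    intro β K hβ l hl h
    rw [le_div_iff₀ (by positivity)] at h
    nlinarith [mul_le_mul_of_nonneg_left (le_abs_self K) hl.le]
  obtain ⟨l, hl, hl2, hl3⟩ : ∃ l : ℝ, 0 < l ∧ l ≤ e₂ / (|w₁ * e₂ + w₂| + 1) ∧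
      l ≤ e₃ / (|w₁ * e₃ + w₃| + 1) :=
    ⟨min (e₂ / (|w₁ * e₂ + w₂| + 1)) (e₃ / (|w₁ * e₃ + w₃| + 1)),
      lt_min (by positivity) (by positivity), min_le_left _ _, min_le_right _ _⟩
  have q2 := small e₂ _ p2 l hl hl2
  have q3 := small e₃ _ p3 l hl hl3
  refine hend (-(l * w₁)) (by nlinarith) ?_
  have := comb_mem hP hw (hGP b hb) (hGP c hc) hl.le q2 q3 (by
    obtain rfl : e₃ = 1 - e₂ := by linarith
    obtain rfl : w₃ = 1 - w₁ - w₂ := by linarith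
    ring)
  convert this using 1
  rw [hee, hwe]
  obtain rfl : e₃ = 1 - e₂ := by linarith
  obtain rfl : w₃ = 1 - w₁ - w₂ := by linarith
  apply plane_ext <;> simp <;> ring

/-- `P` lies in the closed half-plane to the left of `b c`, and `e` is strictly
between `b` and `c`. -/
def GuardedSide (P : Set Plane) (e b c : Plane) : Prop :=
  e ∈ openSegment ℝ b c ∧ ∀ w ∈ P, 0 ≤ orient b c w

lemma side_of_collinear {G : Finset Plane} {P : Set Plane} (hP : Convex ℝ P)
    (hGP : ∀ g ∈ G, g ∈ P) (hN : NoDoubleShadow G P) {a b c d e : Plane}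
    (ha : a ∈ G) (hb : b ∈ G) (hc : c ∈ G) (hd : d ∈ G) (he : e ∈ G)
    (habc : 0 < orient a b c) (hda : d ≠ a) (hdb : d ≠ b) (hdc : d ≠ c)
    (hea : e ≠ a) (heb : e ≠ b) (hec : e ≠ c) (hde : d ≠ e)
    {d₁ d₂ d₃ e₁ e₂ e₃ : ℝ} (hd1 : 0 ≤ d₁) (hd2 : 0 ≤ d₂) (hd3 : 0 ≤ d₃) (hds : d₁ + d₂ + d₃ = 1)
    (he1 : 0 ≤ e₁) (he2 : 0 ≤ e₂) (he3 : 0 ≤ e₃) (hes : e₁ + e₂ + e₃ = 1)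
    (hdd : d = d₁ • a + d₂ • b + d₃ • c) (hee : e = e₁ • a + e₂ • b + e₃ • c)
    (h : d₂ * e₃ = d₃ * e₂) : GuardedSide P d b c ∨ GuardedSide P e b c := by
  rcases triangle_ray hd2 hd3 hds he2 he3 hes hdd hee hda hea hde h with ⟨t, ht, hr⟩ | ⟨t, ht, hr⟩
  · exact Or.inr (side_of_ray hP hGP hN ha hb hc hd he habc hda hea heb hec he1 he2 he3 hes hee
      ht hr)
  · exact Or.inl (side_of_ray hP hGP hN ha hb hc he hd habc hea hda hdb hdc hd1 hd2 hd3 hds hdd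
      ht hr)

/-- A triangle of guards contains at most one further guard, except when one of two further guards
lies on a side of the triangle that bounds `P`. -/
lemma triangle_two_guards {G : Finset Plane} {P : Set Plane} (hP : Convex ℝ P)
    (hGP : ∀ g ∈ G, g ∈ P) (hN : NoDoubleShadow G P) {a b c d e : Plane}
    (ha : a ∈ G) (hb : b ∈ G) (hc : c ∈ G) (hd : d ∈ G) (he : e ∈ G)
    (habc : 0 < orient a b c) (hda : d ≠ a) (hdb : d ≠ b) (hdc : d ≠ c)
    (hea : e ≠ a) (heb : e ≠ b) (hec : e ≠ c) (hde : d ≠ e)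
    (hd1 : 0 ≤ orient b c d) (hd2 : 0 ≤ orient c a d) (hd3 : 0 ≤ orient a b d)
    (he1 : 0 ≤ orient b c e) (he2 : 0 ≤ orient c a e) (he3 : 0 ≤ orient a b e) :
    ∃ x ∈ ({d, e} : Set Plane), GuardedSide P x b c ∨ GuardedSide P x c a ∨ GuardedSide P x a b := by
  obtain ⟨hdd, hds⟩ := barycentric habc d
  obtain ⟨hee, hes⟩ := barycentric habc e
  replace hd1 := div_nonneg hd1 habc.le
  replace hd2 := div_nonneg hd2 habc.le
  replace hd3 := div_nonneg hd3 habc.le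
  replace he1 := div_nonneg he1 habc.le
  replace he2 := div_nonneg he2 habc.le
  replace he3 := div_nonneg he3 habc.le
  generalize orient b c d / orient a b c = d₁ at *
  generalize orient c a d / orient a b c = d₂ at *
  generalize orient a b d / orient a b c = d₃ at *
  generalize orient b c e / orient a b c = e₁ at *
  generalize orient c a e / orient a b c = e₂ at *
  generalize orient a b e / orient a b c = e₃ at *
  have hbca : 0 < orient b c a := by rwa [orient_rot]
  have hcab : 0 < orient c a b := by rwa [orient_rot, orient_rot]
  have hab : a ≠ b := by rintro rfl; simp [orient] at habc
  have hbc : b ≠ c := by rintro rfl; simp [orient] at hbca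
  have hca : c ≠ a := by rintro rfl; simp [orient] at hcab
  have rot : ∀ (p q r : Plane), p + q + r = q + r + p := fun p q r => by abel
  have hdd' := hdd.trans (rot _ _ _)
  have hdd'' := hdd'.trans (rot _ _ _)
  have hee' := hee.trans (rot _ _ _)
  have hee'' := hee'.trans (rot _ _ _)
  have hds' : d₂ + d₃ + d₁ = 1 := by linarith
  have hds'' : d₃ + d₁ + d₂ = 1 := by linarith
  have hes' : e₂ + e₃ + e₁ = 1 := by linarith
  have hes'' : e₃ + e₁ + e₂ = 1 := by linarith
  have out : GuardedSide P d b c ∨ GuardedSide P e b c ∨ GuardedSide P d c a ∨ GuardedSide P e c a ∨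
      GuardedSide P d a b ∨ GuardedSide P e a b := by
    by_cases m1 : d₂ * e₃ = d₃ * e₂
    · have := side_of_collinear hP hGP hN ha hb hc hd he habc hda hdb hdc hea heb hec hde
        hd1 hd2 hd3 hds he1 he2 he3 hes hdd hee m1
      tauto
    by_cases m2 : d₃ * e₁ = d₁ * e₃
    · have := side_of_collinear hP hGP hN hb hc ha hd he hbca hdb hdc hda heb hec hea hde
        hd2 hd3 hd1 hds' he2 he3 he1 hes' hdd' hee' m2
      tauto
    by_cases m3 : d₁ * e₂ = d₂ * e₁
    · have := side_of_collinear hP hGP hN hc ha hb hd he hcab hdc hda hdb hec hea heb hde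
        hd3 hd1 hd2 hds'' he3 he1 he2 hes'' hdd'' hee'' m3
      tauto
    -- among three nonzero signs two agree, so two of the segments from vertices cross
    exfalso
    rcases lt_or_gt_of_ne m1 with m1 | m1 <;> rcases lt_or_gt_of_ne m2 with m2 | m2
    · exact triangle_cross hP hGP hN hc ha hb hd he hab hda heb hd3 hd1 hd2 hds'' he3 he1 he2 hes''
        hdd'' hee'' (by linarith) (by linarith)
    · rcases lt_or_gt_of_ne m3 with m3 | m3
      · exact triangle_cross hP hGP hN hb hc ha hd he hca hdc hea hd2 hd3 hd1 hds' he2 he3 he1 hes'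
          hdd' hee' (by linarith) (by linarith)
      · exact triangle_cross hP hGP hN ha hb hc he hd hbc heb hdc he1 he2 he3 hes hd1 hd2 hd3 hds
          hee hdd (by linarith) (by linarith)
    · rcases lt_or_gt_of_ne m3 with m3 | m3
      · exact triangle_cross hP hGP hN ha hb hc hd he hbc hdb hec hd1 hd2 hd3 hds he1 he2 he3 hes
          hdd hee (by linarith) (by linarith)
      · exact triangle_cross hP hGP hN hb hc ha he hd hca hec hda he2 he3 he1 hes' hd2 hd3 hd1 hds'
          hee' hdd' (by linarith) (by linarith)
    · exact triangle_cross hP hGP hN hc ha hb he hd hab hea hdb he3 he1 he2 hes'' hd3 hd1 hd2 hds''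
        hee'' hdd'' (by linarith) (by linarith)
  rcases out with h | h | h | h | h | h
  · exact ⟨d, by simp, Or.inl h⟩
  · exact ⟨e, by simp, Or.inl h⟩
  · exact ⟨d, by simp, Or.inr (Or.inl h)⟩
  · exact ⟨e, by simp, Or.inr (Or.inl h)⟩
  · exact ⟨d, by simp, Or.inr (Or.inr h)⟩
  · exact ⟨e, by simp, Or.inr (Or.inr h)⟩

/-! ### Counting -/

/-- A chord between two guards carries at most one further guard, since otherwise its endpoint is in
two shadows. -/
lemma openSegment_guard_unique {G : Finset Plane} {P : Set Plane} (hGP : ∀ g ∈ G, g ∈ P)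
    (hN : NoDoubleShadow G P) {a b g g' : Plane} (ha : a ∈ G) (hb : b ∈ G) (hab : a ≠ b)
    (hg : g ∈ G) (hg' : g' ∈ G) (h : g ∈ openSegment ℝ a b) (h' : g' ∈ openSegment ℝ a b) :
    g = g' := by
  obtain ⟨t, ⟨ht0, ht1⟩, rfl⟩ := (openSegment_eq_image' ℝ a b).subset h
  obtain ⟨s, ⟨hs0, hs1⟩, rfl⟩ := (openSegment_eq_image' ℝ a b).subset h'
  by_contra hne
  have main : ∀ t s : ℝ, 0 < t → t < s → s < 1 → a + t • (b - a) ∈ G → a + s • (b - a) ∈ G →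
      False := by
    intro t s ht hts hs hgt hgs
    have hsub : b - a ≠ 0 := sub_ne_zero.2 hab.symm
    have ne_a : ∀ r : ℝ, 0 < r → a + r • (b - a) ≠ a := by
      intro r hr e
      rcases smul_eq_zero.1 (add_eq_left.1 e) with e | e
      · exact hr.ne' e
      · exact hsub e
    have ne_ts : a + s • (b - a) ≠ a + t • (b - a) := by
      intro e
      have := smul_left_injective ℝ hsub (add_left_cancel e)
      linarith
    refine ne_a t ht (hN b (hGP b hb) _ hgt a ha
      (hidden_of_param ((1 - t) / (s - t)) hgs ne_ts ?_ ?_)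
      (hidden_of_param (1 / s) hgs (ne_a s (by linarith)) ?_ ?_))
    · rw [one_lt_div (by linarith)]; linarith
    · have : s - t ≠ 0 := by linarith
      apply plane_ext <;> simp <;> field_simp <;> ring
    · rw [one_lt_div (by linarith)]; linarith
    · have : s ≠ 0 := by linarith
      apply plane_ext <;> simp <;> field_simp <;> ring
  rcases lt_trichotomy t s with hlt | heq | hlt
  · exact main t s ht0 hlt hs1 hg hg'
  · exact hne (by rw [heq])
  · exact main s t hs0 hlt ht1 hg' hg

lemma mem_openSegment_of_segment {a b x : Plane} (h : x ∈ segment ℝ a b) (ha : x ≠ a)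
    (hb : x ≠ b) : x ∈ openSegment ℝ a b :=
  mem_openSegment_of_ne_left_right ha.symm hb.symm h

/-- Two hull edges `b c` and `c b` would make all guards collinear. -/
lemma not_two_cycle {G : Finset Plane} {P : Set Plane} (hGP : ∀ g ∈ G, g ∈ P)
    (hN : NoDoubleShadow G P) (hG : 4 ≤ G.card) {b c : Plane} (h : HullEdge G b c)
    (h' : HullEdge G c b) : False := by
  classical
  have h1 : ((G.erase b).erase c).card ≤ 1 := by
    rw [Finset.card_le_one]
    have seg : ∀ x ∈ (G.erase b).erase c, x ∈ openSegment ℝ b c := by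
      intro x hx
      simp only [Finset.mem_erase] at hx
      have h1 := (h'.2.2.2 x hx.2.2).1
      rw [orient_swap] at h1
      have h2 := h.2.2.2 x hx.2.2
      exact mem_openSegment_of_segment (h2.2 (le_antisymm (by linarith) h2.1)) hx.2.1 hx.1
    intro x hx y hy
    exact openSegment_guard_unique hGP hN h.1 h.2.1 h.2.2.1
      (Finset.mem_of_mem_erase (Finset.mem_of_mem_erase hx))
      (Finset.mem_of_mem_erase (Finset.mem_of_mem_erase hy)) (seg x hx) (seg y hy)
  have h2 := Finset.pred_card_le_card_erase (s := G) (a := b)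
  have h3 := Finset.pred_card_le_card_erase (s := G.erase b) (a := c)
  omega

/-- An open half-plane together with one point of its closure is convex. -/
lemma convex_outer (b c w : Plane) (hw : 0 ≤ orient b c w) :
    Convex ℝ {x | 0 < orient b c x ∨ x = w} := by
  intro x hx y hy s t hs ht hst
  have e : orient b c (s • x + t • y) = s * orient b c x + t * orient b c y := by
    have := orient_comb b c x y y s t 0 (by linarith)
    simpa using this
  have nn : ∀ z, (0 < orient b c z ∨ z = w) → 0 ≤ orient b c z := by
    rintro z (h | rfl)
    · exact h.le
    · exact hw
  have nx := nn x hx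
  have ny := nn y hy
  rcases hs.lt_or_eq with hs0 | rfl
  · rcases ht.lt_or_eq with ht0 | rfl
    · rcases hx with hx | rfl
      · left; rw [e]; nlinarith [mul_pos hs0 hx, mul_nonneg ht ny]
      · rcases hy with hy | rfl
        · left; rw [e]; nlinarith [mul_pos ht0 hy, mul_nonneg hs nx]
        · right; rw [← add_smul, hst, one_smul]
    · obtain rfl : s = 1 := by linarith
      simpa using hx
  · obtain rfl : t = 1 := by linarith
    simpa using hy

lemma exists_outer_vertex {V : Finset Plane} {b c : Plane}
    (hb : b ∈ convexHull ℝ (V : Set Plane)) : ∃ w ∈ V, orient b c w ≤ 0 := by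
  by_contra! hcon
  have hne : (V : Set Plane).Nonempty := convexHull_nonempty_iff.1 ⟨b, hb⟩
  obtain ⟨w, hw⟩ := hne
  have hw' : w ∈ V := hw
  have h := convexHull_min (fun x hx => Or.inl (hcon x hx)) (convex_outer b c w (hcon w hw').le) hb
  have h0 : orient b c b = 0 := by simp only [orient]; ring
  rcases h with h | h
  · linarith
  · have := hcon w hw'
    rw [← h] at this
    linarith

/-- If the line `b c` bounds the polygon, then it contains two vertices of the polygon. -/
lemma two_outer_vertices {V : Finset Plane} {b c : Plane} (hbc : b ≠ c)
    (hb : b ∈ convexHull ℝ (V : Set Plane)) (hc : c ∈ convexHull ℝ (V : Set Plane))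
    (hV : ∀ w ∈ V, 0 ≤ orient b c w) : 2 ≤ (V.filter (fun w => orient b c w ≤ 0)).card := by
  obtain ⟨w, hw, hw0⟩ := exists_outer_vertex (c := c) hb
  by_contra hcon
  have h1 : (V.filter (fun w => orient b c w ≤ 0)).card ≤ 1 := by omega
  rw [Finset.card_le_one] at h1
  have hsub := convexHull_min (s := (V : Set Plane)) (fun x hx => by
    have hx' : x ∈ V := hx
    by_cases h : 0 < orient b c x
    · exact Or.inl h
    · exact Or.inr (h1 x (by simp [hx', not_lt.1 h]) w (by simp [hw, hw0])))
    (convex_outer b c w (hV w hw))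
  have hb0 : orient b c b = 0 := by simp only [orient]; ring
  have hc0 : orient b c c = 0 := by simp only [orient]; ring
  have hb' := (hsub hb).resolve_left (by rw [hb0]; exact lt_irrefl _)
  have hc' := (hsub hc).resolve_left (by rw [hc0]; exact lt_irrefl _)
  exact hbc (hb'.trans hc'.symm)

/-- A point of `P` is on the outer side of at most two hull edges: any two such edges share
an endpoint, and three pairwise adjacent edges would form a triangle with the point outside
all three sides. -/
lemma card_visible_le_two {G : Finset Plane} {P : Set Plane} (hP : Convex ℝ P)
    (hGP : ∀ g ∈ G, g ∈ P) (hN : NoDoubleShadow G P) {H : Finset Plane}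
    (hH : ∀ b ∈ H, Exposed G b) {nxt : Plane → Plane}
    (hnxt : ∀ b, Exposed G b → Exposed G (nxt b) ∧ HullEdge G b (nxt b)) {w : Plane} (hw : w ∈ P) :
    (H.filter (fun b => orient b (nxt b) w ≤ 0)).card ≤ 2 := by
  by_contra! hcon
  obtain ⟨x, y, z, hx, hy, hz, hxy, hxz, hyz⟩ := Finset.two_lt_card_iff.1 hcon
  simp only [Finset.mem_filter] at hx hy hz
  have adj : ∀ x y, Exposed G x → Exposed G y → x ≠ y → orient x (nxt x) w ≤ 0 →
      orient y (nxt y) w ≤ 0 → nxt x = y ∨ nxt y = x := by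
    intro x y hx hy hxy h1 h2
    by_contra! hne
    obtain ⟨ex, hx'⟩ := hnxt x hx
    obtain ⟨ey, hy'⟩ := hnxt y hy
    refine visible_edges_meet hP hGP hN hw hx ex hy ey hx' hy' hxy hne.2.symm hne.1 ?_ h1 h2
    intro e
    rw [← e] at hy'
    exact hxy (hy'.prev_unique hx' hx)
  have tri : ∀ x y z, Exposed G x → Exposed G y → Exposed G z → x ≠ z → y ≠ z →
      orient x (nxt x) w ≤ 0 → orient y (nxt y) w ≤ 0 → orient z (nxt z) w ≤ 0 →
      nxt x = y → nxt y = z → nxt z = x → False := by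
    intro x y z hx hy hz hxz hyz h1 h2 h3 e1 e2 e3
    have h := (hnxt x hx).2
    rw [e1] at h h1
    rw [e2] at h2
    rw [e3] at h3
    have hpos := h.orient_pos hz hxz.symm hyz.symm
    have : orient x y w + orient y z w + orient z x w = orient x y z := by
      simp only [orient]; ring
    linarith
  have ex := hH x hx.1
  have ey := hH y hy.1
  have ez := hH z hz.1
  rcases adj x y ex ey hxy hx.2 hy.2 with h1 | h1 <;>
  rcases adj y z ey ez hyz hy.2 hz.2 with h2 | h2 <;>
  rcases adj x z ex ez hxz hx.2 hz.2 with h3 | h3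
  · exact hyz (h1.symm.trans h3)
  · exact tri x y z ex ey ez hxz hyz hx.2 hy.2 hz.2 h1 h2 h3
  · exact hyz (h1.symm.trans h3)
  · exact hxy (h3.symm.trans h2)
  · exact hxz (h1.symm.trans h2)
  · exact hxz (h1.symm.trans h2)
  · exact tri x z y ex ez ey hxy hyz.symm hx.2 hz.2 hy.2 h3 h2 h1
  · exact hxy (h3.symm.trans h2)

/-- The fan triangulation from the hull vertex `v₀` covers all guards: `g` lies in the triangle
`v₀, prv u, u`, where `u` is the first hull vertex not before `g` in the angular order
around `v₀`. The inequality for the side `prv u, u` is omitted, as that side is a hull edge. -/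
lemma exists_fan_triangle {G H : Finset Plane} (hH : ∀ b, b ∈ H ↔ Exposed G b)
    {nxt prv : Plane → Plane}
    (hnxt : ∀ b, Exposed G b → Exposed G (nxt b) ∧ HullEdge G b (nxt b))
    (hprv : ∀ b, Exposed G b → Exposed G (prv b) ∧ nxt (prv b) = b) {v₀ : Plane}
    (hv₀ : Exposed G v₀) (h2 : nxt v₀ ≠ prv v₀) {g : Plane} (hg : g ∈ G) :
    ∃ u ∈ (H.erase v₀).erase (nxt v₀), 0 ≤ orient v₀ (prv u) g ∧ 0 ≤ orient u v₀ g := by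
  have eprv : ∀ b, Exposed G b → HullEdge G (prv b) b := by
    intro b hb
    have := (hnxt _ (hprv b hb).1).2
    rwa [(hprv b hb).2] at this
  obtain ⟨κ, hκ⟩ := hv₀.key
  have hne : (((H.erase v₀).erase (nxt v₀)).filter (fun u => 0 ≤ orient u v₀ g)).Nonempty := by
    refine ⟨prv v₀, ?_⟩
    simp only [Finset.mem_filter, Finset.mem_erase, hH]
    exact ⟨⟨h2.symm, (eprv v₀ hv₀).2.2.1, (hprv v₀ hv₀).1⟩, ((eprv v₀ hv₀).2.2.2 g hg).1⟩
  obtain ⟨u, hu, hmin⟩ := Finset.exists_min_image _ κ hne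
  simp only [Finset.mem_filter, Finset.mem_erase, hH] at hu hmin
  obtain ⟨⟨hu1, hu2, hu3⟩, hu4⟩ := hu
  refine ⟨u, by simp [hu1, hu2, hH, hu3], ?_, hu4⟩
  by_cases hp : prv u = nxt v₀
  · rw [hp]; exact ((hnxt v₀ hv₀).2.2.2.2 g hg).1
  · by_contra! hneg
    obtain ⟨pe, pn⟩ := hprv u hu3
    have pv : prv u ≠ v₀ := by
      intro e
      rw [e] at pn
      exact hu1 pn.symm
    have hpos := (eprv u hu3).orient_pos hv₀ pv.symm hu2.symm
    rw [← orient_rot, ← orient_rot] at hpos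
    have hlt := ((hκ _ pe.1 u hu3.1 pv hu2).1).1 hpos
    have := hmin (prv u) ⟨⟨hp, pv, pe⟩, by rw [orient_swap]; linarith⟩
    linarith

/-- The bound `4 |V| - 2` on the number of guards with pairwise disjoint shadows. -/
lemma card_guards_le {G V : Finset Plane} {P : Set Plane} (hPV : P = convexHull ℝ (V : Set Plane))
    (hGP : ∀ g ∈ G, g ∈ P) (hN : NoDoubleShadow G P) (hG : 4 ≤ G.card) :
    G.card + 2 ≤ 4 * V.card := by
  classical
  have hP : Convex ℝ P := by rw [hPV]; exact convex_convexHull ℝ _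
  have hVP : ∀ w ∈ V, w ∈ P := fun w hw => by rw [hPV]; exact subset_convexHull ℝ _ hw
  set H := G.filter (Exposed G) with hHdef
  have hH : ∀ b, b ∈ H ↔ Exposed G b := fun b => by
    simp only [hHdef, Finset.mem_filter, and_iff_right_iff_imp]
    exact fun h => h.1
  have hex : ∀ b, Exposed G b → ∃ c, Exposed G c ∧ HullEdge G b c :=
    fun b hb => hb.exists_next (by omega)
  choose! nxt hnxt using hex
  -- `nxt` is an injective self-map of the finite set `H`, hence a permutation of `H`
  have himg : H.image nxt = H := by
    refine Finset.eq_of_subset_of_card_le ?_ (le_of_eq (Finset.card_image_of_injOn ?_).symm)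
    · intro x hx
      obtain ⟨b, hb, rfl⟩ := Finset.mem_image.1 hx
      exact (hH _).2 (hnxt b ((hH b).1 hb)).1
    · intro x hx y hy e
      have hx' := (hH x).1 hx
      have hy' := (hH y).1 hy
      have h1 := (hnxt y hy').2
      rw [← e] at h1
      exact h1.prev_unique (hnxt x hx').2 hx'
  have hprv : ∀ c, Exposed G c → ∃ b, Exposed G b ∧ nxt b = c := by
    intro c hc
    have : c ∈ H.image nxt := by rw [himg]; exact (hH c).2 hc
    obtain ⟨b, hb, e⟩ := Finset.mem_image.1 this
    exact ⟨b, (hH b).1 hb, e⟩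
  choose! prv hprv using hprv
  have hne : G.Nonempty := Finset.card_pos.1 (by omega)
  obtain ⟨v₀, hv₀⟩ := exists_exposed hne
  have hnp : nxt v₀ ≠ prv v₀ := by
    intro e
    have h1 := (hnxt _ (hprv v₀ hv₀).1).2
    rw [(hprv v₀ hv₀).2, ← e] at h1
    exact not_two_cycle hGP hN hG (hnxt v₀ hv₀).2 h1
  set F := G.filter (fun g => ∃ b, Exposed G b ∧ GuardedSide P g b (nxt b)) with hF
  set E := H.filter (fun b => ∃ g, GuardedSide P g b (nxt b)) with hE
  set I := G.filter (fun g => ¬ Exposed G g ∧ ¬ ∃ b, Exposed G b ∧ GuardedSide P g b (nxt b))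
    with hI
  have hsplit : G.card ≤ H.card + F.card + I.card := by
    have hsub : G ⊆ (H ∪ F) ∪ I := by
      intro g hg
      simp only [hHdef, hF, hI, Finset.mem_union, Finset.mem_filter]
      by_cases h1 : Exposed G g
      · exact Or.inl (Or.inl ⟨hg, h1⟩)
      by_cases h2 : ∃ b, Exposed G b ∧ GuardedSide P g b (nxt b)
      · exact Or.inl (Or.inr ⟨hg, h2⟩)
      · exact Or.inr ⟨hg, h1, h2⟩
    have h1 := Finset.card_le_card hsub
    have h2 := Finset.card_union_le (H ∪ F) I
    have h3 := Finset.card_union_le H F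
    omega
  have hFE : F.card ≤ E.card := by
    have hb : ∀ g ∈ F, ∃ b, Exposed G b ∧ GuardedSide P g b (nxt b) :=
      fun g hg => (Finset.mem_filter.1 hg).2
    choose! f hf using hb
    refine Finset.card_le_card_of_injOn f ?_ ?_
    · intro g hg
      exact Finset.mem_filter.2 ⟨(hH _).2 (hf g hg).1, g, (hf g hg).2⟩
    · intro g hg g' hg' e
      have h1 := (hf g hg).2.1
      have h2 := (hf g' hg').2.1
      rw [← e] at h2
      have h3 := (hnxt _ (hf g hg).1).2
      exact openSegment_guard_unique hGP hN h3.1 h3.2.1 h3.2.2.1 (Finset.mem_filter.1 hg).1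
        (Finset.mem_filter.1 hg').1 h1 h2
  have hIU : I.card + 2 ≤ H.card := by
    have hb : ∀ g ∈ I, ∃ u ∈ (H.erase v₀).erase (nxt v₀),
        0 ≤ orient v₀ (prv u) g ∧ 0 ≤ orient u v₀ g :=
      fun g hg => exists_fan_triangle hH hnxt hprv hv₀ hnp (Finset.mem_filter.1 hg).1
    choose! f hf using hb
    have hle : I.card ≤ ((H.erase v₀).erase (nxt v₀)).card := by
      refine Finset.card_le_card_of_injOn f (fun g hg => (hf g hg).1) ?_
      intro d hd e he heq
      by_contra hde
      obtain ⟨hu, hd3, hd2⟩ := hf d hd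
      obtain ⟨-, he3, he2⟩ := hf e he
      rw [← heq] at he3 he2
      generalize f d = u at *
      simp only [Finset.mem_erase, hH] at hu
      obtain ⟨hu1, hu2, hu3⟩ := hu
      obtain ⟨pe, pn⟩ := hprv u hu3
      have edge := (hnxt _ pe).2
      rw [pn] at edge
      have pv : v₀ ≠ prv u := by
        intro h
        rw [← h] at pn
        exact hu1 pn.symm
      have hpos := edge.orient_pos hv₀ pv hu2.symm
      rw [← orient_rot, ← orient_rot] at hpos
      obtain ⟨dG, dE, dF⟩ := Finset.mem_filter.1 hd
      obtain ⟨eG, eE, eF⟩ := Finset.mem_filter.1 he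
      obtain ⟨x, hx, hside⟩ := triangle_two_guards hP hGP hN hv₀.1 pe.1 hu3.1 dG eG hpos
        (fun h => dE (h ▸ hv₀)) (fun h => dE (h ▸ pe)) (fun h => dE (h ▸ hu3))
        (fun h => eE (h ▸ hv₀)) (fun h => eE (h ▸ pe)) (fun h => eE (h ▸ hu3)) hde
        (edge.2.2.2 d dG).1 hd2 hd3 (edge.2.2.2 e eG).1 he2 he3
      have hxF : ¬ ∃ b, Exposed G b ∧ GuardedSide P x b (nxt b) := by
        rcases hx with rfl | rfl
        · exact dF
        · exact eF
      -- a side of the triangle that bounds `P` is a hull edge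
      have conv : ∀ b c, Exposed G b → Exposed G c → b ≠ c → ¬ GuardedSide P x b c := by
        intro b c hb hc hbc hs
        have : c = nxt b := (hnxt b hb).2.next_unique hc hbc fun g hg => hs.2 g (hGP g hg)
        rw [this] at hs
        exact hxF ⟨b, hb, hs⟩
      rcases hside with h | h | h
      · exact conv _ _ pe hu3 edge.2.2.1 h
      · exact conv _ _ hu3 hv₀ hu2 h
      · exact conv _ _ hv₀ pe pv h
    have m1 : v₀ ∈ H := (hH _).2 hv₀
    have m2 : nxt v₀ ∈ H.erase v₀ :=
      Finset.mem_erase.2 ⟨(hnxt v₀ hv₀).2.2.2.1.symm, (hH _).2 (hnxt v₀ hv₀).1⟩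
    have c1 := Finset.card_erase_add_one m1
    have c2 := Finset.card_erase_add_one m2
    omega
  have hcount : H.card + E.card ≤ 2 * V.card := by
    -- double counting of the pairs of a hull edge and a polygon vertex on its outer side
    have hdc := Finset.sum_card_bipartiteAbove_eq_sum_card_bipartiteBelow
      (fun b w : Plane => orient b (nxt b) w ≤ 0) (s := H) (t := V)
    have hup : ∑ w ∈ V, (H.bipartiteBelow (fun b w : Plane => orient b (nxt b) w ≤ 0) w).card
        ≤ ∑ _w ∈ V, 2 :=
      Finset.sum_le_sum fun w hw =>
        card_visible_le_two hP hGP hN (fun b hb => (hH b).1 hb) hnxt (hVP w hw)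
    have hlow : ∑ b ∈ H, (1 + if b ∈ E then 1 else 0)
        ≤ ∑ b ∈ H, (V.bipartiteAbove (fun b w : Plane => orient b (nxt b) w ≤ 0) b).card := by
      refine Finset.sum_le_sum fun b hb => ?_
      have hbe := (hH b).1 hb
      have edge := (hnxt b hbe).2
      have hbP := hGP b edge.1
      have hcP := hGP _ edge.2.1
      split_ifs with hs
      · obtain ⟨g, hs⟩ := (Finset.mem_filter.1 hs).2
        rw [hPV] at hbP hcP
        exact two_outer_vertices edge.2.2.1 hbP hcP fun w hw => hs.2 w (hVP w hw)
      · rw [hPV] at hbP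
        obtain ⟨w, hw, hw0⟩ := exists_outer_vertex (c := nxt b) hbP
        exact Finset.card_pos.2 ⟨w, Finset.mem_filter.2 ⟨hw, hw0⟩⟩
    have hEH : E ⊆ H := Finset.filter_subset _ _
    rw [Finset.sum_add_distrib, Finset.sum_const, smul_eq_mul, mul_one, ← Finset.card_filter,
      Finset.filter_mem_eq_inter, Finset.inter_eq_right.2 hEH] at hlow
    rw [Finset.sum_const, smul_eq_mul] at hup
    omega
  omega

/-- If k ≥ 4n - 2 then no guard set of exactly k + 1 guards k-covers
the convex n-gon P. -/
theorem statement3 (n k : ℕ) (V : Finset Plane) (P : Set Plane)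
    (hP : IsConvexPolygon n V P) (hk : 4 * n - 2 ≤ k) :
    ∀ G : Finset Plane, ↑G ⊆ P → G.card = k + 1 → ¬ KCovers G P k := by
  intro G hG hcard hcov
  obtain ⟨hn, hVn, hPV, -⟩ := hP
  have := card_guards_le hPV (fun g hg => hG hg) (noDoubleShadow_of_kCovers hcard hcov) (by omega)
  omega
end
end

section
/- Let P be a convex n-gon in ℝ² and let G ⊆ P be a guard set with |G| > 4n - 2. Then there exist a point x ∈ P and two distinct guards g, g' ∈ G such that x is hidden from g and x is hidden from g'. -/
/-! Suppose that no point of the polygon `P` is hidden from two guards. Split the guards into the set `K` of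
vertices of the convex hull of `G`, the set `M` of further guards on the boundary of `P`, and the set `N`
of further guards in the interior of `P`. The bound `|G| ≤ 4n - 2` is the sum of two estimates.

*Boundary*: `|K| + |M| ≤ 2n` (`Config.card_boundary`). Traverse the hull of `G` counterclockwise and
prolong each of its edges, in the direction of travel, until it leaves `P`. If the prolongations of two
non-adjacent hull edges left `P` through the same edge of `P`, one of them would first cross the line of
the other, at a point hidden from two guards (`Config.edge_pair`). Hence, when `|K| ≥ 4`, at most two
prolongations leave through any given edge of `P`. A guard of `M` on an edge of `P` lies between guards at
the two ends of that edge, is the only one of `M` there, and leaves room for one prolongation at most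
(`Config.middle`, `Config.middle_unique`, `Config.exit_middle`). So each edge of `P` accounts for at most
two prolongations and guards of `M` together. When `|K| = 3`, the bound follows from `|M| ≤ n` and `n ≥ 3`.

*Interior*: `|N| ≤ |K| - 2` (`Config.card_interior`). A triangle of hull vertices contains at most one
guard of `N`: for two of them, `b` and `b'`, two corners lie on the same side of the line `b b'`, and the
rays from these corners through `b` and `b'` cross inside the triangle beyond both, at a point hidden from
both corners (`Config.tri`). A fan triangulation of the hull has `|K| - 2` triangles.

If `|K| ≤ 2`, all guards are collinear, and four collinear guards already produce a point hidden from two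
of them (`dark_between`).
-/

open Set

noncomputable section

/-! ### Orientation and points on lines -/

/-- Twice the signed area of the triangle `a b c`: positive when `c` lies strictly to the left of the
directed line from `a` to `b`, and zero when the three points are collinear. -/
def cr (a b c : Plane) : ℝ := (b 0 - a 0) * (c 1 - a 1) - (b 1 - a 1) * (c 0 - a 0)

/-- The point `p + t (q - p)` of the line through `p` and `q`; parameters `t > 1` describe the points
beyond `q` as seen from `p`. -/
def pt (p q : Plane) (t : ℝ) : Plane := p + t • (q - p)

@[simp] lemma pt_apply (p q : Plane) (t : ℝ) (i : Fin 2) :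
    pt p q t i = p i + t * (q i - p i) := by simp [pt]

/-- `cr a b` is affine along every line. -/
lemma cr_pt (a b p q : Plane) (t : ℝ) :
    cr a b (pt p q t) = (1 - t) * cr a b p + t * cr a b q := by
  simp only [cr, pt_apply]; ring

lemma cr_self_left (a b : Plane) : cr a b a = 0 := by simp only [cr]; ring
lemma cr_self_right (a b : Plane) : cr a b b = 0 := by simp only [cr]; ring
lemma cr_rot (a b c : Plane) : cr a b c = cr b c a := by simp only [cr]; ring
lemma cr_swap (a b c : Plane) : cr a b c = - cr b a c := by simp only [cr]; ring

lemma pt_flip (p q : Plane) (t : ℝ) : pt p q t = pt q p (1 - t) := by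
  apply plane_ext <;> simp only [pt_apply] <;> ring

lemma pt_pt (p q : Plane) (s t : ℝ) : pt p (pt p q s) t = pt p q (t * s) := by
  apply plane_ext <;> simp only [pt_apply] <;> ring

lemma pt_zero (p q : Plane) : pt p q 0 = p := by simp [pt]
lemma pt_one (p q : Plane) : pt p q 1 = q := by simp [pt]

lemma exists_pt_of_cr_eq_zero {a b x : Plane} (hab : a ≠ b) (h : cr a b x = 0) :
    ∃ t, x = pt a b t := by
  have h' : (b 0 - a 0) * (x 1 - a 1) = (b 1 - a 1) * (x 0 - a 0) := by
    simp only [cr] at h; linarith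
  by_cases h0 : b 0 - a 0 = 0
  · have h1 : b 1 - a 1 ≠ 0 := fun h1 => hab (plane_ext (by linarith) (by linarith))
    refine ⟨(x 1 - a 1) / (b 1 - a 1), plane_ext ?_ ?_⟩ <;> simp only [pt_apply]
    · rw [h0, zero_mul] at h'
      rcases mul_eq_zero.1 h'.symm with h2 | h2
      · exact absurd h2 h1
      · rw [h0]; linarith
    · field_simp; ring
  · refine ⟨(x 0 - a 0) / (b 0 - a 0), plane_ext ?_ ?_⟩ <;> simp only [pt_apply]
    · field_simp; ring
    · field_simp; linarith

lemma pt_mem_openSegment {p q : Plane} {t : ℝ} (h0 : 0 < t) (h1 : t < 1) :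
    pt p q t ∈ openSegment ℝ p q :=
  ⟨1 - t, t, by linarith, h0, by ring,
    by apply plane_ext <;> simp <;> ring⟩

lemma pt_mem_segment {p q : Plane} {t : ℝ} (h0 : 0 ≤ t) (h1 : t ≤ 1) :
    pt p q t ∈ segment ℝ p q :=
  ⟨1 - t, t, by linarith, h0, by ring,
    by apply plane_ext <;> simp <;> ring⟩

/-- Every point beyond a guard `b` on the ray from the guard `g` is hidden from `g`. -/
lemma hidden_pt {G : Finset Plane} {g b : Plane} {t : ℝ} (hb : b ∈ G) (hbg : b ≠ g)
    (ht : 1 < t) : Hidden G g (pt g b t) := by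
  refine ⟨b, hb, hbg, ?_⟩
  have : b = pt g (pt g b t) (1 / t) := by
    rw [pt_pt, one_div_mul_cancel (by positivity), pt_one]
  have h1 : 1 / t < 1 := by rw [div_lt_one (by positivity)]; exact ht
  have h2 := pt_mem_openSegment (p := g) (q := pt g b t) (by positivity : 0 < 1 / t) h1
  rwa [← this] at h2

lemma cr_convex (a b : Plane) : Convex ℝ {x | 0 ≤ cr a b x} := by
  intro x hx y hy s t hs ht hst
  have : cr a b (s • x + t • y) = s * cr a b x + t * cr a b y := by
    obtain rfl : s = 1 - t := by linarith
    simp [cr]; ring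
  simp only [mem_ofPred_eq] at *
  rw [this]; positivity

/-! ### Finite sets in convex position -/

/-- A point outside a convex hull has a left and a right tangent to it, each touching the hull at one
of the generating points. -/
lemma exists_tangent (x : Plane) (T : Finset Plane) (hT : T.Nonempty)
    (hx : x ∉ convexHull ℝ (T : Set Plane)) :
    (∃ s ∈ T, ∀ t ∈ T, 0 ≤ cr x s t) ∧ ∃ s ∈ T, ∀ t ∈ T, cr x s t ≤ 0 := by
  obtain ⟨f, u, hfx, hfT⟩ := geometric_hahn_banach_point_closed (convex_convexHull ℝ _)
    (T.finite_toSet.isCompact_convexHull (𝕜 := ℝ)).isClosed hx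
  set a := f (EuclideanSpace.single 0 1)
  set b := f (EuclideanSpace.single 1 1)
  have hf : ∀ v : Plane, f v = a * v 0 + b * v 1 := by
    intro v
    have : v = v 0 • EuclideanSpace.single 0 1 + v 1 • EuclideanSpace.single 1 1 := by
      apply plane_ext <;> simp
    nth_rewrite 1 [this]
    rw [map_add, map_smul, map_smul, smul_eq_mul, smul_eq_mul]; ring
  -- `φ > 0` on `T`, so the slope `ψ / φ` orders the points of `T` angularly around `x`
  set φ : Plane → ℝ := fun v => a * (v 0 - x 0) + b * (v 1 - x 1)
  set ψ : Plane → ℝ := fun v => -b * (v 0 - x 0) + a * (v 1 - x 1)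
  have hφ : ∀ t ∈ T, 0 < φ t := by
    intro t ht
    have := hfT t (subset_convexHull ℝ _ ht)
    rw [hf] at this hfx
    simp only [φ]; linarith
  have h2 : 0 < a ^ 2 + b ^ 2 := by
    obtain ⟨s, hs⟩ := hT
    by_contra h
    have ha : a = 0 := by nlinarith [sq_nonneg a, sq_nonneg b]
    have hb : b = 0 := by nlinarith [sq_nonneg a, sq_nonneg b]
    have := hφ s hs
    simp [φ, ha, hb] at this
  have key : ∀ s ∈ T, ∀ t ∈ T, ψ s / φ s ≤ ψ t / φ t → 0 ≤ cr x s t := by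
    intro s hs t ht h1
    rw [div_le_div_iff₀ (hφ s hs) (hφ t ht)] at h1
    have h3 : (a ^ 2 + b ^ 2) * cr x s t = φ s * ψ t - ψ s * φ t := by
      simp only [φ, ψ, cr]; ring
    by_contra h
    push Not at h
    nlinarith
  constructor
  · obtain ⟨s, hs, hmin⟩ := T.exists_min_image (fun v => ψ v / φ v) hT
    exact ⟨s, hs, fun t ht => key s hs t ht (hmin t ht)⟩
  · obtain ⟨s, hs, hmax⟩ := T.exists_max_image (fun v => ψ v / φ v) hT
    refine ⟨s, hs, fun t ht => ?_⟩
    have h4 := key t ht s hs (hmax t ht)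
    have h5 : cr x s t = - cr x t s := by simp only [cr]; ring
    linarith

/-- `S` is in strictly convex position and `σ` maps each of its points to the next one in
counterclockwise order: all other points of `S` lie strictly to the left of the directed line from
`s` to `σ s`. That `σ` is a single cycle is not part of the definition. -/
structure Cyc (S : Finset Plane) (σ : Plane → Plane) : Prop where
  mem : ∀ s ∈ S, σ s ∈ S
  ne : ∀ s ∈ S, σ s ≠ s
  pos : ∀ s ∈ S, ∀ u ∈ S, u ≠ s → u ≠ σ s → 0 < cr s (σ s) u

/-- A finite set in convex position has a counterclockwise successor map: the successor of `s` is the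
point at which the tangent from `s` touches the hull of the remaining points. -/
lemma exists_cyc (S : Finset Plane) (hS : ∀ s ∈ S, s ∉ convexHull ℝ ((S : Set Plane) \ {s}))
    (hc : 2 ≤ S.card) : ∃ σ, Cyc S σ := by
  classical
  have key : ∀ s ∈ S, ∃ t ∈ S, t ≠ s ∧ ∀ u ∈ S, u ≠ s → u ≠ t → 0 < cr s t u := by
    intro s hs
    have hne : (S.erase s).Nonempty := by
      rw [← Finset.card_pos, Finset.card_erase_of_mem hs]; omega
    obtain ⟨⟨t, ht, h⟩, -⟩ := exists_tangent s (S.erase s) hne (by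
      rw [Finset.coe_erase]; exact hS s hs)
    rw [Finset.mem_erase] at ht
    refine ⟨t, ht.2, ht.1, fun u hu hus hut => ?_⟩
    refine lt_of_le_of_ne (h u (Finset.mem_erase.2 ⟨hus, hu⟩)) fun h0 => ?_
    obtain ⟨τ, hτ⟩ := exists_pt_of_cr_eq_zero ht.1.symm h0.symm
    -- three collinear points of `S`: the middle one lies in the hull of the others
    have mid : ∀ p q r : Plane, p ∈ S → q ∈ S → r ∈ S → p ≠ q → r ≠ q → ∀ τ : ℝ, 0 < τ →
        τ < 1 → q ≠ pt p r τ := by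
      intro p q r hp hq hr hpq hrq τ h0 h1 h
      refine hS q hq ?_
      have := (convex_convexHull ℝ ((S : Set Plane) \ {q})).openSegment_subset
        (subset_convexHull ℝ _ ⟨hp, hpq⟩) (subset_convexHull ℝ _ ⟨hr, hrq⟩)
        (pt_mem_openSegment h0 h1)
      rwa [← h] at this
    rcases lt_trichotomy τ 0 with h1 | h1 | h1
    · refine mid u s t hu hs ht.2 hus ht.1 (-τ / (1 - τ)) (div_pos (by linarith) (by linarith))
        ((div_lt_one (by linarith)).2 (by linarith)) ?_
      have : (1 - τ) ≠ 0 := by linarith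
      rw [hτ]
      apply plane_ext <;> simp only [pt_apply] <;> field_simp <;> ring
    · rw [h1, pt_zero] at hτ; exact hus hτ
    · rcases lt_trichotomy τ 1 with h2 | h2 | h2
      · exact mid s u t hs hu ht.2 hus.symm hut.symm τ h1 h2 hτ
      · rw [h2, pt_one] at hτ; exact hut hτ
      · refine mid s t u hs ht.2 hu ht.1.symm hut (1 / τ) (by positivity)
          ((div_lt_one (by linarith)).2 (by linarith)) ?_
        rw [hτ, pt_pt, one_div_mul_cancel (by positivity), pt_one]
  choose! σ h1 h2 h3 using key
  exact ⟨σ, h1, h2, h3⟩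

namespace Cyc

variable {S : Finset Plane} {σ : Plane → Plane}

lemma nonneg_of_mem (h : Cyc S σ) {s x : Plane} (hs : s ∈ S) (hx : x ∈ S) :
    0 ≤ cr s (σ s) x := by
  by_cases h1 : x = s
  · rw [h1, cr_self_left]
  by_cases h2 : x = σ s
  · rw [h2, cr_self_right]
  exact (h.pos s hs x hx h1 h2).le

lemma nonneg_of_mem_hull (h : Cyc S σ) {s x : Plane} (hs : s ∈ S)
    (hx : x ∈ convexHull ℝ (S : Set Plane)) : 0 ≤ cr s (σ s) x :=
  convexHull_min (fun _ hy => h.nonneg_of_mem hs hy) (cr_convex s (σ s)) hx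

lemma inj (h : Cyc S σ) : Set.InjOn σ S := by
  intro s hs t ht hst
  by_contra hne
  have h1 := h.pos s hs t ht (Ne.symm hne) (by rw [hst]; exact (h.ne t ht).symm)
  have h2 := h.pos t ht s hs hne (by rw [← hst]; exact (h.ne s hs).symm)
  rw [hst] at h1
  have : cr s (σ t) t = - cr t (σ t) s := by simp only [cr]; ring
  linarith

lemma sigma_sigma_ne (h : Cyc S σ) (h3 : 3 ≤ S.card) {s : Plane} (hs : s ∈ S) :
    σ (σ s) ≠ s := by
  classical
  intro hc
  obtain ⟨u, hu, hu'⟩ : ∃ u ∈ S, u ∉ ({s, σ s} : Finset Plane) := by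
    apply Finset.exists_mem_notMem_of_card_lt_card
    have := Finset.card_le_two (a := s) (b := σ s)
    omega
  simp only [Finset.mem_insert, Finset.mem_singleton, not_or] at hu'
  have h1 := h.pos s hs u hu hu'.1 hu'.2
  have h2 := h.pos (σ s) (h.mem s hs) u hu hu'.2 (by rw [hc]; exact hu'.1)
  rw [hc, cr_swap] at h2
  linarith

/-- With at least four points, the successor map has no orbit of length three. If `a`, `σ a`, `σ (σ a)`
closed up, a fourth point `u` would lie strictly inside their triangle, so no line through `u` could
have all three on its left. -/
lemma no_three_cycle (h : Cyc S σ) (h4 : 4 ≤ S.card) {a : Plane} (ha : a ∈ S)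
    (hc : σ (σ (σ a)) = a) : False := by
  classical
  have hb := h.mem a ha
  have hcm := h.mem _ hb
  obtain ⟨u, hu, hu'⟩ : ∃ u ∈ S, u ∉ ({a, σ a, σ (σ a)} : Finset Plane) := by
    apply Finset.exists_mem_notMem_of_card_lt_card
    have := Finset.card_le_three (a := a) (b := σ a) (c := σ (σ a))
    omega
  simp only [Finset.mem_insert, Finset.mem_singleton, not_or] at hu'
  obtain ⟨ua, ub, uc⟩ := hu'
  have p1 := h.pos a ha u hu ua ub
  have p2 := h.pos _ hb u hu ub uc
  have p3 := h.pos _ hcm u hu uc (by rw [hc]; exact ua)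
  rw [hc] at p3
  have q1 := h.nonneg_of_mem hu ha
  have q2 := h.nonneg_of_mem hu hb
  have q3 := h.nonneg_of_mem hu hcm
  have id : cr u (σ u) a * cr (σ a) (σ (σ a)) u + cr u (σ u) (σ a) * cr (σ (σ a)) a u
      + cr u (σ u) (σ (σ a)) * cr a (σ a) u = 0 := by
    simp only [cr]; ring
  have r1 := mul_nonneg q1 p2.le
  have r2 := mul_nonneg q2 p3.le
  have r3 := mul_nonneg q3 p1.le
  by_cases e : a = σ u
  · have := h.pos u hu _ hb (Ne.symm ub) (by rw [← e]; exact h.ne a ha)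
    have := mul_pos this p3
    linarith
  · have := h.pos u hu _ ha (Ne.symm ua) e
    have := mul_pos this p2
    linarith

/-- The convex hull of `S` contains the intersection of the half-planes to the left of its edges. For a
point `x` outside the hull, the edge leaving the tangent point of `x` would separate `x` from `S`
unless `x` lay on that edge. -/
lemma mem_hull (h : Cyc S σ) (h3 : 3 ≤ S.card) {x : Plane}
    (hx : ∀ s ∈ S, 0 ≤ cr s (σ s) x) : x ∈ convexHull ℝ (S : Set Plane) := by
  classical
  by_contra hn
  have hne : S.Nonempty := by rw [← Finset.card_pos]; omega
  obtain ⟨-, s, hs, hleft⟩ := exists_tangent x S hne hn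
  have hs' := h.mem s hs
  have hss := h.sigma_sigma_ne h3 hs
  have h1 := hx s hs
  rw [cr_rot, cr_rot] at h1
  have h2 : cr s (σ s) x = 0 := by
    rw [cr_rot, cr_rot]; exact le_antisymm (hleft _ hs') h1
  obtain ⟨τ, rfl⟩ := exists_pt_of_cr_eq_zero (h.ne s hs).symm h2
  have hu := h.pos s hs _ (h.mem _ hs') hss (h.ne _ hs')
  have h4 := hleft _ (h.mem _ hs')
  have h5 : cr (pt s (σ s) τ) s (σ (σ s)) = - (τ * cr s (σ s) (σ (σ s))) := by
    simp only [cr, pt_apply]; ring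
  have hτ0 : 0 ≤ τ := by
    by_contra hneg
    push Not at hneg
    nlinarith
  have h6 := hx _ hs'
  rw [cr_pt, cr_self_left] at h6
  have h7 := h.pos _ hs' s hs (h.ne s hs).symm hss.symm
  have hτ1 : τ ≤ 1 := by
    by_contra hgt
    push Not at hgt
    nlinarith
  exact hn (convex_iff_segment_subset.1 (convex_convexHull ℝ (S : Set Plane))
    (subset_convexHull ℝ _ hs) (subset_convexHull ℝ _ hs')
    (pt_mem_segment hτ0 hτ1))

/-- The ray from `p` through `q` leaves the polygon of `S` at a point beyond or equal to `q`, across an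
edge `(s, σ s)` towards which it strictly descends. -/
lemma exit (h : Cyc S σ) (h3 : 3 ≤ S.card) {p q : Plane} (hpq : p ≠ q)
    (hp : ∀ s ∈ S, 0 ≤ cr s (σ s) p) (hq : ∀ s ∈ S, 0 ≤ cr s (σ s) q) :
    ∃ s ∈ S, ∃ t : ℝ, 1 ≤ t ∧ cr s (σ s) q < cr s (σ s) p ∧ cr s (σ s) (pt p q t) = 0 ∧
      ∀ s' ∈ S, 0 ≤ cr s' (σ s') (pt p q t) := by
  classical
  set A := S.filter fun s => cr s (σ s) q < cr s (σ s) p with hA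
  have hAne : A.Nonempty := by
    by_contra hn
    rw [Finset.not_nonempty_iff_eq_empty, hA, Finset.filter_eq_empty_iff] at hn
    -- the increments `cr s (σ s) q - cr s (σ s) p` telescope around the polygon; if none is
    -- negative, all vanish, and two non-parallel edges force `p = q`
    set g : Plane → ℝ := fun s => s 0 * (q 1 - p 1) - s 1 * (q 0 - p 0)
    have hg : ∀ s, g (σ s) - g s = cr s (σ s) q - cr s (σ s) p := by
      intro s; simp only [g, cr]; ring
    have himg : S.image σ = S := by
      apply Finset.eq_of_subset_of_card_le
      · intro x hx
        obtain ⟨s, hs, rfl⟩ := Finset.mem_image.1 hx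
        exact h.mem s hs
      · rw [Finset.card_image_of_injOn h.inj]
    have hsum : ∑ s ∈ S, (g (σ s) - g s) = 0 := by
      rw [Finset.sum_sub_distrib, sub_eq_zero]
      conv_rhs => rw [← himg]
      rw [Finset.sum_image h.inj]
    have hz := (Finset.sum_eq_zero_iff_of_nonneg (by
      intro s hs; rw [hg]; have := hn hs; linarith)).1 hsum
    obtain ⟨s, hs⟩ : S.Nonempty := by rw [← Finset.card_pos]; omega
    have hs' := h.mem s hs
    have e1 := hz s hs
    have e2 := hz _ hs'
    have hpos := h.pos s hs _ (h.mem _ hs') (h.sigma_sigma_ne h3 hs) (h.ne _ hs')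
    have h0 : (q 0 - p 0) * cr s (σ s) (σ (σ s)) = 0 := by
      simp only [g] at e1 e2; simp only [cr]
      linear_combination ((σ s) 0 - s 0) * (-e2) - ((σ (σ s)) 0 - (σ s) 0) * (-e1)
    have h1 : (q 1 - p 1) * cr s (σ s) (σ (σ s)) = 0 := by
      simp only [g] at e1 e2; simp only [cr]
      linear_combination ((σ s) 1 - s 1) * (-e2) - ((σ (σ s)) 1 - (σ s) 1) * (-e1)
    rcases mul_eq_zero.1 h0 with h0 | h0 <;> rcases mul_eq_zero.1 h1 with h1 | h1 <;>
      try linarith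
    exact hpq (plane_ext (by linarith) (by linarith))
  -- the first edge line met among those towards which the ray descends
  obtain ⟨s, hs, hmin⟩ := A.exists_min_image
    (fun s => cr s (σ s) p / (cr s (σ s) p - cr s (σ s) q)) hAne
  rw [hA, Finset.mem_filter] at hs
  obtain ⟨hs, hlt⟩ := hs
  have hd : 0 < cr s (σ s) p - cr s (σ s) q := by linarith
  set t := cr s (σ s) p / (cr s (σ s) p - cr s (σ s) q) with ht
  have ht1 : 1 ≤ t := by rw [ht, le_div_iff₀ hd]; have := hq s hs; linarith
  have e : t * (cr s (σ s) p - cr s (σ s) q) = cr s (σ s) p := div_mul_cancel₀ _ hd.ne'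
  refine ⟨s, hs, t, ht1, hlt, by rw [cr_pt]; linarith, fun s' hs' => ?_⟩
  rw [cr_pt]
  by_cases hl : cr s' (σ s') q < cr s' (σ s') p
  · have := hmin s' (by rw [hA, Finset.mem_filter]; exact ⟨hs', hl⟩)
    rw [le_div_iff₀ (by linarith)] at this
    linarith
  · have := mul_nonneg (by linarith : 0 ≤ t) (by linarith : 0 ≤ cr s' (σ s') q - cr s' (σ s') p)
    have := hp s' hs'
    linarith

/-- A point of the polygon on the line of an edge lies on that edge. -/
lemma on_edge (h : Cyc S σ) (h3 : 3 ≤ S.card) {s x : Plane} (hs : s ∈ S)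
    (hx : ∀ s ∈ S, 0 ≤ cr s (σ s) x) (h0 : cr s (σ s) x = 0) :
    ∃ τ, 0 ≤ τ ∧ τ ≤ 1 ∧ x = pt s (σ s) τ := by
  classical
  have hs' := h.mem s hs
  obtain ⟨τ, rfl⟩ := exists_pt_of_cr_eq_zero (h.ne s hs).symm h0
  refine ⟨τ, ?_, ?_, rfl⟩
  · obtain ⟨r, hr, rfl⟩ : ∃ r ∈ S, σ r = s := by
      have := Finset.surjOn_of_injOn_of_card_le σ h.mem h.inj le_rfl hs
      simpa using this
    have h1 := hx r hr
    rw [cr_pt, cr_self_right] at h1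
    have := h.pos r hr (σ (σ r)) hs' (h.sigma_sigma_ne h3 hr) (h.ne _ hs)
    by_contra hn
    nlinarith
  · have h1 := hx _ hs'
    rw [cr_pt, cr_self_left] at h1
    have := h.pos _ hs' s hs (h.ne s hs).symm (h.sigma_sigma_ne h3 hs).symm
    by_contra hn
    nlinarith

end Cyc

/-! ### Collinear guards -/

lemma pt_injective {u v : Plane} (huv : u ≠ v) {a b : ℝ} (h : pt u v a = pt u v b) : a = b := by
  by_contra hab
  apply huv
  have h0 := congrFun (congrArg (fun x : Plane => x.ofLp) h) 0
  have h1 := congrFun (congrArg (fun x : Plane => x.ofLp) h) 1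
  simp only [pt_apply] at h0 h1
  have hab' : a - b ≠ 0 := sub_ne_zero.2 hab
  refine plane_ext ?_ ?_
  · have : (a - b) * (v 0 - u 0) = 0 := by linarith
    have := (mul_eq_zero.1 this).resolve_left hab'
    linarith
  · have : (a - b) * (v 1 - u 1) = 0 := by linarith
    have := (mul_eq_zero.1 this).resolve_left hab'
    linarith

/-- If `u, m, v` are collinear guards in this order, no point of `P` lies beyond `v`: it would be hidden
from both `u` and `m`. -/
lemma dark_beyond {P : Set Plane} {G : Finset Plane}
    (light : ∀ x ∈ P, ∀ g ∈ G, ∀ g' ∈ G, Hidden G g x → Hidden G g' x → g = g')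
    {u v m : Plane} (hu : u ∈ G) (hv : v ∈ G) (hm : m ∈ G)
    (huv : u ≠ v) {τ c : ℝ} (h0 : 0 < τ) (h1 : τ < 1) (hmτ : m = pt u v τ) (hc : 1 < c)
    (hx : pt u v c ∈ P) : False := by
  have hmu : m ≠ u := by
    intro h
    rw [h] at hmτ
    exact h0.ne (pt_injective huv (by rw [← hmτ, pt_zero]))
  have hmv : v ≠ m := by
    intro h
    rw [← h] at hmτ
    exact h1.ne (pt_injective huv (by rw [← hmτ, pt_one]))
  have e : pt u v c = pt m v ((c - τ) / (1 - τ)) := by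
    have : (1 - τ) ≠ 0 := by linarith
    rw [hmτ]
    apply plane_ext <;> simp only [pt_apply] <;> field_simp <;> ring
  have hh : Hidden G m (pt u v c) := by
    rw [e]
    exact hidden_pt hv hmv ((one_lt_div (by linarith)).2 (by linarith))
  exact hmu (light _ hx m hm u hu hh (hidden_pt hv huv.symm hc))

/-- No four guards are collinear: the last one would be hidden from the first two. -/
lemma dark_between {P : Set Plane} {G : Finset Plane} (GP : ∀ g ∈ G, g ∈ P)
    (light : ∀ x ∈ P, ∀ g ∈ G, ∀ g' ∈ G, Hidden G g x → Hidden G g' x → g = g')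
    {u v p q : Plane} (hu : u ∈ G) (hv : v ∈ G) (hp : p ∈ G)
    (hq : q ∈ G) {a b : ℝ} (ha0 : 0 < a) (hab : a < b) (hb : b < 1) (huv : u ≠ v)
    (hpa : p = pt u v a) (hqb : q = pt u v b) : False := by
  have hb0 : b ≠ 0 := by linarith
  refine dark_beyond light (u := u) (v := q) (m := p) (τ := a / b) (c := 1 / b) hu hq hp ?_
    (div_pos ha0 (by linarith)) ((div_lt_one (by linarith)).2 hab) ?_
    ((one_lt_div (by linarith)).2 hb) ?_
  · intro h
    exact hb0 (pt_injective huv (by rw [← hqb, ← h, pt_zero]))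
  · rw [hqb, pt_pt, div_mul_cancel₀ _ hb0, hpa]
  · rw [hqb, pt_pt, one_div_mul_cancel hb0, pt_one]
    exact GP v hv

/-! ### Prolongations of hull edges -/

/-- The standing configuration: a polygon `P` with vertices `V` and counterclockwise successor `σ`, and
guards `G` of which no point of `P` is hidden from two (`light`). The set `K`, with successor `ρ`,
consists of the vertices of the convex hull of `G`: all guards lie to the left of the edges of `K`
(`GK`), and no point of `K` is strictly between two other guards (`ext`). -/
structure Config (P : Set Plane) (G V K : Finset Plane) (σ ρ : Plane → Plane) : Prop where
  cV : Cyc V σ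
  V3 : 3 ≤ V.card
  mem_P : ∀ x, x ∈ P ↔ ∀ s ∈ V, 0 ≤ cr s (σ s) x
  GP : ∀ g ∈ G, g ∈ P
  KG : K ⊆ G
  cK : Cyc K ρ
  K3 : 3 ≤ K.card
  GK : ∀ g ∈ G, ∀ h ∈ K, 0 ≤ cr h (ρ h) g
  ext : ∀ v ∈ K, ∀ b ∈ G, ∀ b' ∈ G, ∀ τ : ℝ, 0 < τ → τ < 1 → v = pt b b' τ → b = v
  light : ∀ x ∈ P, ∀ g ∈ G, ∀ g' ∈ G, Hidden G g x → Hidden G g' x → g = g'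

namespace Config

variable {P : Set Plane} {G V K : Finset Plane} {σ ρ : Plane → Plane}

lemma pt_mem_P (C : Config P G V K σ ρ) {x y : Plane} (hx : x ∈ P) (hy : y ∈ P) {τ : ℝ}
    (h0 : 0 ≤ τ) (h1 : τ ≤ 1) : pt x y τ ∈ P := by
  rw [C.mem_P] at *
  intro s hs
  rw [cr_pt]
  have := mul_nonneg (by linarith : 0 ≤ 1 - τ) (hx s hs)
  have := mul_nonneg h0 (hy s hs)
  linarith

/-- Two segments `a a'` and `b b'`, each strictly on the left of the line of the other: the
prolongation of the first beyond `a'` cannot cross the line `b b'` inside `P`. The crossing point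
would be beyond `b` or `b'`, hence hidden from `a` and from one of `b`, `b'`. -/
lemma edge_half (C : Config P G V K σ ρ) {a a' b b' : Plane} (ha : a ∈ G) (ha' : a' ∈ G)
    (hb : b ∈ G) (hb' : b' ∈ G) (haa : a' ≠ a) (hbb : b' ≠ b) (hab : a ≠ b) (hab' : a ≠ b')
    (g1 : 0 < cr b b' a) (g2 : 0 < cr b b' a') (h1 : 0 < cr a a' b) (h2 : 0 < cr a a' b')
    {t : ℝ} (ht : 1 ≤ t) (hy : pt a a' t ∈ P) (hg : cr b b' (pt a a' t) ≤ 0) : False := by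
  rw [cr_pt] at hg
  have hd : 0 < cr b b' a - cr b b' a' := by
    by_contra hn
    push Not at hn
    nlinarith
  -- parameter at which the ray from `a` meets the line `b b'`
  set α := cr b b' a / (cr b b' a - cr b b' a') with hα
  have hαe : α * (cr b b' a - cr b b' a') = cr b b' a := div_mul_cancel₀ _ hd.ne'
  have hα1 : 1 < α := by rw [hα, one_lt_div hd]; linarith
  have hαt : α ≤ t := by rw [hα, div_le_iff₀ hd]; linarith
  have ht0 : t ≠ 0 := by linarith
  have hX : pt a a' α ∈ P := by
    have := C.pt_mem_P (C.GP a ha) hy (τ := α / t) (by positivity)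
      ((div_le_one (by linarith)).2 hαt)
    rwa [pt_pt, div_mul_cancel₀ _ ht0] at this
  have hXg : cr b b' (pt a a' α) = 0 := by rw [cr_pt]; linarith
  have hXh : cr a a' (pt a a' α) = 0 := by rw [cr_pt, cr_self_left, cr_self_right]; ring
  have hid := hidden_pt ha' haa hα1
  obtain ⟨β, hβ⟩ := exists_pt_of_cr_eq_zero hbb.symm hXg
  rw [hβ] at hX hid
  rw [hβ, cr_pt] at hXh
  rcases lt_or_ge β 0 with hβ0 | hβ0
  · refine hab' (C.light _ hX a ha b' hb' hid ?_)
    rw [pt_flip]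
    exact hidden_pt hb hbb.symm (by linarith)
  · rcases lt_or_ge 1 β with hβ1 | hβ1
    · exact hab (C.light _ hX a ha b hb hid (hidden_pt hb' hbb hβ1))
    · have := mul_nonneg hβ0 h2.le
      have := mul_nonneg (by linarith : 0 ≤ 1 - β) h1.le
      nlinarith

/-- The prolongations of two non-adjacent hull edges do not leave `P` through the same edge of `P`.
Otherwise one of them has crossed the line of the other before leaving `P`, which `edge_half`
excludes. -/
lemma edge_pair (C : Config P G V K σ ρ) {a b s : Plane} (ha : a ∈ K) (hb : b ∈ K)
    (hab : a ≠ b) (h1 : ρ a ≠ b) (h2 : ρ b ≠ a) {t t' : ℝ} (ht : 1 ≤ t) (ht' : 1 ≤ t')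
    (fa : cr s (σ s) (ρ a) < cr s (σ s) a) (fb : cr s (σ s) (ρ b) < cr s (σ s) b)
    (ya : cr s (σ s) (pt a (ρ a) t) = 0) (yb : cr s (σ s) (pt b (ρ b) t') = 0)
    (hya : pt a (ρ a) t ∈ P) (hyb : pt b (ρ b) t' ∈ P) (hs : s ∈ V) : False := by
  have ha' := C.cK.mem a ha
  have hb' := C.cK.mem b hb
  have hρ : ρ a ≠ ρ b := fun h => hab (C.cK.inj ha hb h)
  have p1 := C.cK.pos a ha b hb hab.symm h1.symm
  have p2 := C.cK.pos a ha _ hb' h2 hρ.symm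
  have p3 := C.cK.pos b hb a ha hab h2.symm
  have p4 := C.cK.pos b hb _ ha' h1 hρ
  by_cases q1 : cr b (ρ b) (pt a (ρ a) t) ≤ 0
  · exact C.edge_half (C.KG ha) (C.KG ha') (C.KG hb) (C.KG hb') (C.cK.ne a ha) (C.cK.ne b hb)
      hab h2.symm p3 p4 p1 p2 ht hya q1
  by_cases q2 : cr a (ρ a) (pt b (ρ b) t') ≤ 0
  · exact C.edge_half (C.KG hb) (C.KG hb') (C.KG ha) (C.KG ha') (C.cK.ne b hb) (C.cK.ne a ha)
      hab.symm h1.symm p1 p2 p3 p4 ht' hyb q2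
  push Not at q1 q2
  have za : cr a (ρ a) (pt a (ρ a) t) = 0 := by rw [cr_pt, cr_self_left, cr_self_right]; ring
  have zb : cr b (ρ b) (pt b (ρ b) t') = 0 := by rw [cr_pt, cr_self_left, cr_self_right]; ring
  obtain ⟨x, hx⟩ := exists_pt_of_cr_eq_zero (C.cV.ne s hs).symm ya
  obtain ⟨y, hy⟩ := exists_pt_of_cr_eq_zero (C.cV.ne s hs).symm yb
  rw [hx] at q1 za
  rw [hy] at q2 zb
  -- compare the positions `x`, `y` of the two exit points along the common edge of `P`
  have e : ∀ c d : Plane, cr c d (pt s (σ s) x) - cr c d (pt s (σ s) y)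
      = (x - y) * (cr s (σ s) c - cr s (σ s) d) := by
    intro c d; simp only [cr, pt_apply]; ring
  have e1 := e b (ρ b)
  have e2 := e a (ρ a)
  rw [zb] at e1
  rw [za] at e2
  have l1 : 0 < x - y := by
    by_contra hn
    nlinarith
  nlinarith

/-! ### Interior guards in a triangle of guards -/

/-- A segment of `P` that ends in the interior of `P` can be prolonged inside `P`. -/
lemma extend (C : Config P G V K σ ρ) {z b : Plane} (hz : z ∈ P) (hzb : z ≠ b)
    (hb : ∀ s ∈ V, 0 < cr s (σ s) b) : ∃ t : ℝ, 1 < t ∧ pt z b t ∈ P := by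
  obtain ⟨s, hs, t, ht, -, h0, hy⟩ := C.cV.exit C.V3 hzb ((C.mem_P z).1 hz)
    (fun s hs => (hb s hs).le)
  refine ⟨t, lt_of_le_of_ne ht fun h => ?_, (C.mem_P _).2 hy⟩
  rw [← h, pt_one] at h0
  exact ne_of_gt (hb s hs) h0

/-- Let `b`, `b'` be guards in the triangle of guards `v0 v1 v2`, with `v1` and `v2` strictly on the same
side of the line `b b'`. The rays from `v2` through `b` and from `v1` through `b'` cross beyond `b` and
`b'` inside the triangle, and the crossing point is hidden from `v1` and `v2`. Only the inequalities
that the computation requires are assumed. -/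
lemma tri_core (C : Config P G V K σ ρ) {v0 v1 v2 b b' : Plane} (m0 : v0 ∈ G) (m1 : v1 ∈ G)
    (m2 : v2 ∈ G) (hb : b ∈ G) (hb' : b' ∈ G) (hD : 0 < cr v0 v1 v2)
    (b0 : 0 ≤ cr v1 v2 b) (b1 : 0 ≤ cr v2 v0 b)
    (c0 : 0 ≤ cr v1 v2 b') (c2 : 0 ≤ cr v0 v1 b')
    (l1 : 0 < cr b b' v1) (l2 : 0 < cr b b' v2) : False := by
  set D := cr v0 v1 v2 with hDd
  set β0 := cr v1 v2 b with hβ0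
  set β1 := cr v2 v0 b with hβ1
  set c := cr v0 v1 b with hcd
  have sumD : β0 + β1 + c = D := by simp only [hDd, hβ0, hβ1, hcd, cr]; ring
  have g2 : cr v1 b' v2 ≤ 0 := by
    have : cr v1 b' v2 = - cr v1 v2 b' := by simp only [cr]; ring
    linarith
  have g0 : 0 ≤ cr v1 b' v0 := by rw [← cr_rot]; exact c2
  have gb : cr v1 b' b < 0 := by
    have : cr v1 b' b = - cr b b' v1 := by simp only [cr]; ring
    linarith
  -- barycentric coordinates of `b`, applied to an affine functional `cr p q`
  have bary : ∀ p q : Plane, D * cr p q b = β0 * cr p q v0 + β1 * cr p q v1 + c * cr p q v2 := by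
    intro p q; simp only [hDd, hβ0, hβ1, hcd, cr]; ring
  have eg := bary v1 b'
  rw [cr_self_left] at eg
  have hgD : D * cr v1 b' b < 0 := mul_neg_of_pos_of_neg hD gb
  have g2' : cr v1 b' v2 < 0 := by
    refine lt_of_le_of_ne g2 fun h => ?_
    rw [h] at eg
    have := mul_nonneg b0 g0
    linarith
  have hβ : 0 < β0 + β1 := by
    by_contra hn
    have z0 : β0 = 0 := by linarith
    have z1 : β1 = 0 := by linarith
    have := bary v2 b'
    have e : cr v2 b' b = - cr b b' v2 := by simp only [cr]; ring
    rw [z0, z1, cr_self_left, e] at this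
    have := mul_pos hD l2
    linarith
  have hdiff : (β0 + β1) * (- cr v1 b' v2) ≤ D * (cr v1 b' b - cr v1 b' v2) := by
    have := mul_nonneg b0 g0
    have : c = D - β0 - β1 := by linarith
    rw [this] at eg
    linarith
  have hd : 0 < cr v1 b' b - cr v1 b' v2 := by
    have := mul_pos hβ (by linarith : 0 < - cr v1 b' v2)
    exact (pos_iff_pos_of_mul_pos (this.trans_le hdiff)).1 hD
  -- parameter at which the ray from `v2` through `b` meets the line `v1 b'`
  set α := (- cr v1 b' v2) / (cr v1 b' b - cr v1 b' v2) with hα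
  have hαe : α * (cr v1 b' b - cr v1 b' v2) = - cr v1 b' v2 := div_mul_cancel₀ _ hd.ne'
  have hα1 : 1 < α := by rw [hα, one_lt_div hd]; linarith
  have hαD : α * (β0 + β1) ≤ D := by
    rw [hα, div_mul_eq_mul_div, div_le_iff₀ hd]; linarith
  have hX : pt v2 b α ∈ P := by
    rw [C.mem_P]
    intro s hs
    have i0 := (C.mem_P _).1 (C.GP v0 m0) s hs
    have i1 := (C.mem_P _).1 (C.GP v1 m1) s hs
    have i2 := (C.mem_P _).1 (C.GP v2 m2) s hs
    have e := bary s (σ s)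
    have e' : D * cr s (σ s) (pt v2 b α) = α * (β0 * cr s (σ s) v0 + β1 * cr s (σ s) v1)
        + (D - α * (β0 + β1)) * cr s (σ s) v2 := by
      rw [cr_pt]
      linear_combination α * e + α * cr s (σ s) v2 * sumD
    refine nonneg_of_mul_nonneg_right (a := D) ?_ hD
    rw [e']
    have : 0 ≤ D - α * (β0 + β1) := by linarith
    positivity
  have hXg : cr v1 b' (pt v2 b α) = 0 := by rw [cr_pt]; linarith
  have hne1 : v1 ≠ b' := by
    rintro rfl; rw [cr_self_right] at l1; exact lt_irrefl _ l1
  have hne2 : b ≠ v2 := by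
    rintro rfl; rw [cr_self_left] at l2; exact lt_irrefl _ l2
  have hLX : cr b b' (pt v2 b α) < 0 := by
    rw [cr_pt, cr_self_left]
    have := mul_pos (by linarith : 0 < α - 1) l2
    linarith
  have hid := hidden_pt hb hne2 hα1
  obtain ⟨α', hα'⟩ := exists_pt_of_cr_eq_zero hne1 hXg
  rw [hα'] at hX hid hLX
  rw [cr_pt, cr_self_right] at hLX
  have hα1' : 1 < α' := by
    by_contra hn
    have := mul_nonneg (by linarith : 0 ≤ 1 - α') l1.le
    linarith
  have := C.light _ hX v2 m2 v1 m1 hid (hidden_pt hb' hne1.symm hα1')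
  rw [hDd, this, cr_self_right] at hD
  exact lt_irrefl _ hD

lemma not_collinear_aux (C : Config P G V K σ ρ) {v b b' : Plane} (hv : v ∈ G) (hb : b ∈ G)
    (hb' : b' ∈ G) (hbb : b ≠ b') (ib' : ∀ s ∈ V, 0 < cr s (σ s) b') {τ : ℝ} (hτ : τ < 0)
    (h : v = pt b b' τ) : False := by
  obtain ⟨t, ht, hx⟩ := C.extend (C.GP b hb) hbb ib'
  have h1 : (1 - τ) ≠ 0 := by linarith
  have hvb : v ≠ b' := by
    intro hvb
    rw [hvb] at h
    have := pt_injective hbb (a := τ) (b := 1) (by rw [← h, pt_one])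
    linarith
  refine dark_beyond C.light (u := v) (v := b') (m := b) (τ := -τ / (1 - τ)) (c := (t - τ) / (1 - τ))
    hv hb' hb hvb (div_pos (by linarith) (by linarith))
    ((div_lt_one (by linarith)).2 (by linarith)) ?_ ((one_lt_div (by linarith)).2 (by linarith)) ?_
  · rw [h]
    apply plane_ext <;> simp only [pt_apply] <;> field_simp <;> ring
  · convert hx using 1
    rw [h]
    apply plane_ext <;> simp only [pt_apply] <;> field_simp <;> ring

/-- A hull vertex is not collinear with two guards in the interior of `P`: the line could be prolonged
inside `P` beyond the last of the three guards. -/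
lemma not_collinear (C : Config P G V K σ ρ) {v b b' : Plane} (hv : v ∈ K) (hb : b ∈ G)
    (hb' : b' ∈ G) (hbb : b ≠ b') (hvb : v ≠ b) (hvb' : v ≠ b')
    (ib : ∀ s ∈ V, 0 < cr s (σ s) b) (ib' : ∀ s ∈ V, 0 < cr s (σ s) b') : cr b b' v ≠ 0 := by
  intro h
  obtain ⟨τ, hτ⟩ := exists_pt_of_cr_eq_zero hbb h
  rcases lt_trichotomy τ 0 with h1 | h1 | h1
  · exact C.not_collinear_aux (C.KG hv) hb hb' hbb ib' h1 hτ
  · rw [h1, pt_zero] at hτ; exact hvb hτ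
  · rcases lt_trichotomy τ 1 with h2 | h2 | h2
    · exact hvb (C.ext v hv b hb b' hb' τ h1 h2 hτ).symm
    · rw [h2, pt_one] at hτ; exact hvb' hτ
    · rw [pt_flip] at hτ
      exact C.not_collinear_aux (C.KG hv) hb' hb hbb.symm ib (by linarith) hτ

/-- A triangle of hull vertices contains at most one guard that is interior to `P` and not itself a hull
vertex: of the three corners, two lie on the same side of the line through two such guards, so that
`tri_core` applies. -/
lemma tri (C : Config P G V K σ ρ) {v0 v1 v2 b b' : Plane} (m0 : v0 ∈ K) (m1 : v1 ∈ K)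
    (m2 : v2 ∈ K) (hb : b ∈ G) (hb' : b' ∈ G) (bK : b ∉ K) (bK' : b' ∉ K)
    (hD : 0 < cr v0 v1 v2)
    (ib : ∀ s ∈ V, 0 < cr s (σ s) b) (ib' : ∀ s ∈ V, 0 < cr s (σ s) b')
    (b0 : 0 ≤ cr v1 v2 b) (b1 : 0 ≤ cr v2 v0 b) (b2 : 0 ≤ cr v0 v1 b)
    (c0 : 0 ≤ cr v1 v2 b') (c1 : 0 ≤ cr v2 v0 b') (c2 : 0 ≤ cr v0 v1 b') : b = b' := by
  by_contra hbb
  have nz : ∀ v ∈ K, cr b b' v ≠ 0 := fun v hv => C.not_collinear hv hb hb' hbb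
    (fun h => bK (h ▸ hv)) (fun h => bK' (h ▸ hv)) ib ib'
  have hD1 : 0 < cr v1 v2 v0 := by rw [← cr_rot]; exact hD
  have hD2 : 0 < cr v2 v0 v1 := by rw [← cr_rot]; exact hD1
  have n0 := C.KG m0
  have n1 := C.KG m1
  have n2 := C.KG m2
  have sw : ∀ v, cr b b' v < 0 → 0 < cr b' b v := by
    intro v hv; rw [cr_swap] at hv; linarith
  rcases lt_or_gt_of_ne (nz v0 m0) with h0 | h0 <;> rcases lt_or_gt_of_ne (nz v1 m1) with h1 | h1 <;>
    rcases lt_or_gt_of_ne (nz v2 m2) with h2 | h2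
  · exact C.tri_core n0 n1 n2 hb' hb hD c0 c1 b0 b2 (sw _ h1) (sw _ h2)
  · exact C.tri_core n2 n0 n1 hb' hb hD2 c2 c0 b2 b1 (sw _ h0) (sw _ h1)
  · exact C.tri_core n1 n2 n0 hb' hb hD1 c1 c2 b1 b0 (sw _ h2) (sw _ h0)
  · exact C.tri_core n0 n1 n2 hb hb' hD b0 b1 c0 c2 h1 h2
  · exact C.tri_core n0 n1 n2 hb' hb hD c0 c1 b0 b2 (sw _ h1) (sw _ h2)
  · exact C.tri_core n1 n2 n0 hb hb' hD1 b1 b2 c1 c0 h2 h0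
  · exact C.tri_core n2 n0 n1 hb hb' hD2 b2 b0 c2 c1 h0 h1
  · exact C.tri_core n0 n1 n2 hb hb' hD b0 b1 c0 c2 h1 h2

/-! ### Guards on the boundary of the polygon -/

/-- If a guard lies strictly between two guards `u` and `v` on one edge of `P`, then `v` is an endpoint
of that edge, since nothing of `P` may lie beyond `v`. -/
lemma end_eq (C : Config P G V K σ ρ) {s u v m : Plane} (hs : s ∈ V) (hu : u ∈ G) (hv : v ∈ G)
    (hm : m ∈ G) (huv : u ≠ v) {τ a b : ℝ} (h0 : 0 < τ) (h1 : τ < 1) (hmτ : m = pt u v τ)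
    (hb0 : 0 ≤ b) (hb1 : b ≤ 1) (hua : u = pt s (σ s) a) (hvb : v = pt s (σ s) b) :
    (a < b → v = σ s) ∧ (b < a → v = s) := by
  have hsP : ∀ x ∈ V, x ∈ P := fun x hx => (C.mem_P x).2 fun r hr => C.cV.nonneg_of_mem hr hx
  constructor
  · intro hab
    rcases hb1.lt_or_eq with hb | hb
    · exfalso
      have hba : b - a ≠ 0 := by linarith
      refine dark_beyond C.light hu hv hm huv h0 h1 hmτ (c := (1 - a) / (b - a))
        ((one_lt_div (by linarith)).2 (by linarith)) ?_
      convert hsP _ (C.cV.mem s hs) using 1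
      rw [hua, hvb]
      apply plane_ext <;> simp only [pt_apply] <;> field_simp <;> ring
    · rw [hvb, hb, pt_one]
  · intro hab
    rcases hb0.lt_or_eq with hb | hb
    · exfalso
      have hba : a - b ≠ 0 := by linarith
      refine dark_beyond C.light hu hv hm huv h0 h1 hmτ (c := a / (a - b))
        ((one_lt_div (by linarith)).2 (by linarith)) ?_
      convert hsP _ hs using 1
      rw [hua, hvb]
      apply plane_ext <;> simp only [pt_apply] <;> field_simp <;> ring
    · rw [hvb, ← hb, pt_zero]

lemma hull_subset (C : Config P G V K σ ρ) {x : Plane} (hx : ∀ h ∈ K, 0 ≤ cr h (ρ h) x) :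
    x ∈ P := by
  rw [C.mem_P]
  intro s hs
  exact convexHull_min (fun y hy => (C.mem_P y).1 (C.GP y (C.KG hy)) s hs)
    (cr_convex s (σ s)) (C.cK.mem_hull C.K3 hx)

/-- A guard on an edge `(s, σ s)` of `P` that is not a hull vertex lies strictly between guards placed at
the two endpoints of that edge, and these form an edge of the hull. -/
lemma middle (C : Config P G V K σ ρ) {m s : Plane} (hm : m ∈ G) (hmK : m ∉ K) (hs : s ∈ V)
    (h0 : cr s (σ s) m = 0) : ∃ t ∈ K, ∃ τ : ℝ, 0 < τ ∧ τ < 1 ∧ m = pt t (ρ t) τ ∧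
      ((t = s ∧ ρ t = σ s) ∨ (t = σ s ∧ ρ t = s)) := by
  have nn : ∀ g ∈ G, 0 ≤ cr s (σ s) g := fun g hg => (C.mem_P g).1 (C.GP g hg) s hs
  have hsσ := (C.cV.ne s hs).symm
  obtain ⟨t, ht, htm⟩ : ∃ t ∈ K, cr t (ρ t) m = 0 := by
    by_contra! hn
    obtain ⟨o, ho, hof⟩ : ∃ o ∈ K, cr s (σ s) o ≠ 0 := by
      by_contra! hz
      obtain ⟨o, ho⟩ : K.Nonempty := by rw [← Finset.card_pos]; linarith [C.K3]
      have ho1 := C.cK.mem o ho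
      have ho2 := C.cK.mem _ ho1
      have := C.cK.pos o ho _ ho2 (C.cK.sigma_sigma_ne C.K3 ho) (C.cK.ne _ ho1)
      obtain ⟨x, hx⟩ := exists_pt_of_cr_eq_zero hsσ (hz o ho)
      obtain ⟨y, hy⟩ := exists_pt_of_cr_eq_zero hsσ (hz _ ho1)
      obtain ⟨z, hz⟩ := exists_pt_of_cr_eq_zero hsσ (hz _ ho2)
      have e : cr (pt s (σ s) x) (pt s (σ s) y) (pt s (σ s) z) = 0 := by
        simp only [cr, pt_apply]; ring
      rw [← hx, ← hy, ← hz] at e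
      exact this.ne' e
    have hof' : 0 < cr s (σ s) o := lt_of_le_of_ne (nn o (C.KG ho)) hof.symm
    obtain ⟨t, ht, r, hr, -, hy, hy'⟩ := C.cK.exit C.K3 (p := o) (q := m)
      (by rintro rfl; exact hmK ho) (C.GK o (C.KG ho)) (C.GK m hm)
    have hr1 : r ≠ 1 := by
      rintro rfl; rw [pt_one] at hy; exact hn t ht hy
    have hr' : 1 < r := lt_of_le_of_ne hr hr1.symm
    have := (C.mem_P _).1 (C.hull_subset hy') s hs
    rw [cr_pt, h0] at this
    nlinarith
  obtain ⟨τ, hτ0, hτ1, hmτ⟩ := C.cK.on_edge C.K3 ht (C.GK m hm) htm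
  have ht' := C.cK.mem t ht
  have hτ0' : 0 < τ := lt_of_le_of_ne hτ0 fun h => by
    rw [← h, pt_zero] at hmτ; exact hmK (hmτ ▸ ht)
  have hτ1' : τ < 1 := lt_of_le_of_ne hτ1 fun h => by
    rw [h, pt_one] at hmτ; exact hmK (hmτ ▸ ht')
  refine ⟨t, ht, τ, hτ0', hτ1', hmτ, ?_⟩
  have n1 := nn t (C.KG ht)
  have n2 := nn _ (C.KG ht')
  rw [hmτ, cr_pt] at h0
  have z1 : cr s (σ s) t = 0 := by
    have := mul_nonneg hτ0 n2
    by_contra hz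
    have := mul_pos (by linarith : 0 < 1 - τ) (lt_of_le_of_ne n1 (Ne.symm hz))
    linarith
  have z2 : cr s (σ s) (ρ t) = 0 := by
    rw [z1, mul_zero, zero_add] at h0
    exact (mul_eq_zero.1 h0).resolve_left hτ0'.ne'
  obtain ⟨a, ha0, ha1, ha⟩ := C.cV.on_edge C.V3 hs ((C.mem_P _).1 (C.GP t (C.KG ht))) z1
  obtain ⟨b, hb0, hb1, hb⟩ := C.cV.on_edge C.V3 hs ((C.mem_P _).1 (C.GP _ (C.KG ht'))) z2
  have hne := (C.cK.ne t ht).symm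
  have hab : a ≠ b := by
    rintro rfl; exact hne (ha.trans hb.symm)
  have r1 := C.end_eq hs (C.KG ht) (C.KG ht') hm hne hτ0' hτ1' hmτ hb0 hb1 ha hb
  rw [pt_flip] at hmτ
  have r2 := C.end_eq hs (C.KG ht') (C.KG ht) hm hne.symm (by linarith) (by linarith) hmτ
    ha0 ha1 hb ha
  rcases lt_or_gt_of_ne hab with h | h
  · exact Or.inl ⟨r2.2 h, r1.1 h⟩
  · exact Or.inr ⟨r2.1 h, r1.2 h⟩

/-- Each edge of `P` carries at most one guard that is not a hull vertex: two of them, with the guards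
at the endpoints, would be four collinear guards. -/
lemma middle_unique (C : Config P G V K σ ρ) {m m' s : Plane} (hm : m ∈ G) (hmK : m ∉ K)
    (hm' : m' ∈ G) (hmK' : m' ∉ K) (hs : s ∈ V)
    (h0 : cr s (σ s) m = 0) (h0' : cr s (σ s) m' = 0) : m = m' := by
  have key : ∀ m, m ∈ G → m ∉ K → cr s (σ s) m = 0 → s ∈ G ∧ σ s ∈ G ∧
      ∃ κ : ℝ, 0 < κ ∧ κ < 1 ∧ m = pt s (σ s) κ := by
    intro m hm hmK h0
    obtain ⟨t, ht, τ, h1, h2, h3, ⟨e1, e2⟩ | ⟨e1, e2⟩⟩ := C.middle hm hmK hs h0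
    · exact ⟨e1 ▸ C.KG ht, e2 ▸ C.KG (C.cK.mem t ht), τ, h1, h2, by rw [h3, e1, ← e1, e2, e1]⟩
    · refine ⟨e2 ▸ C.KG (C.cK.mem t ht), e1 ▸ C.KG ht, 1 - τ, by linarith, by linarith, ?_⟩
      rw [h3, e2, e1, pt_flip]
  obtain ⟨hsG, hσG, κ, k0, k1, hκ⟩ := key m hm hmK h0
  obtain ⟨-, -, κ', k0', k1', hκ'⟩ := key m' hm' hmK' h0'
  have hsσ := (C.cV.ne s hs).symm
  rcases lt_trichotomy κ κ' with h | h | h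
  · exact (dark_between C.GP C.light hsG hσG hm hm' k0 h k1' hsσ hκ hκ').elim
  · rw [hκ, hκ', h]
  · exact (dark_between C.GP C.light hsG hσG hm' hm k0' h k1 hsσ hκ' hκ).elim

/-- If the two ends of an edge of `P` carry the ends of a hull edge `(t, ρ t)`, then only the prolongation
of the hull edge preceding `t` can leave `P` through that edge. -/
lemma exit_middle (C : Config P G V K σ ρ) {h t s : Plane} (hh : h ∈ K) (ht : t ∈ K) (hs : s ∈ V)
    (hts : (t = s ∧ ρ t = σ s) ∨ (t = σ s ∧ ρ t = s)) {r : ℝ}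
    (f : cr s (σ s) (ρ h) < cr s (σ s) h) (hy0 : cr s (σ s) (pt h (ρ h) r) = 0)
    (hy : pt h (ρ h) r ∈ P) : ρ h = t := by
  by_contra hne
  have hρh := C.cK.mem h hh
  have hρt := C.cK.mem t ht
  have n := (C.mem_P _).1 (C.GP _ (C.KG hρh)) s hs
  have hF : 0 < cr s (σ s) h := by linarith
  have z : cr s (σ s) t = 0 ∧ cr s (σ s) (ρ t) = 0 := by
    rcases hts with ⟨e1, e2⟩ | ⟨e1, e2⟩ <;> rw [e2, e1] <;>
      simp only [cr_self_left, cr_self_right, and_self]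
  have ht1 : t ≠ h := by rintro rfl; linarith [z.1]
  have ht2 : ρ t ≠ h := by intro e; rw [e] at z; linarith [z.2]
  have p1 := C.cK.pos h hh t ht ht1 (Ne.symm hne)
  have p2 := C.cK.pos h hh _ hρt ht2 fun e => ht1 (C.cK.inj ht hh e)
  obtain ⟨c, c0, c1, hc⟩ := C.cV.on_edge C.V3 hs ((C.mem_P _).1 hy) hy0
  have e0 : cr h (ρ h) (pt h (ρ h) r) = 0 := by rw [cr_pt, cr_self_left, cr_self_right]; ring
  rw [hc, cr_pt] at e0
  rcases hts with ⟨e1, e2⟩ | ⟨e1, e2⟩ <;> rw [e2] at p2 <;> rw [e1] at p1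
  · have := mul_nonneg (by linarith : 0 ≤ 1 - c) p1.le
    have := mul_nonneg c0 p2.le
    nlinarith
  · have := mul_nonneg (by linarith : 0 ≤ 1 - c) p2.le
    have := mul_nonneg c0 p1.le
    nlinarith

/-! ### Counting -/

/-- The hull vertices together with the other guards on the boundary of `P` number at most twice the
edges of `P`. Every hull edge, prolonged in its direction, leaves `P` through some edge `ε` of `P`,
and every other boundary guard lies on some edge `μ` of `P`; each edge of `P` is counted at most
twice. -/
lemma card_boundary (C : Config P G V K σ ρ) (M : Finset Plane)
    (hM : ∀ m ∈ M, m ∈ G ∧ m ∉ K ∧ ∃ s ∈ V, cr s (σ s) m = 0) :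
    K.card + M.card ≤ 2 * V.card := by
  classical
  have hM' : ∀ m ∈ M, ∃ s ∈ V, cr s (σ s) m = 0 := fun m hm => (hM m hm).2.2
  choose! μ hμV hμ using hM'
  have hμinj : Set.InjOn μ M := by
    intro m hm m' hm' e
    refine C.middle_unique (hM m hm).1 (hM m hm).2.1 (hM m' hm').1 (hM m' hm').2.1
      (hμV m hm) (hμ m hm) ?_
    rw [e]; exact hμ m' hm'
  rcases lt_or_ge K.card 4 with hK4 | hK4
  -- a triangular hull is handled separately, as its edges are pairwise adjacent
  · have := Finset.card_le_card_of_injOn μ hμV hμinj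
    have := C.V3
    omega
  have hex : ∀ h ∈ K, ∃ s ∈ V, ∃ t : ℝ, 1 ≤ t ∧ cr s (σ s) (ρ h) < cr s (σ s) h ∧
      cr s (σ s) (pt h (ρ h) t) = 0 ∧ pt h (ρ h) t ∈ P := by
    intro h hh
    obtain ⟨s, hs, t, ht, h1, h2, h3⟩ := C.cV.exit C.V3 (C.cK.ne h hh).symm
      ((C.mem_P _).1 (C.GP h (C.KG hh))) ((C.mem_P _).1 (C.GP _ (C.KG (C.cK.mem h hh))))
    exact ⟨s, hs, t, ht, h1, h2, (C.mem_P _).2 h3⟩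
  choose! ε hεV r hr1 hrf hr0 hrP using hex
  rw [Finset.card_eq_sum_card_fiberwise hεV, Finset.card_eq_sum_card_fiberwise hμV,
    ← Finset.sum_add_distrib, mul_comm, ← smul_eq_mul]
  refine Finset.sum_le_card_nsmul _ _ _ fun s hs => ?_
  -- three prolongations leaving through `s` would belong to pairwise adjacent hull edges
  have two : (K.filter (ε · = s)).card ≤ 2 := by
    by_contra! hlt
    obtain ⟨a, b, c, ha, hb, hc, hab, hac, hbc⟩ := Finset.two_lt_card_iff.1 hlt
    rw [Finset.mem_filter] at ha hb hc
    have adj : ∀ x y, x ∈ K ∧ ε x = s → y ∈ K ∧ ε y = s → x ≠ y → ρ x = y ∨ ρ y = x := by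
      intro x y hx hy hxy
      by_contra! hn
      have f1 := hrf x hx.1
      have f2 := hrf y hy.1
      have z1 := hr0 x hx.1
      have z2 := hr0 y hy.1
      rw [hx.2] at f1 z1
      rw [hy.2] at f2 z2
      exact C.edge_pair hx.1 hy.1 hxy hn.1 hn.2 (hr1 x hx.1) (hr1 y hy.1) f1 f2 z1 z2
        (hrP x hx.1) (hrP y hy.1) hs
    have inj : ∀ {x y}, x ∈ K ∧ ε x = s → y ∈ K ∧ ε y = s → x ≠ y → ρ x ≠ ρ y :=
      fun hx hy hxy e => hxy (C.cK.inj hx.1 hy.1 e)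
    have i1 := inj ha hb hab
    have i2 := inj ha hc hac
    have i3 := inj hb hc hbc
    rcases adj a b ha hb hab with h1 | h1
    · have h2 : ρ b = c := (adj b c hb hc hbc).resolve_right fun h => i2 (h1.trans h.symm)
      have h3 : ρ c = a := (adj a c ha hc hac).resolve_left fun h => hbc (h1.symm.trans h)
      exact C.cK.no_three_cycle hK4 ha.1 (by rw [h1, h2, h3])
    · have h2 : ρ a = c := (adj a c ha hc hac).resolve_right fun h => i3 (h1.trans h.symm)
      have h3 : ρ c = b := (adj b c hb hc hbc).resolve_left fun h => hac (h1.symm.trans h)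
      exact C.cK.no_three_cycle hK4 ha.1 (by rw [h2, h3, h1])
  have one : (M.filter (μ · = s)).card ≤ 1 := by
    refine Finset.card_le_one.2 fun m hm m' hm' => ?_
    rw [Finset.mem_filter] at hm hm'
    exact hμinj hm.1 hm'.1 (hm.2.trans hm'.2.symm)
  rcases (M.filter (μ · = s)).eq_empty_or_nonempty with he | ⟨m, hm⟩
  · rw [he, Finset.card_empty]; omega
  · rw [Finset.mem_filter] at hm
    have hm0 := hμ m hm.1
    rw [hm.2] at hm0
    obtain ⟨t, ht, -, -, -, -, hts⟩ := C.middle (hM m hm.1).1 (hM m hm.1).2.1 hs hm0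
    have : (K.filter (ε · = s)).card ≤ 1 := by
      refine Finset.card_le_one.2 fun a ha b hb => ?_
      rw [Finset.mem_filter] at ha hb
      have key : ∀ x, x ∈ K ∧ ε x = s → ρ x = t := by
        intro x hx
        have f1 := hrf x hx.1
        have z1 := hr0 x hx.1
        rw [hx.2] at f1 z1
        exact C.exit_middle hx.1 ht hs hts f1 z1 (hrP x hx.1)
      exact C.cK.inj ha.1 hb.1 ((key a ha).trans (key b hb).symm)
    omega

/-- The guards interior to `P` that are not hull vertices number at most `K.card - 2`. In the fan
triangulation of the hull from a vertex `o`, each of the triangles `o, t, ρ t` contains at most one of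
them. -/
lemma card_interior (C : Config P G V K σ ρ) (N : Finset Plane)
    (hN : ∀ b ∈ N, b ∈ G ∧ b ∉ K ∧ ∀ s ∈ V, 0 < cr s (σ s) b) :
    N.card + 2 ≤ K.card := by
  classical
  obtain ⟨o, ho⟩ : K.Nonempty := by rw [← Finset.card_pos]; linarith [C.K3]
  obtain ⟨q, hq, hqo⟩ : ∃ q ∈ K, ρ q = o := by
    have := Finset.surjOn_of_injOn_of_card_le ρ C.cK.mem C.cK.inj le_rfl ho
    simpa using this
  have hqne : q ≠ o := by
    rintro rfl; exact C.cK.ne q hq hqo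
  have hex : ∀ b ∈ N, ∃ t ∈ K, t ≠ o ∧ ρ t ≠ o ∧ 0 < cr o t (ρ t) ∧ 0 ≤ cr t (ρ t) b ∧
      0 ≤ cr (ρ t) o b ∧ 0 ≤ cr o t b := by
    intro b hb
    obtain ⟨hbG, hbK, hbi⟩ := hN b hb
    -- the triangle of `b` is spanned by the edge through which the ray from `o` to `b` leaves the hull
    obtain ⟨t, ht, τ, hτ, hlt, hy0, hy⟩ := C.cK.exit C.K3 (p := o) (q := b)
      (by rintro rfl; exact hbK ho) (C.GK o (C.KG ho)) (C.GK b hbG)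
    have n1 := C.GK b hbG t ht
    have hpos : 0 < cr t (ρ t) o := by linarith
    have hD : 0 < cr o t (ρ t) := by rw [cr_rot]; exact hpos
    obtain ⟨c, c0, c1, hc⟩ := C.cK.on_edge C.K3 ht hy hy0
    have hτ0 : 0 < τ := by linarith
    have hbe : b = pt o (pt t (ρ t) c) (1 / τ) := by
      rw [← hc, pt_pt, one_div_mul_cancel hτ0.ne', pt_one]
    have hi : 0 ≤ 1 / τ := by positivity
    refine ⟨t, ht, ?_, ?_, hD, n1, ?_, ?_⟩
    · rintro rfl; rw [cr_self_left] at hpos; exact lt_irrefl _ hpos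
    · intro e; rw [e, cr_self_right] at hpos; exact lt_irrefl _ hpos
    · rw [hbe, cr_pt, cr_pt, cr_self_left, cr_self_right, ← cr_rot t (ρ t) o]
      have := mul_nonneg (by linarith : 0 ≤ 1 - c) hpos.le
      have := mul_nonneg hi this
      linarith
    · rw [hbe, cr_pt, cr_pt, cr_self_left, cr_self_right]
      have := mul_nonneg c0 hD.le
      have := mul_nonneg hi this
      linarith
  choose! f fK fo fρ fD f0 f1 f2 using hex
  have hcard : N.card ≤ ((K.erase o).erase q).card := by
    refine Finset.card_le_card_of_injOn f (fun b hb => ?_) ?_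
    · rw [Finset.mem_coe, Finset.mem_erase, Finset.mem_erase]
      exact ⟨fun e => fρ b hb (e ▸ hqo), fo b hb, fK b hb⟩
    · intro b hb b' hb' e
      obtain ⟨hbG, hbK, hbi⟩ := hN b hb
      obtain ⟨hbG', hbK', hbi'⟩ := hN b' hb'
      have g0 := f0 b' hb'
      have g1 := f1 b' hb'
      have g2 := f2 b' hb'
      rw [← e] at g0 g1 g2
      exact C.tri ho (fK b hb) (C.cK.mem _ (fK b hb)) hbG hbG' hbK hbK' (fD b hb) hbi hbi'
        (f0 b hb) (f1 b hb) (f2 b hb) g0 g1 g2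
  rw [Finset.card_erase_of_mem (Finset.mem_erase.2 ⟨hqne, hq⟩), Finset.card_erase_of_mem ho]
    at hcard
  have := C.K3
  omega

lemma card_le (C : Config P G V K σ ρ) : G.card ≤ 4 * V.card - 2 := by
  classical
  have h1 := C.card_boundary ((G \ K).filter fun m => ∃ s ∈ V, cr s (σ s) m = 0) (by
    intro m hm
    rw [Finset.mem_filter, Finset.mem_sdiff] at hm
    exact ⟨hm.1.1, hm.1.2, hm.2⟩)
  have h2 := C.card_interior ((G \ K).filter fun m => ¬ ∃ s ∈ V, cr s (σ s) m = 0) (by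
    intro m hm
    rw [Finset.mem_filter, Finset.mem_sdiff] at hm
    refine ⟨hm.1.1, hm.1.2, fun s hs => ?_⟩
    exact lt_of_le_of_ne ((C.mem_P m).1 (C.GP m hm.1.1) s hs) fun h => hm.2 ⟨s, hs, h.symm⟩)
  have h3 := Finset.card_filter_add_card_filter_not (s := G \ K)
    (fun m => ∃ s ∈ V, cr s (σ s) m = 0)
  have h4 := Finset.card_sdiff_add_card_eq_card C.KG
  omega

end Config

/-! ### The theorem -/

lemma notMem_hull_of_extreme {A : Set Plane} (hA : Convex ℝ A) {T : Set Plane} (hT : T ⊆ A)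
    {s : Plane} (hs : s ∈ Set.extremePoints ℝ A) : s ∉ convexHull ℝ (T \ {s}) := fun h =>
  (hA.mem_extremePoints_iff_mem_sdiff_convexHull_sdiff.1 hs).2
    (convexHull_mono (sdiff_subset_sdiff_left hT) h)

/-- Any placement of more than 4n - 2 guards in a convex n-gon creates
a point hidden from two distinct guards (a 2-dark point). -/
theorem statement6 (n : ℕ) (V : Finset Plane) (P : Set Plane)
    (hP : IsConvexPolygon n V P) (G : Finset Plane) (hG : ↑G ⊆ P)
    (hcard : G.card > 4 * n - 2) :
    ∃ x ∈ P, ∃ g ∈ G, ∃ g' ∈ G, g ≠ g' ∧ Hidden G g x ∧ Hidden G g' x := by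
  classical
  obtain ⟨hn, hVn, hPV, hext⟩ := hP
  by_contra hdark
  have light : ∀ x ∈ P, ∀ g ∈ G, ∀ g' ∈ G, Hidden G g x → Hidden G g' x → g = g' := by
    intro x hx g hg g' hg' h h'
    by_contra hne
    exact hdark ⟨x, hx, g, hg, g', hg', hne, h, h'⟩
  have V3 : 3 ≤ V.card := by omega
  have hPc : Convex ℝ P := hPV ▸ convex_convexHull ℝ _
  have hVP : (V : Set Plane) ⊆ P := hPV ▸ subset_convexHull ℝ _
  obtain ⟨σ, hσ⟩ := exists_cyc V (fun s hs => notMem_hull_of_extreme hPc hVP (hext s hs))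
    (by omega)
  set Q := convexHull ℝ (G : Set Plane) with hQ
  have hQc : Convex ℝ Q := convex_convexHull ℝ _
  have hGQ : (G : Set Plane) ⊆ Q := subset_convexHull ℝ _
  set K := G.filter (· ∈ Set.extremePoints ℝ Q) with hK
  have hKG : K ⊆ G := Finset.filter_subset _ _
  have hKe : (K : Set Plane) = Set.extremePoints ℝ Q := by
    ext x
    simp only [hK, Finset.coe_filter, mem_ofPred_eq]
    exact ⟨fun h => h.2, fun h => ⟨extremePoints_convexHull_subset h, h⟩⟩
  have hKQ : convexHull ℝ (K : Set Plane) = Q := by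
    have h1 := closure_convexHull_extremePoints
      (G.finite_toSet.isCompact_convexHull (𝕜 := ℝ)) hQc
    rw [← hQ, ← hKe] at h1
    rwa [(K.finite_toSet.isCompact_convexHull (𝕜 := ℝ)).isClosed.closure_eq] at h1
  -- with at most two hull vertices the guards would be collinear
  have K3 : 3 ≤ K.card := by
    by_contra! hlt
    rw [← hKQ] at hGQ
    rcases (by omega : K.card = 0 ∨ K.card = 1 ∨ K.card = 2) with h2 | h2 | h2
    · rw [Finset.card_eq_zero.1 h2, Finset.coe_empty, convexHull_empty, subset_empty_iff,
        Finset.coe_eq_empty] at hGQ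
      rw [hGQ, Finset.card_empty] at hcard
      omega
    · obtain ⟨u, hu⟩ := Finset.card_eq_one.1 h2
      rw [hu, Finset.coe_singleton, convexHull_singleton, ← Finset.coe_singleton,
        Finset.coe_subset] at hGQ
      have := Finset.card_le_card hGQ
      rw [Finset.card_singleton] at this
      omega
    · obtain ⟨u, v, huv, hu⟩ := Finset.card_eq_two.1 h2
      have huG : u ∈ G := hKG (by simp [hu])
      have hvG : v ∈ G := hKG (by simp [hu])
      rw [hu, Finset.coe_pair, convexHull_pair] at hGQ
      have hline : ∀ p ∈ (G.erase u).erase v, p ∈ G ∧ ∃ a : ℝ, 0 < a ∧ a < 1 ∧ p = pt u v a := by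
        intro p hp
        rw [Finset.mem_erase, Finset.mem_erase] at hp
        obtain ⟨a, b, ha, hb, hab, hp'⟩ := hGQ hp.2.2
        have e : p = pt u v b := by
          rw [← hp']
          obtain rfl : a = 1 - b := by linarith
          apply plane_ext <;> simp <;> ring
        refine ⟨hp.2.2, b, lt_of_le_of_ne hb fun h => hp.2.1 ?_,
          lt_of_le_of_ne (by linarith) fun h => hp.1 ?_, e⟩
        · rw [e, ← h, pt_zero]
        · rw [e, h, pt_one]
      have hc : 1 < ((G.erase u).erase v).card := by
        rw [Finset.card_erase_of_mem (Finset.mem_erase.2 ⟨huv.symm, hvG⟩),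
          Finset.card_erase_of_mem huG]
        omega
      obtain ⟨p, hp, q, hq, hpq⟩ := Finset.one_lt_card.1 hc
      obtain ⟨hpG, a, a0, a1, ha⟩ := hline p hp
      obtain ⟨hqG, b, b0, b1, hb⟩ := hline q hq
      have GP : ∀ g ∈ G, g ∈ P := fun g hg => hG hg
      rcases lt_trichotomy a b with h | h | h
      · exact dark_between GP light huG hvG hpG hqG a0 h b1 huv ha hb
      · exact hpq (by rw [ha, hb, h])
      · exact dark_between GP light huG hvG hqG hpG b0 h a1 huv hb ha
  obtain ⟨ρ, hρ⟩ := exists_cyc K (fun s hs => notMem_hull_of_extreme hQc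
    ((Finset.coe_subset.2 hKG).trans hGQ) (Finset.mem_filter.1 hs).2) (by omega)
  have C : Config P G V K σ ρ :=
    { cV := hσ
      V3 := V3
      mem_P := fun x => ⟨fun hx s hs => hσ.nonneg_of_mem_hull hs (hPV ▸ hx),
        fun hx => hPV ▸ hσ.mem_hull V3 hx⟩
      GP := fun g hg => hG hg
      KG := hKG
      cK := hρ
      K3 := K3
      GK := fun g hg h hh => hρ.nonneg_of_mem_hull hh (hKQ ▸ hGQ hg)
      ext := fun v hv b hb b' hb' τ h0 h1 e =>
        (mem_extremePoints.1 (Finset.mem_filter.1 hv).2).2 b (hGQ hb) b' (hGQ hb')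
          (e ▸ pt_mem_openSegment h0 h1) |>.1
      light := light }
  have := C.card_le
  omega
end
end
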